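/- arXiv:2504.06842 — 2 statements merged into one kernel-verified Lean document; each statement's English description precedes it below -/
import Mathlib

section
/- Landscape analysis theorem. Let m ≥ 100 be an integer, let x = {x_1,…,x_s} ⊂ 𝕋 satisfy Δ(x) ≥ 8π/m, let U be an orthonormal basis of the Fourier subspace range Φ(m,x), and let Ũ ∈ ℂ^{m×s} have orthonormal columns with ϑ := ‖UU^* − ŨŨ^*‖_2 ≤ 0.01. Then the landscape function q̃ := q_Ũ has at least s critical points x̃_1,…,x̃_s ∈ 𝕋 such that for each j ∈ {1,…,s}: (a) |x̃_j − x_j| ≤ 7ϑ/m; (b) 0.0271·m² ≤ q̃''(t) ≤ 0.269·m² for all t with |t − x̃_j| ≤ π/(3m); (c) x̃_j is a local minimum of q̃ and q̃(x̃_j) ≤ q̃(x_j) ≤ ϑ² ≤ 10⁻⁴; (d) q̃'(t) ≥ +0.0306·m for all t ∈ [x̃_j + π/(3m), x̃_j + 4π/(3m)] and q̃'(t) ≤ −0.0306·m for all t ∈ [x̃_j − 4π/(3m), x̃_j − π/(3m)]; (e) q̃(t) ≥ 0.529 for every t ∈ 𝕋 lying outside the union over j of the intervals [x̃_j − 4π/(3m),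 x̃_j + 4π/(3m)]; (f) q̃'(t) ≤ +0.292·m²·|t − x̃_j| for all t ∈ [x̃_j + π/(3m), x̃_j + 4π/(3m)] and q̃'(t) ≥ −0.292·m²·|t − x̃_j| for all t ∈ [x̃_j − 4π/(3m), x̃_j − π/(3m)]. -/
open scoped Real BigOperators Matrix
open Matrix

noncomputable section

/-- Distance on the torus `ℝ/2πℤ` between (representatives of) two points. -/
def torusDist (u v : ℝ) : ℝ := ⨅ n : ℤ, |u - v + 2 * Real.pi * n|

/-- The steering vector `φ(t) = m^{-1/2} (e^{ikt})_{k ∈ I(m)}`,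
where `I(m) = {-(m-1)/2, …, (m-1)/2}` (realized by `k ↦ k - (m-1)/2` for `k : Fin m`). -/
def steer (m : ℕ) (t : ℝ) : Fin m → ℂ :=
  fun k => (Real.sqrt m : ℂ)⁻¹ *
    Complex.exp (Complex.I * (((((k : ℕ) : ℝ) - ((m : ℝ) - 1) / 2) * t : ℝ) : ℂ))

/-- The nonharmonic Fourier matrix `Φ(n, x) = (e^{i k x_j})_{k ∈ I(n), j}`. -/
def fourierMatrix (n : ℕ) {s : ℕ} (x : Fin s → ℝ) : Matrix (Fin n) (Fin s) ℂ :=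
  fun k j => Complex.exp (Complex.I * (((((k : ℕ) : ℝ) - ((n : ℝ) - 1) / 2) * x j : ℝ) : ℂ))

/-- The landscape function `q_W(t) = 1 - ‖W^* φ(t)‖₂²`. -/
def landscape {m s : ℕ} (W : Matrix (Fin m) (Fin s) ℂ) (t : ℝ) : ℝ :=
  1 - ∑ j, ‖(Wᴴ *ᵥ steer m t) j‖ ^ 2

/-- Spectral norm (ℓ² → ℓ² operator norm) of a complex matrix. -/
def specNorm {d e : ℕ} (M : Matrix (Fin d) (Fin e) ℂ) : ℝ :=
  ‖LinearMap.toContinuousLinearMap (Matrix.toEuclideanLin M)‖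

/-- Column span (range) of a matrix, as a subspace of Euclidean space. -/
def colSpan {d e : ℕ} (M : Matrix (Fin d) (Fin e) ℂ) :
    Submodule ℂ (EuclideanSpace ℂ (Fin d)) :=
  LinearMap.range (Matrix.toEuclideanLin M)

/-- `U` is a matrix whose columns form an orthonormal basis of the subspace `V`. -/
def IsONBasisOf {d e : ℕ} (U : Matrix (Fin d) (Fin e) ℂ)
    (V : Submodule ℂ (EuclideanSpace ℂ (Fin d))) : Prop :=
  Uᴴ * U = 1 ∧ colSpan U = V



/-! ### Trigonometric kernels -/

def kap (m : ℕ) (k : Fin m) : ℝ := ((k : ℕ) : ℝ) - ((m : ℝ) - 1) / 2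

def K0 (m : ℕ) (t : ℝ) : ℝ := (∑ k : Fin m, Real.cos (kap m k * t)) / m
def K1 (m : ℕ) (t : ℝ) : ℝ := (∑ k : Fin m, -(kap m k * Real.sin (kap m k * t))) / m
def K2 (m : ℕ) (t : ℝ) : ℝ := (∑ k : Fin m, -(kap m k ^ 2 * Real.cos (kap m k * t))) / m

lemma hasDerivAt_K0 (m : ℕ) (t : ℝ) : HasDerivAt (K0 m) (K1 m t) t := by
  unfold K0 K1
  apply HasDerivAt.div_const
  apply HasDerivAt.fun_sum
  intro k _
  have h := ((hasDerivAt_id t).const_mul (kap m k)).cos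
  simp only [id, mul_one] at h
  exact h.congr_deriv (by ring)

lemma hasDerivAt_K1 (m : ℕ) (t : ℝ) : HasDerivAt (K1 m) (K2 m t) t := by
  unfold K1 K2
  apply HasDerivAt.div_const
  apply HasDerivAt.fun_sum
  intro k _
  have h := (((hasDerivAt_id t).const_mul (kap m k)).sin.const_mul (kap m k)).neg
  simp only [id, mul_one] at h
  exact h.congr_deriv (by ring)

lemma kap_rev (m : ℕ) (k : Fin m) : kap m (Fin.rev k) = - kap m k := by
  unfold kap
  rw [Fin.val_rev]
  have : (k : ℕ) + 1 ≤ m := k.2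
  push_cast [Nat.cast_sub this]
  ring

lemma sum_odd_zero (m : ℕ) (f : ℝ → ℝ) (hf : ∀ y, f (-y) = - f y) :
    ∑ k : Fin m, f (kap m k) = 0 := by
  have h := Equiv.sum_comp (Fin.revPerm (n := m)) (fun k => f (kap m k))
  simp only [Fin.revPerm_apply, kap_rev, hf, Finset.sum_neg_distrib] at h
  linarith

/-- Dirichlet kernel. -/
def Dir (L : ℕ) (t : ℝ) : ℝ := ∑ k : Fin L, Real.cos (kap L k * t)

lemma Dir_mul_sin (L : ℕ) (t : ℝ) : Dir L t * Real.sin (t / 2) = Real.sin (L * t / 2) := by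
  have h : ∀ k : ℕ, Real.cos (((k : ℝ) - ((L : ℝ) - 1) / 2) * t) * Real.sin (t / 2)
      = Real.sin (((k + 1 : ℕ) - (L : ℝ) / 2) * t) / 2 - Real.sin (((k : ℕ) - (L : ℝ) / 2) * t) / 2 := by
    intro k
    have e1 : (((k + 1 : ℕ) : ℝ) - (L : ℝ) / 2) * t = ((k : ℝ) - ((L : ℝ) - 1) / 2) * t + t / 2 := by
      push_cast; ring
    have e2 : (((k : ℕ) : ℝ) - (L : ℝ) / 2) * t = ((k : ℝ) - ((L : ℝ) - 1) / 2) * t - t / 2 := by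
      ring
    rw [e1, e2, Real.sin_add, Real.sin_sub]; ring
  unfold Dir kap
  rw [Finset.sum_mul, Fin.sum_univ_eq_sum_range
    (fun k : ℕ => Real.cos (((k : ℝ) - ((L : ℝ) - 1) / 2) * t) * Real.sin (t / 2)) L]
  rw [Finset.sum_congr rfl (fun k _ => h k),
    Finset.sum_range_sub (fun k : ℕ => Real.sin (((k : ℕ) - (L : ℝ) / 2) * t) / 2)]
  have e3 : ((L : ℝ) - (L : ℝ) / 2) * t = L * t / 2 := by ring
  have e4 : (((0 : ℕ) : ℝ) - (L : ℝ) / 2) * t = - (L * t / 2) := by push_cast; ring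
  rw [e3, e4, Real.sin_neg]; ring

lemma Dir_eq (m : ℕ) (hm : 0 < m) (t : ℝ) : Dir m t = m * K0 m t := by
  have : (m : ℝ) ≠ 0 := by positivity
  unfold Dir K0; rw [mul_div_cancel₀ _ this]

/-- squared cosecant of the half angle -/
def csc2 (t : ℝ) : ℝ := 1 / Real.sin (t / 2) ^ 2

lemma one_le_csc2 (t : ℝ) (h : Real.sin (t / 2) ≠ 0) : 1 ≤ csc2 t := by
  unfold csc2
  rw [le_div_iff₀ (by positivity)]
  have := Real.sin_sq_le_one (t / 2)
  linarith

lemma Dir_sq_le (L : ℕ) (t : ℝ) (h : Real.sin (t / 2) ≠ 0) : Dir L t ^ 2 ≤ csc2 t := by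
  unfold csc2
  rw [le_div_iff₀ (by positivity), ← mul_pow, Dir_mul_sin]
  exact Real.sin_sq_le_one _

lemma K0_sq_le (m : ℕ) (hm : 0 < m) (t : ℝ) (h : Real.sin (t / 2) ≠ 0) :
    (m : ℝ) ^ 2 * K0 m t ^ 2 ≤ csc2 t := by
  rw [← mul_pow, ← Dir_eq m hm]; exact Dir_sq_le m t h

lemma K0_id (m : ℕ) (hm : 0 < m) (t : ℝ) :
    m * K0 m t * Real.sin (t / 2) = Real.sin (m * t / 2) := by
  rw [← Dir_eq m hm, Dir_mul_sin]

lemma K1_id (m : ℕ) (hm : 0 < m) (t : ℝ) :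
    m * K1 m t * Real.sin (t / 2) + m * K0 m t * (Real.cos (t / 2) / 2)
      = m / 2 * Real.cos (m * t / 2) := by
  have h1 : HasDerivAt (fun t => m * K0 m t * Real.sin (t / 2))
      (m * K1 m t * Real.sin (t / 2) + m * K0 m t * (Real.cos (t / 2) * (1 / 2))) t := by
    apply HasDerivAt.mul ((hasDerivAt_K0 m t).const_mul (m : ℝ))
    exact ((hasDerivAt_id t).div_const 2).sin
  have h2 : HasDerivAt (fun t => Real.sin (m * t / 2)) (Real.cos (m * t / 2) * (m * 1 / 2)) t := by
    exact (((hasDerivAt_id t).const_mul (m : ℝ)).div_const 2).sin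
  have h3 : (fun t => m * K0 m t * Real.sin (t / 2)) = fun t => Real.sin (m * t / 2) :=
    funext (K0_id m hm)
  rw [h3] at h1
  have := h1.unique h2
  linarith

lemma K2_id (m : ℕ) (hm : 0 < m) (t : ℝ) :
    K2 m t * Real.sin (t / 2) + K1 m t * Real.cos (t / 2)
      = - ((m : ℝ) ^ 2 - 1) / 4 * K0 m t * Real.sin (t / 2) := by
  have hm' : (m : ℝ) ≠ 0 := by positivity
  have h1 : HasDerivAt (fun t => m * K1 m t * Real.sin (t / 2) + m * K0 m t * (Real.cos (t / 2) / 2))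
      ((m * K2 m t * Real.sin (t / 2) + m * K1 m t * (Real.cos (t / 2) * (1 / 2))) +
       (m * K1 m t * (Real.cos (t / 2) / 2) + m * K0 m t * (-Real.sin (t / 2) * (1 / 2) / 2))) t := by
    apply HasDerivAt.add
    · apply HasDerivAt.mul ((hasDerivAt_K1 m t).const_mul (m : ℝ))
      exact ((hasDerivAt_id t).div_const 2).sin
    · apply HasDerivAt.mul ((hasDerivAt_K0 m t).const_mul (m : ℝ))
      exact ((hasDerivAt_id t).div_const 2).cos.div_const 2
  have h2 : HasDerivAt (fun t => (m : ℝ) / 2 * Real.cos (m * t / 2))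
      ((m : ℝ) / 2 * (- Real.sin (m * t / 2) * (m * 1 / 2))) t := by
    exact (((hasDerivAt_id t).const_mul (m : ℝ)).div_const 2).cos.const_mul _
  have h3 := funext (K1_id m hm)
  rw [h3] at h1
  have h4 := h1.unique h2
  rw [← K0_id m hm] at h4
  have : (m : ℝ) * (K2 m t * Real.sin (t / 2) + K1 m t * Real.cos (t / 2))
      = m * (- ((m : ℝ) ^ 2 - 1) / 4 * K0 m t * Real.sin (t / 2)) := by linear_combination h4
  exact mul_left_cancel₀ hm' this

lemma K1_sq_le (m : ℕ) (hm : 0 < m) (t : ℝ) (h : Real.sin (t / 2) ≠ 0) :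
    4 * (m : ℝ) ^ 2 * K1 m t ^ 2 ≤ csc2 t * (m ^ 2 + (csc2 t - 1)) := by
  have h0 := K0_id m hm t
  have h1 := K1_id m hm t
  set S := Real.sin (t / 2) with hS
  set C := Real.cos (t / 2) with hC
  set s := Real.sin (m * t / 2) with hs
  set c := Real.cos (m * t / 2) with hc
  have e1 : S ^ 2 + C ^ 2 = 1 := Real.sin_sq_add_cos_sq _
  have e2 : s ^ 2 + c ^ 2 = 1 := Real.sin_sq_add_cos_sq _
  have e3 : csc2 t = 1 / S ^ 2 := rfl
  have hS2 : 0 < S ^ 2 := by positivity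
  have key : 2 * m * K1 m t * S ^ 2 = m * c * S - s * C := by
    linear_combination 2 * S * h1 - C * h0
  have e4 : csc2 t * (m ^ 2 + (csc2 t - 1)) = (m ^ 2 * S ^ 2 + C ^ 2) / (S ^ 2) ^ 2 := by
    rw [e3]; field_simp; linear_combination (-1 : ℝ) * e1
  rw [e4, le_div_iff₀ (by positivity)]
  have : 4 * (m : ℝ) ^ 2 * K1 m t ^ 2 * (S ^ 2) ^ 2 = (m * c * S - s * C) ^ 2 := by
    rw [← key]; ring
  rw [this]
  have : (m * c * S - s * C) ^ 2 + (m * S * s + c * C) ^ 2 = m ^ 2 * S ^ 2 + C ^ 2 := by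
    linear_combination (m ^ 2 * S ^ 2 + C ^ 2) * e2
  nlinarith [sq_nonneg (m * S * s + c * C)]

lemma K2_abs_le (m : ℕ) (hm : 0 < m) (t g : ℝ) (hg : 0 ≤ g) (h : Real.sin (t / 2) ≠ 0)
    (hc : csc2 t - 1 ≤ g ^ 2) :
    |K2 m t| ≤ (m : ℝ) ^ 2 / 4 * |K0 m t| + g * |K1 m t| := by
  have h2 := K2_id m hm t
  have e1 : Real.sin (t / 2) ^ 2 + Real.cos (t / 2) ^ 2 = 1 := Real.sin_sq_add_cos_sq _
  have e3 : csc2 t = 1 / Real.sin (t / 2) ^ 2 := rfl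
  set S := Real.sin (t / 2) with hS
  set C := Real.cos (t / 2) with hC
  have e5 : (C / S) ^ 2 = csc2 t - 1 := by
    rw [e3]; field_simp; linear_combination e1
  have e6 : |C / S| ≤ g := abs_le_of_sq_le_sq (by rw [e5]; exact hc) hg
  have key : K2 m t = - (((m : ℝ) ^ 2 - 1) / 4 * K0 m t) - C / S * K1 m t := by
    field_simp; linear_combination 4 * h2
  have hm1 : (1 : ℝ) ≤ m := by exact_mod_cast hm
  rw [key]
  refine (abs_sub _ _).trans ?_
  rw [abs_neg, abs_mul, abs_mul, abs_of_nonneg (a := ((m : ℝ) ^ 2 - 1) / 4) (by nlinarith)]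
  gcongr
  linarith

lemma csc2_le (y : ℝ) (hy : |y| ≤ π) (hy0 : y ≠ 0) :
    Real.sin (y / 2) ≠ 0 ∧ csc2 y ≤ 4 / y ^ 2 + 1 := by
  have main : ∀ y : ℝ, 0 < y → y ≤ π → Real.sin (y / 2) ≠ 0 ∧ csc2 y ≤ 4 / y ^ 2 + 1 := by
    intro y h0 h1
    have hs : 0 < Real.sin (y / 2) := Real.sin_pos_of_pos_of_lt_pi (by linarith) (by linarith [Real.pi_pos])
    refine ⟨hs.ne', ?_⟩
    have hc : 0 ≤ Real.cos (y / 2) := Real.cos_nonneg_of_neg_pi_div_two_le_of_le (by linarith) (by linarith)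
    have hx : y / 2 * Real.cos (y / 2) ≤ Real.sin (y / 2) := by
      rcases hc.eq_or_lt with h | h
      · rw [← h]; linarith
      · rcases h1.eq_or_lt with h2 | h2
        · rw [h2, Real.cos_pi_div_two] at h; linarith
        · have := Real.le_tan (x := y / 2) (by linarith) (by linarith)
          rw [Real.tan_eq_sin_div_cos, le_div_iff₀ h] at this
          exact this
    have e1 : Real.sin (y / 2) ^ 2 + Real.cos (y / 2) ^ 2 = 1 := Real.sin_sq_add_cos_sq _
    unfold csc2
    have : 4 / y ^ 2 + 1 = ((y / 2) ^ 2 + 1) / (y / 2) ^ 2 := by field_simp; ring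
    rw [this, div_le_div_iff₀ (by positivity) (by positivity)]
    have h3 : (y / 2 * Real.cos (y / 2)) ^ 2 ≤ Real.sin (y / 2) ^ 2 := by
      gcongr
    nlinarith
  rcases lt_or_gt_of_ne hy0 with h | h
  · have h2 := main (-y) (by linarith) (by rw [abs_of_neg h] at hy; exact hy)
    unfold csc2 at h2 ⊢
    rw [show -y / 2 = -(y / 2) by ring, Real.sin_neg] at h2
    simpa using h2
  · exact main y h (by rwa [abs_of_pos h] at hy)

lemma sin_sq_per (y : ℝ) (n : ℤ) : Real.sin ((y + 2 * π * n) / 2) ^ 2 = Real.sin (y / 2) ^ 2 := by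
  rw [show (y + 2 * π * n) / 2 = y / 2 + n * π by ring, Real.sin_add_int_mul_pi, mul_pow]
  have : ((-1 : ℝ) ^ n) ^ 2 = 1 := by
    rcases Int.even_or_odd n with h | h
    · rw [h.neg_one_zpow]; norm_num
    · rw [h.neg_one_zpow]; norm_num
  rw [this, one_mul]

lemma csc2_per (y : ℝ) (n : ℤ) : csc2 (y + 2 * π * n) = csc2 y := by
  unfold csc2; rw [sin_sq_per]

lemma sin_ne_per (y : ℝ) (n : ℤ) (h : Real.sin (y / 2) ≠ 0) : Real.sin ((y + 2 * π * n) / 2) ≠ 0 := by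
  intro h2
  have := sin_sq_per y n
  rw [h2] at this
  apply h
  have : Real.sin (y / 2) ^ 2 = 0 := by rw [← this]; norm_num
  exact pow_eq_zero_iff (two_ne_zero) |>.1 this


/-! ### Moments and near-diagonal bounds -/

lemma nonneg_of_deriv_nonneg (f f' : ℝ → ℝ) (h0 : f 0 = 0) (hf : ∀ x, HasDerivAt f (f' x) x)
    (hf' : ∀ x, 0 ≤ x → 0 ≤ f' x) : ∀ x, 0 ≤ x → 0 ≤ f x := by
  intro x hx
  have hmono : MonotoneOn f (Set.Ici 0) := by
    apply monotoneOn_of_hasDerivWithinAt_nonneg (convex_Ici 0) (f' := f')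
    · exact fun y _ => (hf y).continuousAt.continuousWithinAt
    · exact fun y _ => (hf y).hasDerivWithinAt
    · intro y hy
      rw [interior_Ici] at hy
      exact hf' y (le_of_lt hy)
  have := hmono (Set.mem_Ici.2 le_rfl) (Set.mem_Ici.2 hx) hx
  rwa [h0] at this

lemma cos_le_four {x : ℝ} (hx : 0 ≤ x) : 0 ≤ 1 - x ^ 2 / 2 + x ^ 4 / 24 - Real.cos x := by
  refine nonneg_of_deriv_nonneg (fun x => 1 - x ^ 2 / 2 + x ^ 4 / 24 - Real.cos x)
    (fun x => Real.sin x - (x - x ^ 3 / 6)) (by simp) ?_ ?_ x hx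
  · intro y
    have h := ((((hasDerivAt_pow 2 y).div_const 2).const_sub 1).add
      ((hasDerivAt_pow 4 y).div_const 24)).sub (Real.hasDerivAt_cos y)
    refine h.congr_deriv ?_
    push_cast; ring
  · intro y hy
    linarith [Real.sin_ge_sub_cube hy]

lemma sin_le_five {x : ℝ} (hx : 0 ≤ x) : 0 ≤ x - x ^ 3 / 6 + x ^ 5 / 120 - Real.sin x := by
  refine nonneg_of_deriv_nonneg (fun x => x - x ^ 3 / 6 + x ^ 5 / 120 - Real.sin x)
    (fun x => 1 - x ^ 2 / 2 + x ^ 4 / 24 - Real.cos x) (by simp) ?_ (fun y hy => cos_le_four hy) x hx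
  · intro y
    have h := (((hasDerivAt_id y).sub ((hasDerivAt_pow 3 y).div_const 6)).add
      ((hasDerivAt_pow 5 y).div_const 120)).sub (Real.hasDerivAt_sin y)
    refine h.congr_deriv ?_
    push_cast; ring

lemma cos_ge_six' {x : ℝ} (hx : 0 ≤ x) :
    0 ≤ Real.cos x - (1 - x ^ 2 / 2 + x ^ 4 / 24 - x ^ 6 / 720) := by
  refine nonneg_of_deriv_nonneg (fun x => Real.cos x - (1 - x ^ 2 / 2 + x ^ 4 / 24 - x ^ 6 / 720))
    (fun x => x - x ^ 3 / 6 + x ^ 5 / 120 - Real.sin x) (by simp) ?_ (fun y hy => sin_le_five hy) x hx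
  · intro y
    have h := (Real.hasDerivAt_cos y).sub (((((hasDerivAt_pow 2 y).div_const 2).const_sub 1).add
      ((hasDerivAt_pow 4 y).div_const 24)).sub ((hasDerivAt_pow 6 y).div_const 720))
    refine h.congr_deriv ?_
    push_cast; ring

lemma cos_ge_six (x : ℝ) : 1 - x ^ 2 / 2 + x ^ 4 / 24 - x ^ 6 / 720 ≤ Real.cos x := by
  have h := cos_ge_six' (abs_nonneg x)
  rw [Real.cos_abs] at h
  have e2 : |x| ^ 2 = x ^ 2 := sq_abs x
  have e4 : |x| ^ 4 = x ^ 4 := by rw [show |x| ^ 4 = (|x| ^ 2) ^ 2 by ring, e2]; ring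
  have e6 : |x| ^ 6 = x ^ 6 := by rw [show |x| ^ 6 = (|x| ^ 2) ^ 3 by ring, e2]; ring
  rw [e2, e4, e6] at h
  linarith

lemma mul_sin_ge (x : ℝ) : x ^ 2 - x ^ 4 / 6 ≤ x * Real.sin x := by
  rcases le_total 0 x with h | h
  · nlinarith [Real.sin_ge_sub_cube h]
  · have := Real.sin_ge_sub_cube (x := -x) (by linarith)
    rw [Real.sin_neg] at this
    nlinarith

lemma mul_sin_le (x : ℝ) : |x * Real.sin x| ≤ x ^ 2 := by
  rw [abs_mul, ← sq_abs x, sq]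
  exact mul_le_mul_of_nonneg_left Real.abs_sin_le_abs (abs_nonneg x)

lemma mom2 (m : ℕ) : ∑ k : Fin m, kap m k ^ 2 = m * ((m : ℝ) ^ 2 - 1) / 12 := by
  have h : ∀ (c : ℝ) (n : ℕ), ∑ k ∈ Finset.range n, ((k : ℝ) - c) ^ 2
      = n * (n - 1) * (2 * n - 1) / 6 - c * (n * (n - 1)) + n * c ^ 2 := by
    intro c n
    induction n with
    | zero => simp
    | succ n ih => rw [Finset.sum_range_succ, ih]; push_cast; ring
  unfold kap
  rw [Fin.sum_univ_eq_sum_range (fun k : ℕ => ((k : ℝ) - ((m : ℝ) - 1) / 2) ^ 2) m, h]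
  ring

lemma mom4 (m : ℕ) : ∑ k : Fin m, kap m k ^ 4
    = m * ((m : ℝ) ^ 2 - 1) * (3 * (m : ℝ) ^ 2 - 7) / 240 := by
  have h : ∀ (c : ℝ) (n : ℕ), ∑ k ∈ Finset.range n, ((k : ℝ) - c) ^ 4
      = n * (n - 1) * (2 * n - 1) * (3 * n ^ 2 - 3 * n - 1) / 30 - 4 * c * (n * (n - 1) / 2) ^ 2
        + 6 * c ^ 2 * (n * (n - 1) * (2 * n - 1) / 6) - 4 * c ^ 3 * (n * (n - 1) / 2) + n * c ^ 4 := by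
    intro c n
    induction n with
    | zero => simp
    | succ n ih => rw [Finset.sum_range_succ, ih]; push_cast; ring
  unfold kap
  rw [Fin.sum_univ_eq_sum_range (fun k : ℕ => ((k : ℝ) - ((m : ℝ) - 1) / 2) ^ 4) m, h]
  ring

lemma mom6 (m : ℕ) : ∑ k : Fin m, kap m k ^ 6
    = m * ((m : ℝ) ^ 2 - 1) * (3 * (m : ℝ) ^ 4 - 18 * (m : ℝ) ^ 2 + 31) / 1344 := by
  have h : ∀ (c : ℝ) (n : ℕ), ∑ k ∈ Finset.range n, ((k : ℝ) - c) ^ 6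
      = n * (n - 1) * (2 * n - 1) * (3 * (n - 1) ^ 4 + 6 * (n - 1) ^ 3 - 3 * (n - 1) + 1) / 42
        - 6 * c * ((n - 1) ^ 2 * n ^ 2 * (2 * (n - 1) ^ 2 + 2 * (n - 1) - 1) / 12)
        + 15 * c ^ 2 * (n * (n - 1) * (2 * n - 1) * (3 * n ^ 2 - 3 * n - 1) / 30)
        - 20 * c ^ 3 * (n * (n - 1) / 2) ^ 2
        + 15 * c ^ 4 * (n * (n - 1) * (2 * n - 1) / 6) - 6 * c ^ 5 * (n * (n - 1) / 2) + n * c ^ 6 := by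
    intro c n
    induction n with
    | zero => simp
    | succ n ih => rw [Finset.sum_range_succ, ih]; push_cast; ring
  unfold kap
  rw [Fin.sum_univ_eq_sum_range (fun k : ℕ => ((k : ℝ) - ((m : ℝ) - 1) / 2) ^ 6) m, h]
  ring

lemma avg2_le (m : ℕ) (hm : 100 ≤ m) : (∑ k : Fin m, kap m k ^ 2) / m ≤ (m : ℝ) ^ 2 / 12 := by
  have hM : (100 : ℝ) ≤ m := by exact_mod_cast hm
  rw [mom2, div_le_iff₀ (by linarith)]; nlinarith

lemma avg2_ge (m : ℕ) (hm : 100 ≤ m) : (m : ℝ) ^ 2 * 0.9999 / 12 ≤ (∑ k : Fin m, kap m k ^ 2) / m := by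
  have hM : (100 : ℝ) ≤ m := by exact_mod_cast hm
  rw [mom2, le_div_iff₀ (by linarith)]
  have : (10000 : ℝ) ≤ (m : ℝ) ^ 2 := by nlinarith
  nlinarith

lemma avg4_le (m : ℕ) (hm : 100 ≤ m) : (∑ k : Fin m, kap m k ^ 4) / m ≤ (m : ℝ) ^ 4 / 80 := by
  have hM : (100 : ℝ) ≤ m := by exact_mod_cast hm
  rw [mom4, div_le_iff₀ (by linarith)]
  have h1 : ((m : ℝ) ^ 2 - 1) * (3 * (m : ℝ) ^ 2 - 7) / 240 ≤ (m : ℝ) ^ 4 / 80 := by nlinarith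
  nlinarith

lemma avg4_ge (m : ℕ) (hm : 100 ≤ m) : (m : ℝ) ^ 4 * 0.9996 / 80 ≤ (∑ k : Fin m, kap m k ^ 4) / m := by
  have hM : (100 : ℝ) ≤ m := by exact_mod_cast hm
  rw [mom4, le_div_iff₀ (by linarith)]
  have h2 : (10000 : ℝ) ≤ (m : ℝ) ^ 2 := by nlinarith
  have h1 : (m : ℝ) ^ 4 * 0.9996 / 80 ≤ ((m : ℝ) ^ 2 - 1) * (3 * (m : ℝ) ^ 2 - 7) / 240 := by nlinarith
  nlinarith

lemma avg6_le (m : ℕ) (hm : 100 ≤ m) : (∑ k : Fin m, kap m k ^ 6) / m ≤ (m : ℝ) ^ 6 / 448 := by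
  have hM : (100 : ℝ) ≤ m := by exact_mod_cast hm
  rw [mom6, div_le_iff₀ (by linarith)]
  have h2 : (10000 : ℝ) ≤ (m : ℝ) ^ 2 := by nlinarith
  have h1 : ((m : ℝ) ^ 2 - 1) * (3 * (m : ℝ) ^ 4 - 18 * (m : ℝ) ^ 2 + 31) / 1344 ≤ (m : ℝ) ^ 6 / 448 := by
    have : (m : ℝ) ^ 4 = ((m : ℝ) ^ 2) ^ 2 := by ring
    have : (m : ℝ) ^ 6 = ((m : ℝ) ^ 2) ^ 3 := by ring
    nlinarith
  nlinarith

lemma K0_ge (m : ℕ) (hm : 100 ≤ m) (t : ℝ) : 1 - (m * t) ^ 2 / 24 ≤ K0 m t := by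
  have hM : (100 : ℝ) ≤ m := by exact_mod_cast hm
  have h1 : ∑ k : Fin m, (1 - t ^ 2 / 2 * kap m k ^ 2) ≤ ∑ k : Fin m, Real.cos (kap m k * t) := by
    apply Finset.sum_le_sum
    intro k _
    have := Real.one_sub_sq_div_two_le_cos (x := kap m k * t)
    nlinarith
  rw [Finset.sum_sub_distrib, ← Finset.mul_sum] at h1
  simp only [Finset.sum_const, Finset.card_univ, Fintype.card_fin, nsmul_eq_mul, mul_one] at h1
  have h2 := avg2_le m hm
  have h3 : ((m : ℝ) - t ^ 2 / 2 * ∑ k : Fin m, kap m k ^ 2) / m ≤ K0 m t := by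
    unfold K0; gcongr
  rw [sub_div, div_self (by linarith), mul_div_assoc] at h3
  nlinarith [mul_le_mul_of_nonneg_left h2 (show 0 ≤ t ^ 2 / 2 by positivity)]

lemma K0_ge6 (m : ℕ) (hm : 100 ≤ m) (t : ℝ) :
    1 - (m * t) ^ 2 / 24 + 0.9996 * (m * t) ^ 4 / 1920 - (m * t) ^ 6 / 322560 ≤ K0 m t := by
  have hM : (100 : ℝ) ≤ m := by exact_mod_cast hm
  have h1 : ∑ k : Fin m, (1 - t ^ 2 / 2 * kap m k ^ 2 + t ^ 4 / 24 * kap m k ^ 4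
      - t ^ 6 / 720 * kap m k ^ 6) ≤ ∑ k : Fin m, Real.cos (kap m k * t) := by
    apply Finset.sum_le_sum
    intro k _
    have := cos_ge_six (kap m k * t)
    calc _ = 1 - (kap m k * t) ^ 2 / 2 + (kap m k * t) ^ 4 / 24 - (kap m k * t) ^ 6 / 720 := by ring
      _ ≤ _ := this
  rw [Finset.sum_sub_distrib, Finset.sum_add_distrib, Finset.sum_sub_distrib, ← Finset.mul_sum,
    ← Finset.mul_sum, ← Finset.mul_sum] at h1
  simp only [Finset.sum_const, Finset.card_univ, Fintype.card_fin, nsmul_eq_mul, mul_one] at h1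
  have h2 := avg2_le m hm
  have h4 := avg4_ge m hm
  have h6 := avg6_le m hm
  have h3 : ((m : ℝ) - t ^ 2 / 2 * (∑ k : Fin m, kap m k ^ 2) + t ^ 4 / 24 * (∑ k : Fin m, kap m k ^ 4)
     - t ^ 6 / 720 * ∑ k : Fin m, kap m k ^ 6) / m ≤ K0 m t := by
    unfold K0; gcongr
  rw [sub_div, add_div, sub_div, div_self (by linarith), mul_div_assoc, mul_div_assoc, mul_div_assoc] at h3
  have a := mul_le_mul_of_nonneg_left h2 (show 0 ≤ t ^ 2 / 2 by positivity)
  have b := mul_le_mul_of_nonneg_left h4 (show 0 ≤ t ^ 4 / 24 by positivity)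
  have c := mul_le_mul_of_nonneg_left h6 (show 0 ≤ t ^ 6 / 720 by positivity)
  calc _ = 1 - t ^ 2 / 2 * ((m : ℝ) ^ 2 / 12) + t ^ 4 / 24 * ((m : ℝ) ^ 4 * 0.9996 / 80)
        - t ^ 6 / 720 * ((m : ℝ) ^ 6 / 448) := by ring
    _ ≤ _ := by linarith

lemma K0_abs_le (m : ℕ) (hm : 100 ≤ m) (t : ℝ) : |K0 m t| ≤ 1 := by
  have hM : (100 : ℝ) ≤ m := by exact_mod_cast hm
  unfold K0
  rw [abs_div, abs_of_nonneg (a := (m : ℝ)) (by linarith), div_le_one (by linarith)]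
  refine (Finset.abs_sum_le_sum_abs _ _).trans ?_
  refine (Finset.sum_le_sum (fun k _ => Real.abs_cos_le_one _)).trans ?_
  simp

lemma K1_ge (m : ℕ) (hm : 100 ≤ m) (t : ℝ) (ht : 0 ≤ t) :
    m * (0.9999 * (m * t) / 12 - (m * t) ^ 3 / 480) ≤ - K1 m t := by
  have hM : (100 : ℝ) ≤ m := by exact_mod_cast hm
  rcases ht.eq_or_lt with h0 | h0
  · subst h0; simp [K1]
  have h1 : ∑ k : Fin m, (t * kap m k ^ 2 - t ^ 3 / 6 * kap m k ^ 4)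
      ≤ ∑ k : Fin m, kap m k * Real.sin (kap m k * t) := by
    apply Finset.sum_le_sum
    intro k _
    have := mul_sin_ge (kap m k * t)
    have : t * (t * kap m k ^ 2 - t ^ 3 / 6 * kap m k ^ 4) ≤ t * (kap m k * Real.sin (kap m k * t)) := by
      calc _ = (kap m k * t) ^ 2 - (kap m k * t) ^ 4 / 6 := by ring
        _ ≤ _ := this
        _ = _ := by ring
    exact le_of_mul_le_mul_left this h0
  rw [Finset.sum_sub_distrib, ← Finset.mul_sum, ← Finset.mul_sum] at h1
  have h2 := avg2_ge m hm
  have h4 := avg4_le m hm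
  have h3 : (t * (∑ k : Fin m, kap m k ^ 2) - t ^ 3 / 6 * ∑ k : Fin m, kap m k ^ 4) / m ≤ - K1 m t := by
    unfold K1; rw [Finset.sum_neg_distrib, neg_div, neg_neg]; gcongr
  rw [sub_div, mul_div_assoc, mul_div_assoc] at h3
  have a := mul_le_mul_of_nonneg_left h2 ht
  have b := mul_le_mul_of_nonneg_left h4 (show 0 ≤ t ^ 3 / 6 by positivity)
  calc _ = t * ((m : ℝ) ^ 2 * 0.9999 / 12) - t ^ 3 / 6 * ((m : ℝ) ^ 4 / 80) := by ring
    _ ≤ _ := by linarith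

lemma K1_abs_le (m : ℕ) (hm : 100 ≤ m) (t : ℝ) : |K1 m t| ≤ (m : ℝ) ^ 2 * |t| / 12 := by
  have hM : (100 : ℝ) ≤ m := by exact_mod_cast hm
  unfold K1
  rw [abs_div, abs_of_nonneg (a := (m : ℝ)) (by linarith)]
  have h1 : |∑ k : Fin m, -(kap m k * Real.sin (kap m k * t))| ≤ |t| * ∑ k : Fin m, kap m k ^ 2 := by
    refine (Finset.abs_sum_le_sum_abs _ _).trans ?_
    rw [Finset.mul_sum]
    apply Finset.sum_le_sum
    intro k _
    rw [abs_neg, abs_mul]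
    have := Real.abs_sin_le_abs (x := kap m k * t)
    rw [abs_mul] at this
    calc _ ≤ |kap m k| * (|kap m k| * |t|) := by gcongr
      _ = |t| * |kap m k| ^ 2 := by ring
      _ = _ := by rw [sq_abs]
  calc _ ≤ (|t| * ∑ k : Fin m, kap m k ^ 2) / m := by gcongr
    _ = |t| * ((∑ k : Fin m, kap m k ^ 2) / m) := by ring
    _ ≤ |t| * ((m : ℝ) ^ 2 / 12) := mul_le_mul_of_nonneg_left (avg2_le m hm) (abs_nonneg t)
    _ = _ := by ring

lemma K2_ge (m : ℕ) (hm : 100 ≤ m) (t : ℝ) :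
    (m : ℝ) ^ 2 * (0.9999 / 12 - (m * t) ^ 2 / 160) ≤ - K2 m t := by
  have hM : (100 : ℝ) ≤ m := by exact_mod_cast hm
  have h1 : ∑ k : Fin m, (kap m k ^ 2 - t ^ 2 / 2 * kap m k ^ 4)
      ≤ ∑ k : Fin m, kap m k ^ 2 * Real.cos (kap m k * t) := by
    apply Finset.sum_le_sum
    intro k _
    have := Real.one_sub_sq_div_two_le_cos (x := kap m k * t)
    nlinarith [mul_le_mul_of_nonneg_left this (sq_nonneg (kap m k))]
  rw [Finset.sum_sub_distrib, ← Finset.mul_sum] at h1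
  have h2 := avg2_ge m hm
  have h4 := avg4_le m hm
  have h3 : ((∑ k : Fin m, kap m k ^ 2) - t ^ 2 / 2 * ∑ k : Fin m, kap m k ^ 4) / m ≤ - K2 m t := by
    unfold K2; rw [Finset.sum_neg_distrib, neg_div, neg_neg]; gcongr
  rw [sub_div, mul_div_assoc] at h3
  have b := mul_le_mul_of_nonneg_left h4 (show 0 ≤ t ^ 2 / 2 by positivity)
  calc _ = ((m : ℝ) ^ 2 * 0.9999 / 12) - t ^ 2 / 2 * ((m : ℝ) ^ 4 / 80) := by ring
    _ ≤ _ := by linarith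

lemma K2_abs_le' (m : ℕ) (hm : 100 ≤ m) (t : ℝ) : |K2 m t| ≤ (m : ℝ) ^ 2 / 12 := by
  have hM : (100 : ℝ) ≤ m := by exact_mod_cast hm
  unfold K2
  rw [abs_div, abs_of_nonneg (a := (m : ℝ)) (by linarith)]
  refine le_trans ?_ (avg2_le m hm)
  gcongr
  refine (Finset.abs_sum_le_sum_abs _ _).trans ?_
  apply Finset.sum_le_sum
  intro k _
  rw [abs_neg, abs_mul, abs_of_nonneg (sq_nonneg _)]
  exact mul_le_of_le_one_right (sq_nonneg _) (Real.abs_cos_le_one _)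

lemma K0_neg (m : ℕ) (t : ℝ) : K0 m (-t) = K0 m t := by
  unfold K0; simp
lemma K1_neg (m : ℕ) (t : ℝ) : K1 m (-t) = - K1 m t := by
  unfold K1; simp [neg_div]

lemma near_b (m : ℕ) (hm : 100 ≤ m) (t : ℝ) (ht : |m * t| ≤ 1.12) :
    0.125 * (m : ℝ) ^ 2 ≤ -(2 * K0 m t * K2 m t) - 2 * K1 m t ^ 2 := by
  have hM : (100 : ℝ) ≤ m := by exact_mod_cast hm
  have hu : (m * t) ^ 2 ≤ 1.2544 := by
    rw [← sq_abs]; nlinarith [abs_nonneg (m * t)]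
  have h0 := K0_ge m hm t
  have h1 := K1_abs_le m hm t
  have h2 := K2_ge m hm t
  have h1' : K1 m t ^ 2 ≤ (m : ℝ) ^ 2 * 0.00872 := by
    have e : (m : ℝ) ^ 2 * |t| / 12 = m * |m * t| / 12 := by
      rw [abs_mul, abs_of_nonneg (a := (m : ℝ)) (by linarith)]; ring
    rw [e] at h1
    have : |K1 m t| ≤ m * 0.09334 := by nlinarith
    rw [← sq_abs]; nlinarith [abs_nonneg (K1 m t)]
  have h0' : 0.9477 ≤ K0 m t := by nlinarith
  have h2' : (m : ℝ) ^ 2 * 0.07548 ≤ - K2 m t := by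
    refine le_trans ?_ h2
    gcongr
    nlinarith
  have : 0.9477 * ((m : ℝ) ^ 2 * 0.07548) ≤ K0 m t * - K2 m t := by gcongr
  nlinarith

lemma near_up (m : ℕ) (hm : 100 ≤ m) (t : ℝ) :
    -(2 * K0 m t * K2 m t) - 2 * K1 m t ^ 2 ≤ (m : ℝ) ^ 2 / 6 := by
  have h : |K0 m t * K2 m t| ≤ 1 * ((m : ℝ) ^ 2 / 12) := by
    rw [abs_mul]; gcongr
    · exact K0_abs_le m hm t
    · exact K2_abs_le' m hm t
  have := (abs_le.1 h).1
  nlinarith [sq_nonneg (K1 m t)]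

lemma near_f (m : ℕ) (hm : 100 ≤ m) (t : ℝ) : |2 * K0 m t * K1 m t| ≤ (m : ℝ) ^ 2 * |t| / 6 := by
  have h : |K0 m t * K1 m t| ≤ 1 * ((m : ℝ) ^ 2 * |t| / 12) := by
    rw [abs_mul]; gcongr
    · exact K0_abs_le m hm t
    · exact K1_abs_le m hm t
  rw [mul_assoc, abs_mul, abs_two]; linarith

lemma near_d1 (m : ℕ) (hm : 100 ≤ m) (t : ℝ) (h1 : 0.977 ≤ m * t) (h2 : m * t ≤ 2) :
    0.132 * (m : ℝ) ≤ -(2 * K0 m t * K1 m t) := by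
  have hM : (100 : ℝ) ≤ m := by exact_mod_cast hm
  have ht : 0 ≤ t := by
    by_contra hc; push Not at hc
    nlinarith
  have k0 := K0_ge m hm t
  have k1 := K1_ge m hm t ht
  set u := m * t
  have a : 0.8333 ≤ K0 m t := by nlinarith
  have b : m * 0.0794 ≤ - K1 m t := by
    refine le_trans ?_ k1
    gcongr
    nlinarith [mul_nonneg (sub_nonneg.2 h1) (sub_nonneg.2 h2), mul_nonneg (mul_nonneg (sub_nonneg.2 h1) (sub_nonneg.2 h2)) (by linarith : 0 ≤ u)]
  have : 0.8333 * ((m : ℝ) * 0.0794) ≤ K0 m t * - K1 m t := by gcongr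
  nlinarith

lemma near_d2 (m : ℕ) (hm : 100 ≤ m) (t : ℝ) (h1 : 2 ≤ m * t) (h2 : m * t ≤ 4.26) :
    0.153 * (m : ℝ) ≤ -(2 * K0 m t * K1 m t) := by
  have hM : (100 : ℝ) ≤ m := by exact_mod_cast hm
  have ht : 0 ≤ t := by
    by_contra hc; push Not at hc
    nlinarith
  have k0 := K0_ge6 m hm t
  have k1 := K1_ge m hm t ht
  set u := m * t
  have hu4 : u ^ 4 = (u ^ 2) ^ 2 := by ring
  have hu6 : u ^ 6 = (u ^ 2) ^ 3 := by ring
  rw [hu4, hu6] at k0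
  rcases le_total u 3.6 with h3 | h3
  · have hw : u ^ 2 ≤ 12.96 := by nlinarith
    have hw0 : 4 ≤ u ^ 2 := by nlinarith
    have a : 0.53 ≤ K0 m t := by
      refine le_trans ?_ k0
      generalize u ^ 2 = w at *
      nlinarith [mul_nonneg (sub_nonneg.2 hw) (sub_nonneg.2 hw0), mul_nonneg (mul_nonneg (sub_nonneg.2 hw) (sub_nonneg.2 hw0)) (sub_nonneg.2 hw0), mul_nonneg (mul_nonneg (sub_nonneg.2 hw) (sub_nonneg.2 hw)) (sub_nonneg.2 hw0)]
    have b : m * 0.1499 ≤ - K1 m t := by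
      refine le_trans ?_ k1
      gcongr
      nlinarith [mul_nonneg (sub_nonneg.2 h1) (sub_nonneg.2 h3), mul_nonneg (mul_nonneg (sub_nonneg.2 h1) (sub_nonneg.2 h3)) (by linarith : 0 ≤ u)]
    have : 0.53 * ((m : ℝ) * 0.1499) ≤ K0 m t * - K1 m t := by gcongr
    nlinarith
  · have hw : u ^ 2 ≤ 18.1476 := by nlinarith
    have hw0 : 12.96 ≤ u ^ 2 := by nlinarith
    have a : 0.396 ≤ K0 m t := by
      refine le_trans ?_ k0
      generalize u ^ 2 = w at *
      nlinarith [mul_nonneg (sub_nonneg.2 hw) (sub_nonneg.2 hw0), mul_nonneg (mul_nonneg (sub_nonneg.2 hw) (sub_nonneg.2 hw0)) (sub_nonneg.2 hw0), mul_nonneg (mul_nonneg (sub_nonneg.2 hw) (sub_nonneg.2 hw)) (sub_nonneg.2 hw0)]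
    have b : m * 0.1938 ≤ - K1 m t := by
      refine le_trans ?_ k1
      gcongr
      nlinarith [mul_nonneg (sub_nonneg.2 h3) (sub_nonneg.2 h2), mul_nonneg (mul_nonneg (sub_nonneg.2 h3) (sub_nonneg.2 h2)) (by linarith : 0 ≤ u)]
    have : 0.396 * ((m : ℝ) * 0.1938) ≤ K0 m t * - K1 m t := by gcongr
    nlinarith


/-! ### Sums over separated points -/

lemma one_side {ι : Type*} (S : Finset ι) (z : ι → ℝ) (c : ℝ) (N : ℕ) (g : ℝ → ℝ)
    (hc : ∀ k ∈ S, c ≤ z k) (hN : ∀ k ∈ S, z k < c + N)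
    (hsep : ∀ k ∈ S, ∀ l ∈ S, k ≠ l → 1 ≤ |z k - z l|)
    (hg : ∀ a b, c ≤ a → a ≤ b → g b ≤ g a) (hg0 : ∀ a, c ≤ a → 0 ≤ g a) :
    ∑ k ∈ S, g (z k) ≤ ∑ n ∈ Finset.range N, g (c + n) := by
  classical
  have hinj : Set.InjOn (fun k => ⌊z k - c⌋₊) (S : Set ι) := by
    intro k hk l hl hkl
    by_contra hne
    have h1 := hsep k hk l hl hne
    have a1 := Nat.floor_le (sub_nonneg.2 (hc k hk))
    have a2 := Nat.lt_floor_add_one (z k - c)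
    have b1 := Nat.floor_le (sub_nonneg.2 (hc l hl))
    have b2 := Nat.lt_floor_add_one (z l - c)
    simp only at hkl
    rw [hkl] at a1 a2
    have : |z k - z l| < 1 := by rw [abs_lt]; constructor <;> linarith
    linarith
  calc ∑ k ∈ S, g (z k) ≤ ∑ k ∈ S, g (c + (⌊z k - c⌋₊ : ℕ)) := by
        apply Finset.sum_le_sum
        intro k hk
        apply hg
        · have : (0 : ℝ) ≤ (⌊z k - c⌋₊ : ℕ) := Nat.cast_nonneg _
          linarith
        · have := Nat.floor_le (sub_nonneg.2 (hc k hk))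
          linarith
    _ = ∑ n ∈ S.image (fun k => ⌊z k - c⌋₊), g (c + (n : ℕ)) := by
        rw [Finset.sum_image hinj]
    _ ≤ _ := by
        apply Finset.sum_le_sum_of_subset_of_nonneg
        · intro n hn
          rw [Finset.mem_image] at hn
          obtain ⟨k, hk, rfl⟩ := hn
          rw [Finset.mem_range, Nat.floor_lt (sub_nonneg.2 (hc k hk))]
          linarith [hN k hk]
        · intro n _ _
          apply hg0
          have : (0 : ℝ) ≤ (n : ℝ) := Nat.cast_nonneg _
          linarith

lemma sum_inv_sq_le (N : ℕ) : ∑ n ∈ Finset.range N, 1 / ((n : ℝ) + 1) ^ 2 ≤ π ^ 2 / 6 := by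
  have h := hasSum_zeta_two
  have h2 := (hasSum_nat_add_iff' (f := fun n : ℕ => 1 / (n : ℝ) ^ 2) 1).2 h
  simp only [Finset.range_one, Finset.sum_singleton, Nat.cast_zero, ne_eq, OfNat.ofNat_ne_zero,
    not_false_eq_true, zero_pow, div_zero, sub_zero] at h2
  have := sum_le_hasSum (Finset.range N) (fun n _ => by positivity) h2
  refine le_trans (le_of_eq ?_) this
  apply Finset.sum_congr rfl
  intro n _; push_cast; rfl

lemma sum_inv_half_sq_le (N : ℕ) : ∑ n ∈ Finset.range N, 1 / ((1 / 2 : ℝ) + n) ^ 2 ≤ 5 := by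
  have h : ∀ N : ℕ, ∑ n ∈ Finset.range (N + 1), 1 / ((1 / 2 : ℝ) + n) ^ 2 ≤ 5 - 1 / ((N : ℝ) + 1) := by
    intro N
    induction N with
    | zero => norm_num
    | succ n ih =>
      rw [Finset.sum_range_succ]
      have : 1 / ((1 / 2 : ℝ) + (n + 1 : ℕ)) ^ 2 ≤ 1 / ((n : ℝ) + 1) - 1 / (((n + 1 : ℕ) : ℝ) + 1) := by
        push_cast
        rw [div_sub_div _ _ (by positivity) (by positivity), div_le_div_iff₀ (by positivity) (by positivity)]
        nlinarith
      linarith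
  cases N with
  | zero => simp
  | succ n =>
    have := h n
    have h2 : (0 : ℝ) ≤ 1 / ((n : ℝ) + 1) := by positivity
    linarith

lemma pair_le (p z b : ℝ) (hp : 1 ≤ p) (hz : |z| ≤ b) (hb : b < 1) :
    1 / (p + z) ^ 2 + 1 / (p - z) ^ 2 ≤ 2 * ((1 + b ^ 2) / (1 - b ^ 2) ^ 2) * (1 / p ^ 2) := by
  have hb0 : 0 ≤ b := (abs_nonneg z).trans hz
  have hz' := abs_le.1 hz
  have hzb : z ^ 2 ≤ b ^ 2 := by rw [← sq_abs]; gcongr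
  have hb1 : b ^ 2 < 1 := by nlinarith
  have h1 : 0 < p + z := by linarith
  have h2 : 0 < p - z := by linarith
  set w := z ^ 2 / p ^ 2 with hw
  have hw0 : 0 ≤ w := by positivity
  have hwb : w ≤ b ^ 2 := by
    rw [hw, div_le_iff₀ (by positivity)]
    have : 1 ≤ p ^ 2 := by nlinarith
    nlinarith [mul_nonneg (sq_nonneg b) (sub_nonneg.2 this)]
  have e : 1 / (p + z) ^ 2 + 1 / (p - z) ^ 2 = 2 * ((1 + w) / (1 - w) ^ 2) * (1 / p ^ 2) := by
    have : 1 - w = (p + z) * (p - z) / p ^ 2 := by rw [hw]; field_simp; ring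
    rw [this, hw]; field_simp; ring
  rw [e]
  have : (1 + w) / (1 - w) ^ 2 ≤ (1 + b ^ 2) / (1 - b ^ 2) ^ 2 := by
    have : 0 < 1 - b ^ 2 := by linarith
    gcongr
  gcongr

lemma two_side {ι : Type*} (S : Finset ι) (z : ι → ℝ) (z0 b H A : ℝ) (hz0 : |z0| ≤ b) (hb : b < 1)
    (hA : 0 ≤ A) (hH0 : 0 ≤ H)
    (hH : ∀ k ∈ S, |z k| ≤ H) (h1 : ∀ k ∈ S, 1 ≤ |z k - z0|)
    (hsep : ∀ k ∈ S, ∀ l ∈ S, k ≠ l → 1 ≤ |z k - z l|) :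
    ∑ k ∈ S, (A / z k ^ 2 + 1) ≤ A * ((1 + b ^ 2) / (1 - b ^ 2) ^ 2) * (π ^ 2 / 3) + 2 * (H + b) := by
  classical
  have hb0 : 0 ≤ b := (abs_nonneg z0).trans hz0
  have hz' := abs_le.1 hz0
  set L := ⌊H + b⌋₊ with hL
  have hL1 := Nat.floor_le (show 0 ≤ H + b by linarith)
  have hL2 := Nat.lt_floor_add_one (H + b)
  rw [← hL] at hL1 hL2
  have ganti : ∀ c : ℝ, 0 < c → ∀ a b : ℝ, c ≤ a → a ≤ b → A / b ^ 2 + 1 ≤ A / a ^ 2 + 1 := by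
    intro c hc a b h1 h2
    have : 0 < a := by linarith
    gcongr
  have gpos : ∀ c : ℝ, ∀ a : ℝ, c ≤ a → 0 ≤ A / a ^ 2 + 1 := by
    intro c a _; positivity
  have hp : ∑ k ∈ S.filter (fun k => z0 < z k), (A / z k ^ 2 + 1)
      ≤ ∑ n ∈ Finset.range L, (A / ((1 + z0) + (n : ℝ)) ^ 2 + 1) := by
    apply one_side (S.filter (fun k => z0 < z k)) z (1 + z0) L (fun a => A / a ^ 2 + 1)
    · intro k hk
      rw [Finset.mem_filter] at hk
      have := h1 k hk.1
      rw [abs_of_pos (by linarith [hk.2])] at this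
      linarith
    · intro k hk
      rw [Finset.mem_filter] at hk
      have := (abs_le.1 (hH k hk.1)).2
      linarith
    · intro k hk l hl
      rw [Finset.mem_filter] at hk hl
      exact hsep k hk.1 l hl.1
    · exact ganti _ (by linarith)
    · exact gpos _
  have hn : ∑ k ∈ S.filter (fun k => ¬ z0 < z k), (A / z k ^ 2 + 1)
      ≤ ∑ n ∈ Finset.range L, (A / ((1 - z0) + (n : ℝ)) ^ 2 + 1) := by
    have := one_side (S.filter (fun k => ¬ z0 < z k)) (fun k => - z k) (1 - z0) L (fun a => A / a ^ 2 + 1)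
      ?_ ?_ ?_ (ganti _ (by linarith)) (gpos _)
    · simpa using this
    · intro k hk
      rw [Finset.mem_filter] at hk
      have := h1 k hk.1
      rw [abs_of_nonpos (by linarith [hk.2])] at this
      linarith
    · intro k hk
      rw [Finset.mem_filter] at hk
      have := (abs_le.1 (hH k hk.1)).1
      linarith
    · intro k hk l hl hkl
      rw [Finset.mem_filter] at hk hl
      have := hsep k hk.1 l hl.1 hkl
      rw [abs_sub_comm] at this
      rw [show -z k - -z l = z l - z k by ring]; exact this
  rw [← Finset.sum_filter_add_sum_filter_not S (fun k => z0 < z k)]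
  set C := (1 + b ^ 2) / (1 - b ^ 2) ^ 2 with hC
  have hC0 : 0 ≤ C := by positivity
  have hpair : ∑ n ∈ Finset.range L, (A / ((1 + z0) + (n : ℝ)) ^ 2 + 1)
      + ∑ n ∈ Finset.range L, (A / ((1 - z0) + (n : ℝ)) ^ 2 + 1)
      ≤ ∑ n ∈ Finset.range L, (2 * A * C * (1 / ((n : ℝ) + 1) ^ 2) + 2) := by
    rw [← Finset.sum_add_distrib]
    apply Finset.sum_le_sum
    intro n _
    have := pair_le ((n : ℝ) + 1) z0 b (by have : (0 : ℝ) ≤ n := Nat.cast_nonneg _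
                                           linarith) hz0 hb
    rw [← hC] at this
    have h3 := mul_le_mul_of_nonneg_left this hA
    rw [show (1 + z0) + (n : ℝ) = (n : ℝ) + 1 + z0 by ring, show (1 - z0) + (n : ℝ) = (n : ℝ) + 1 - z0 by ring]
    calc _ = A * (1 / ((n : ℝ) + 1 + z0) ^ 2 + 1 / ((n : ℝ) + 1 - z0) ^ 2) + 2 := by ring
      _ ≤ _ := by linarith
  have e : ∑ n ∈ Finset.range L, (2 * A * C * (1 / ((n : ℝ) + 1) ^ 2) + 2)
      = 2 * A * C * ∑ n ∈ Finset.range L, (1 / ((n : ℝ) + 1) ^ 2) + L * 2 := by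
    rw [Finset.sum_add_distrib, ← Finset.mul_sum]
    simp only [Finset.sum_const, Finset.card_range, nsmul_eq_mul]
  rw [e] at hpair
  have hz2 := mul_le_mul_of_nonneg_left (sum_inv_sq_le L) (show 0 ≤ 2 * A * C by positivity)
  linarith

lemma torus_rep (y : ℝ) : ∃ n : ℤ, |y + 2 * π * n| ≤ π := by
  refine ⟨- round (y / (2 * π)), ?_⟩
  have h := abs_sub_round (y / (2 * π))
  have hpi := Real.pi_pos
  have e : y + 2 * π * ((- round (y / (2 * π)) : ℤ) : ℝ) = 2 * π * (y / (2 * π) - round (y / (2 * π))) := by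
    push_cast; field_simp; ring
  rw [e, abs_mul, abs_of_pos (by positivity : 0 < 2 * π)]
  nlinarith

lemma csc2_flip (t x : ℝ) (n : ℤ) : csc2 (t - x) = csc2 (x - t + 2 * π * n) := by
  rw [csc2_per]; unfold csc2
  rw [show (t - x) / 2 = - ((x - t) / 2) by ring, Real.sin_neg]; ring

lemma sin_flip (t x : ℝ) (n : ℤ) (h : Real.sin ((x - t + 2 * π * n) / 2) ≠ 0) :
    Real.sin ((t - x) / 2) ≠ 0 := by
  have h2 := sin_ne_per _ (-n) h
  rw [show x - t + 2 * π * n + 2 * π * ((-n : ℤ) : ℝ) = -(t - x) by push_cast; ring, neg_div,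
    Real.sin_neg] at h2
  simpa using h2

lemma csc_sum (m s : ℕ) (hm : 100 ≤ m) (x : Fin s → ℝ)
    (hsep : ∀ j k : Fin s, j ≠ k → ∀ n : ℤ, 8 * π / m ≤ |x j - x k + 2 * π * n|)
    (j : Fin s) (t b : ℝ) (hb : b < 1) (ht : |m * (x j - t)| ≤ b * (8 * π)) :
    (∀ k, k ≠ j → Real.sin ((t - x k) / 2) ≠ 0 ∧
      csc2 (t - x k) - 1 ≤ (m / (4 * π * (1 - b))) ^ 2) ∧
    ∑ k ∈ Finset.univ.erase j, csc2 (t - x k)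
      ≤ (m : ℝ) ^ 2 / 48 * ((1 + b ^ 2) / (1 - b ^ 2) ^ 2) + m / 4 + 2 * b := by
  have hM : (100 : ℝ) ≤ m := by exact_mod_cast hm
  have hpi := Real.pi_pos
  have hMpos : (0 : ℝ) < m := by linarith
  choose n hn using fun k => torus_rep (x k - t)
  set δ : ℝ := 8 * π / m with hδ
  have hδ0 : 0 < δ := by positivity
  set z : Fin s → ℝ := fun k => (x k - t + 2 * π * n k) / δ with hz
  set z0 : ℝ := (x j - t) / δ with hz0
  have hz0b : |z0| ≤ b := by
    rw [hz0, abs_div, abs_of_pos hδ0, div_le_iff₀ hδ0, hδ]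
    rw [abs_mul, abs_of_pos hMpos] at ht
    rw [mul_div_assoc', le_div_iff₀ hMpos]; linarith
  have hzk : ∀ k, k ≠ j → 1 ≤ |z k - z0| := by
    intro k hk
    have := hsep k j hk (n k)
    rw [hz, hz0]
    simp only
    rw [← sub_div, abs_div, abs_of_pos hδ0, le_div_iff₀ hδ0, one_mul]
    rw [show x k - t + 2 * π * n k - (x j - t) = x k - x j + 2 * π * n k by ring]; exact this
  have hzkl : ∀ k l, k ≠ l → 1 ≤ |z k - z l| := by
    intro k l hk
    have := hsep k l hk (n k - n l)
    rw [hz]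
    simp only
    rw [← sub_div, abs_div, abs_of_pos hδ0, le_div_iff₀ hδ0, one_mul]
    rw [show x k - t + 2 * π * n k - (x l - t + 2 * π * n l) = x k - x l + 2 * π * ((n k - n l : ℤ) : ℝ) by push_cast; ring]; exact this
  have hzH : ∀ k, |z k| ≤ m / 8 := by
    intro k
    rw [hz]
    simp only
    rw [abs_div, abs_of_pos hδ0, div_le_iff₀ hδ0]
    refine (hn k).trans (le_of_eq ?_)
    rw [hδ]; field_simp
  have hzlow : ∀ k, k ≠ j → 1 - b ≤ |z k| := by
    intro k hk
    have h1 := hzk k hk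
    have h2 := abs_sub (z k) z0
    linarith
  have hyz : ∀ k, x k - t + 2 * π * n k = δ * z k := by
    intro k; rw [hz]; field_simp
  have hA : ∀ k, 4 / (δ * z k) ^ 2 = (m : ℝ) ^ 2 / (16 * π ^ 2) / z k ^ 2 := by
    intro k; rw [mul_pow, hδ]; field_simp; ring
  have hmain : ∀ k, k ≠ j → Real.sin ((t - x k) / 2) ≠ 0 ∧
      csc2 (t - x k) ≤ (m : ℝ) ^ 2 / (16 * π ^ 2) / z k ^ 2 + 1 := by
    intro k hk
    have hne : z k ≠ 0 := by
      intro h0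
      have := hzlow k hk
      rw [h0, abs_zero] at this
      linarith
    have hy0 : x k - t + 2 * π * n k ≠ 0 := by rw [hyz]; positivity
    obtain ⟨c1, c2⟩ := csc2_le _ (hn k) hy0
    refine ⟨sin_flip t (x k) (n k) c1, ?_⟩
    rw [csc2_flip t (x k) (n k)]
    refine c2.trans (le_of_eq ?_)
    rw [hyz, hA]
  refine ⟨fun k hk => ⟨(hmain k hk).1, ?_⟩, ?_⟩
  · have h1 := (hmain k hk).2
    have h2 : (1 - b) ^ 2 ≤ z k ^ 2 := by
      rw [← sq_abs (z k)]
      have := hzlow k hk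
      have : 0 ≤ 1 - b := by linarith
      gcongr
    have h3 : 0 < 1 - b := by linarith
    have h4 : (m : ℝ) ^ 2 / (16 * π ^ 2) / z k ^ 2 ≤ (m : ℝ) ^ 2 / (16 * π ^ 2) / (1 - b) ^ 2 := by
      gcongr
    have h5 : (m : ℝ) ^ 2 / (16 * π ^ 2) / (1 - b) ^ 2 = (m / (4 * π * (1 - b))) ^ 2 := by
      field_simp; ring
    linarith
  · have h1 := two_side (Finset.univ.erase j) z z0 b (m / 8) ((m : ℝ) ^ 2 / (16 * π ^ 2)) hz0b hb
      (by positivity) (by positivity) (fun k _ => hzH k)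
      (fun k hk => hzk k (Finset.ne_of_mem_erase hk)) (fun k _ l _ h => hzkl k l h)
    have h2 : ∑ k ∈ Finset.univ.erase j, csc2 (t - x k) ≤
        ∑ k ∈ Finset.univ.erase j, ((m : ℝ) ^ 2 / (16 * π ^ 2) / z k ^ 2 + 1) :=
      Finset.sum_le_sum (fun k hk => (hmain k (Finset.ne_of_mem_erase hk)).2)
    refine h2.trans (h1.trans (le_of_eq ?_))
    set C := (1 + b ^ 2) / (1 - b ^ 2) ^ 2
    field_simp; ring

lemma csc_sum_far (m s : ℕ) (hm : 100 ≤ m) (x : Fin s → ℝ)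
    (hsep : ∀ j k : Fin s, j ≠ k → ∀ n : ℤ, 8 * π / m ≤ |x j - x k + 2 * π * n|)
    (t : ℝ) (ht : ∀ (j : Fin s) (n : ℤ), 4.118 / m ≤ |x j - t + 2 * π * n|) :
    (∀ k, Real.sin ((t - x k) / 2) ≠ 0) ∧
    ∑ k, csc2 (t - x k) ≤ (m : ℝ) ^ 2 * 0.3025 := by
  classical
  have hM : (100 : ℝ) ≤ m := by exact_mod_cast hm
  have hpi := Real.pi_pos
  have hMpos : (0 : ℝ) < m := by linarith
  choose n hn using fun k => torus_rep (x k - t)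
  set δ : ℝ := 8 * π / m with hδ
  have hδ0 : 0 < δ := by positivity
  set z : Fin s → ℝ := fun k => (x k - t + 2 * π * n k) / δ with hz
  have hzkl : ∀ k l, k ≠ l → 1 ≤ |z k - z l| := by
    intro k l hk
    have := hsep k l hk (n k - n l)
    rw [hz]
    simp only
    rw [← sub_div, abs_div, abs_of_pos hδ0, le_div_iff₀ hδ0, one_mul]
    rw [show x k - t + 2 * π * n k - (x l - t + 2 * π * n l) = x k - x l + 2 * π * ((n k - n l : ℤ) : ℝ) by push_cast; ring]; exact this
  have hzH : ∀ k, |z k| ≤ m / 8 := by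
    intro k
    rw [hz]
    simp only
    rw [abs_div, abs_of_pos hδ0, div_le_iff₀ hδ0]
    refine (hn k).trans (le_of_eq ?_)
    rw [hδ]; field_simp
  have hyz : ∀ k, x k - t + 2 * π * n k = δ * z k := by
    intro k; rw [hz]; field_simp
  have hA : ∀ k, 4 / (δ * z k) ^ 2 = (m : ℝ) ^ 2 / (16 * π ^ 2) / z k ^ 2 := by
    intro k; rw [mul_pow, hδ]; field_simp; ring
  have hmain0 : ∀ k, Real.sin ((t - x k) / 2) ≠ 0 ∧
      csc2 (t - x k) ≤ 4 / (x k - t + 2 * π * n k) ^ 2 + 1 := by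
    intro k
    have hy0 : x k - t + 2 * π * n k ≠ 0 := by
      intro h0
      have := ht k (n k)
      rw [h0, abs_zero] at this
      have : 0 < 4.118 / (m : ℝ) := by positivity
      linarith
    obtain ⟨c1, c2⟩ := csc2_le _ (hn k) hy0
    refine ⟨sin_flip t (x k) (n k) c1, ?_⟩
    rw [csc2_flip t (x k) (n k)]
    exact c2
  refine ⟨fun k => (hmain0 k).1, ?_⟩
  rcases isEmpty_or_nonempty (Fin s) with hs | hs
  · simp; positivity
  obtain ⟨j, _, hj⟩ := Finset.exists_min_image Finset.univ (fun k => |z k|) Finset.univ_nonempty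
  have hhalf : ∀ k, k ≠ j → 1 / 2 ≤ |z k| := by
    intro k hk
    have h1 := hzkl k j hk
    have h2 := abs_sub (z k) (z j)
    have h3 := hj k (Finset.mem_univ k)
    linarith
  set A := (m : ℝ) ^ 2 / (16 * π ^ 2) with hAdef
  have hA0 : 0 ≤ A := by positivity
  set L := ⌊(m : ℝ) / 8 + 1 / 2⌋₊ with hL
  have hL1 := Nat.floor_le (show 0 ≤ (m : ℝ) / 8 + 1 / 2 by positivity)
  have hL2 := Nat.lt_floor_add_one ((m : ℝ) / 8 + 1 / 2)
  rw [← hL] at hL1 hL2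
  have ganti : ∀ a b : ℝ, 1 / 2 ≤ a → a ≤ b → A / b ^ 2 + 1 ≤ A / a ^ 2 + 1 := by
    intro a b h1 h2
    have : 0 < a := by linarith
    gcongr
  have gpos : ∀ a : ℝ, 1 / 2 ≤ a → 0 ≤ A / a ^ 2 + 1 := by
    intro a _; positivity
  have hsumL : ∑ n ∈ Finset.range L, (A / ((1 / 2 : ℝ) + (n : ℝ)) ^ 2 + 1) ≤ 5 * A + m / 8 + 1 / 2 := by
    have e : ∑ n ∈ Finset.range L, (A / ((1 / 2 : ℝ) + (n : ℝ)) ^ 2 + 1)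
        = A * ∑ n ∈ Finset.range L, 1 / ((1 / 2 : ℝ) + n) ^ 2 + L := by
      rw [Finset.sum_add_distrib, Finset.mul_sum]
      simp [div_eq_mul_inv]
    rw [e]
    have := mul_le_mul_of_nonneg_left (sum_inv_half_sq_le L) hA0
    linarith
  have hp : ∑ k ∈ (Finset.univ.erase j).filter (fun k => 0 < z k), (A / z k ^ 2 + 1)
      ≤ ∑ n ∈ Finset.range L, (A / ((1 / 2 : ℝ) + (n : ℝ)) ^ 2 + 1) := by
    apply one_side ((Finset.univ.erase j).filter (fun k => 0 < z k)) z (1 / 2) L (fun a => A / a ^ 2 + 1)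
    · intro k hk
      rw [Finset.mem_filter] at hk
      have := hhalf k (Finset.ne_of_mem_erase hk.1)
      rwa [abs_of_pos hk.2] at this
    · intro k hk
      have := (abs_le.1 (hzH k)).2
      linarith
    · intro k _ l _ h
      exact hzkl k l h
    · exact ganti
    · exact gpos
  have hn' : ∑ k ∈ (Finset.univ.erase j).filter (fun k => ¬ 0 < z k), (A / z k ^ 2 + 1)
      ≤ ∑ n ∈ Finset.range L, (A / ((1 / 2 : ℝ) + (n : ℝ)) ^ 2 + 1) := by
    have := one_side ((Finset.univ.erase j).filter (fun k => ¬ 0 < z k)) (fun k => - z k) (1 / 2) L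
      (fun a => A / a ^ 2 + 1) ?_ ?_ ?_ ganti gpos
    · simpa using this
    · intro k hk
      rw [Finset.mem_filter] at hk
      have := hhalf k (Finset.ne_of_mem_erase hk.1)
      rwa [abs_of_nonpos (by linarith [hk.2])] at this
    · intro k hk
      have := (abs_le.1 (hzH k)).1
      linarith
    · intro k _ l _ h
      have := hzkl k l h
      rw [abs_sub_comm] at this
      rw [show -z k - -z l = z l - z k by ring]; exact this
  have hrest : ∑ k ∈ Finset.univ.erase j, csc2 (t - x k) ≤ 10 * A + m / 4 + 1 := by
    have h2 : ∑ k ∈ Finset.univ.erase j, csc2 (t - x k) ≤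
        ∑ k ∈ Finset.univ.erase j, (A / z k ^ 2 + 1) := by
      apply Finset.sum_le_sum
      intro k _
      refine (hmain0 k).2.trans (le_of_eq ?_)
      rw [hyz, hA]
    have h3 := Finset.sum_filter_add_sum_filter_not (Finset.univ.erase j) (fun k => 0 < z k) (fun k => A / z k ^ 2 + 1)
    linarith
  rw [← Finset.add_sum_erase _ _ (Finset.mem_univ j)]
  have hjb : csc2 (t - x j) ≤ (m : ℝ) ^ 2 * 0.2359 + 1 := by
    refine (hmain0 j).2.trans ?_
    have h1 := ht j (n j)
    have h2 : (4.118 / (m : ℝ)) ^ 2 ≤ (x j - t + 2 * π * n j) ^ 2 := by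
      rw [← sq_abs (x j - t + 2 * π * n j)]
      gcongr
    have h3 : 4 / (x j - t + 2 * π * n j) ^ 2 ≤ 4 / (4.118 / (m : ℝ)) ^ 2 := by gcongr
    have h4 : 4 / (4.118 / (m : ℝ)) ^ 2 = (m : ℝ) ^ 2 * (4 / 4.118 ^ 2) := by field_simp
    have h5 : (m : ℝ) ^ 2 * (4 / 4.118 ^ 2) ≤ (m : ℝ) ^ 2 * 0.2359 := by
      gcongr; norm_num
    linarith
  have hAb : A ≤ (m : ℝ) ^ 2 * 0.00634 := by
    rw [hAdef, div_le_iff₀ (by positivity)]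
    have := Real.pi_gt_d2
    have : 9.8596 ≤ π ^ 2 := by nlinarith
    nlinarith [sq_nonneg (m : ℝ)]
  nlinarith


/-! ### Steering vectors -/

/-- The `p`-th derivative of the steering vector. -/
def phiP (m p : ℕ) (t : ℝ) : EuclideanSpace ℂ (Fin m) :=
  WithLp.toLp 2 (fun k => (Real.sqrt m : ℂ)⁻¹ * (Complex.I * (kap m k : ℂ)) ^ p *
    Complex.exp (Complex.I * ((kap m k * t : ℝ) : ℂ)))

lemma phiP_zero (m : ℕ) (t : ℝ) : phiP m 0 t = WithLp.toLp 2 (steer m t) := by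
  unfold phiP steer kap
  simp

lemma hasDerivAt_phiP (m p : ℕ) (t : ℝ) : HasDerivAt (phiP m p) (phiP m (p + 1) t) t := by
  have h : HasDerivAt (fun t => (fun k : Fin m => (Real.sqrt m : ℂ)⁻¹ * (Complex.I * (kap m k : ℂ)) ^ p *
      Complex.exp (Complex.I * ((kap m k * t : ℝ) : ℂ))))
      (fun k : Fin m => (Real.sqrt m : ℂ)⁻¹ * (Complex.I * (kap m k : ℂ)) ^ (p + 1) *
      Complex.exp (Complex.I * ((kap m k * t : ℝ) : ℂ))) t := by
    rw [hasDerivAt_pi]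
    intro k
    have h1 : HasDerivAt (fun t : ℝ => ((kap m k * t : ℝ) : ℂ)) ((kap m k : ℝ) : ℂ) t := by
      have := ((hasDerivAt_id t).const_mul (kap m k)).ofReal_comp
      simpa using this
    have h2 := ((h1.const_mul Complex.I).cexp).const_mul
      ((Real.sqrt m : ℂ)⁻¹ * (Complex.I * (kap m k : ℂ)) ^ p)
    refine h2.congr_deriv ?_
    ring
  have h3 := ((PiLp.continuousLinearEquiv 2 ℝ (fun _ : Fin m => ℂ)).symm :
    (Fin m → ℂ) →L[ℝ] EuclideanSpace ℂ (Fin m)).hasFDerivAt.comp_hasDerivAt t h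
  exact h3

lemma inner_phiP (m p : ℕ) (hm : 0 < m) (a b : ℝ) :
    inner ℂ (phiP m 0 a) (phiP m p b)
      = (∑ k : Fin m, (Complex.I * (kap m k : ℂ)) ^ p *
        Complex.exp (Complex.I * ((kap m k * (b - a) : ℝ) : ℂ))) / m := by
  unfold phiP
  rw [PiLp.inner_apply, Finset.sum_div]
  apply Finset.sum_congr rfl
  intro k _
  simp only [RCLike.inner_apply, pow_zero, mul_one, map_mul, map_inv₀, Complex.conj_ofReal,
    ← Complex.exp_conj, Complex.conj_I]
  have hs : (Real.sqrt m : ℂ)⁻¹ * (Real.sqrt m : ℂ)⁻¹ = (m : ℂ)⁻¹ := by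
    rw [← mul_inv, ← Complex.ofReal_mul, Real.mul_self_sqrt (Nat.cast_nonneg m)]; simp
  have he : Complex.exp (Complex.I * ((kap m k * (b - a) : ℝ) : ℂ))
      = Complex.exp (Complex.I * ((kap m k * b : ℝ) : ℂ)) * Complex.exp (-Complex.I * ((kap m k * a : ℝ) : ℂ)) := by
    rw [← Complex.exp_add]; congr 1; push_cast; ring
  rw [he, div_eq_mul_inv, ← hs]; ring

lemma exp_I (y : ℝ) : Complex.exp (Complex.I * (y : ℂ)) = (Real.cos y : ℂ) + Complex.I * (Real.sin y : ℂ) := by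
  rw [mul_comm, Complex.exp_mul_I]; push_cast; ring

lemma inner_phi0 (m : ℕ) (hm : 0 < m) (a b : ℝ) :
    inner ℂ (phiP m 0 a) (phiP m 0 b) = (K0 m (b - a) : ℂ) := by
  rw [inner_phiP m 0 hm, K0]
  push_cast
  congr 1
  have h := sum_odd_zero m (fun y => Real.sin (y * (b - a))) (by intro y; simp)
  have h' : ∑ k : Fin m, ((Real.sin (kap m k * (b - a)) : ℝ) : ℂ) = 0 := by
    rw [← Complex.ofReal_sum, h]; simp
  have : ∑ k : Fin m, (Complex.I * (kap m k : ℂ)) ^ 0 * Complex.exp (Complex.I * ((kap m k : ℂ) * ((b : ℂ) - (a : ℂ))))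
      = ∑ k : Fin m, (Complex.cos ((kap m k : ℂ) * ((b : ℂ) - (a : ℂ)))) + Complex.I * ∑ k : Fin m, ((Real.sin (kap m k * (b - a)) : ℝ) : ℂ) := by
    rw [Finset.mul_sum, ← Finset.sum_add_distrib]
    apply Finset.sum_congr rfl
    intro k _
    have := exp_I (kap m k * (b - a))
    push_cast at this ⊢
    rw [this]; ring
  rw [this, h']; ring

lemma inner_phi1 (m : ℕ) (hm : 0 < m) (a b : ℝ) :
    inner ℂ (phiP m 0 a) (phiP m 1 b) = (K1 m (b - a) : ℂ) := by
  rw [inner_phiP m 1 hm, K1]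
  push_cast
  congr 1
  have h := sum_odd_zero m (fun y => y * Real.cos (y * (b - a))) (by intro y; simp)
  have h' : ∑ k : Fin m, ((kap m k * Real.cos (kap m k * (b - a)) : ℝ) : ℂ) = 0 := by
    rw [← Complex.ofReal_sum, h]; simp
  have : ∑ k : Fin m, (Complex.I * (kap m k : ℂ)) ^ 1 * Complex.exp (Complex.I * ((kap m k : ℂ) * ((b : ℂ) - (a : ℂ))))
      = ∑ k : Fin m, (-((kap m k : ℂ) * Complex.sin ((kap m k : ℂ) * ((b : ℂ) - (a : ℂ))))) + Complex.I * ∑ k : Fin m, ((kap m k * Real.cos (kap m k * (b - a)) : ℝ) : ℂ) := by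
    rw [Finset.mul_sum, ← Finset.sum_add_distrib]
    apply Finset.sum_congr rfl
    intro k _
    have := exp_I (kap m k * (b - a))
    push_cast at this ⊢
    rw [this]; ring_nf; rw [Complex.I_sq]; ring
  rw [this, h']; ring

lemma inner_phi2 (m : ℕ) (hm : 0 < m) (a b : ℝ) :
    inner ℂ (phiP m 0 a) (phiP m 2 b) = (K2 m (b - a) : ℂ) := by
  rw [inner_phiP m 2 hm, K2]
  push_cast
  congr 1
  have h := sum_odd_zero m (fun y => y ^ 2 * Real.sin (y * (b - a))) (by intro y; simp)
  have h' : ∑ k : Fin m, ((kap m k ^ 2 * Real.sin (kap m k * (b - a)) : ℝ) : ℂ) = 0 := by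
    rw [← Complex.ofReal_sum, h]; simp
  have : ∑ k : Fin m, (Complex.I * (kap m k : ℂ)) ^ 2 * Complex.exp (Complex.I * ((kap m k : ℂ) * ((b : ℂ) - (a : ℂ))))
      = ∑ k : Fin m, (-((kap m k : ℂ) ^ 2 * Complex.cos ((kap m k : ℂ) * ((b : ℂ) - (a : ℂ))))) - Complex.I * ∑ k : Fin m, ((kap m k ^ 2 * Real.sin (kap m k * (b - a)) : ℝ) : ℂ) := by
    rw [Finset.mul_sum, ← Finset.sum_sub_distrib]
    apply Finset.sum_congr rfl
    intro k _
    have := exp_I (kap m k * (b - a))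
    push_cast at this ⊢
    rw [this, mul_pow, Complex.I_sq]; ring
  rw [this, h']; ring

lemma norm_phiP_sq (m p : ℕ) (t : ℝ) :
    ‖phiP m p t‖ ^ 2 = (∑ k : Fin m, kap m k ^ (2 * p)) / m := by
  rw [EuclideanSpace.norm_sq_eq, Finset.sum_div]
  apply Finset.sum_congr rfl
  intro k _
  have h : ‖Complex.exp (Complex.I * ((kap m k * t : ℝ) : ℂ))‖ = 1 := by
    rw [mul_comm]; exact Complex.norm_exp_ofReal_mul_I _
  simp only [phiP]
  rw [norm_mul, norm_mul, h, norm_inv, norm_pow, norm_mul, Complex.norm_I, one_mul, mul_one,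
    Complex.norm_real, Complex.norm_real, Real.norm_eq_abs, Real.norm_eq_abs, mul_pow, inv_pow, sq_abs,
    Real.sq_sqrt (Nat.cast_nonneg m), ← pow_mul, mul_comm p 2, pow_mul, sq_abs, ← pow_mul]
  ring

lemma le_of_sq_le_sq' {a b : ℝ} (h : a ^ 2 ≤ b ^ 2) (hb : 0 ≤ b) : a ≤ b :=
  (abs_le_of_sq_le_sq' h hb).2

lemma norm_phi0 (m : ℕ) (hm : 0 < m) (t : ℝ) : ‖phiP m 0 t‖ = 1 := by
  have h := norm_phiP_sq m 0 t
  have : (m : ℝ) ≠ 0 := by positivity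
  simp only [mul_zero, pow_zero, Finset.sum_const, Finset.card_univ, Fintype.card_fin, nsmul_eq_mul,
    mul_one, div_self this] at h
  have h2 := norm_nonneg (phiP m 0 t)
  nlinarith

lemma norm_phi1 (m : ℕ) (hm : 100 ≤ m) (t : ℝ) : ‖phiP m 1 t‖ ≤ 0.28868 * m := by
  have h := norm_phiP_sq m 1 t
  have h2 := avg2_le m hm
  simp only [mul_one] at h
  rw [← h] at h2
  refine le_of_sq_le_sq' ?_ (by positivity)
  nlinarith [sq_nonneg (m : ℝ)]

lemma norm_phi2 (m : ℕ) (hm : 100 ≤ m) (t : ℝ) : ‖phiP m 2 t‖ ≤ 0.11181 * (m : ℝ) ^ 2 := by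
  have h := norm_phiP_sq m 2 t
  have h2 := avg4_le m hm
  norm_num at h
  rw [← h] at h2
  refine le_of_sq_le_sq' ?_ (by positivity)
  nlinarith [sq_nonneg ((m : ℝ) ^ 2)]

/-! ### Projections -/

/-- The projection matrix as a continuous linear map. -/
def proj {m s : ℕ} (W : Matrix (Fin m) (Fin s) ℂ) :
    EuclideanSpace ℂ (Fin m) →L[ℂ] EuclideanSpace ℂ (Fin m) :=
  LinearMap.toContinuousLinearMap (Matrix.toEuclideanLin (W * Wᴴ))

lemma re_inner_self {m : ℕ} (v : EuclideanSpace ℂ (Fin m)) : (inner ℂ v v).re = ‖v‖ ^ 2 :=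
  inner_self_eq_norm_sq (𝕜 := ℂ) v

lemma inner_toEL {d e : ℕ} (A : Matrix (Fin d) (Fin e) ℂ) (v : EuclideanSpace ℂ (Fin e))
    (w : EuclideanSpace ℂ (Fin d)) :
    inner ℂ (Matrix.toEuclideanLin A v) w = inner ℂ v (Matrix.toEuclideanLin Aᴴ w) := by
  rw [Matrix.toEuclideanLin_conjTranspose_eq_adjoint, LinearMap.adjoint_inner_right]

lemma proj_apply {m s : ℕ} (W : Matrix (Fin m) (Fin s) ℂ) (v : EuclideanSpace ℂ (Fin m)) :
    proj W v = Matrix.toEuclideanLin W (Matrix.toEuclideanLin Wᴴ v) := by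
  simp [proj, Matrix.toEuclideanLin_apply, Matrix.mulVec_mulVec]

lemma proj_symm {m s : ℕ} (W : Matrix (Fin m) (Fin s) ℂ) (v w : EuclideanSpace ℂ (Fin m)) :
    inner ℂ (proj W v) w = inner ℂ v (proj W w) := by
  have := inner_toEL (W * Wᴴ) v w
  rw [Matrix.conjTranspose_mul, Matrix.conjTranspose_conjTranspose] at this
  exact this

lemma proj_fix {m s : ℕ} (W : Matrix (Fin m) (Fin s) ℂ) (hW : Wᴴ * W = 1) (c : EuclideanSpace ℂ (Fin s)) :
    proj W (Matrix.toEuclideanLin W c) = Matrix.toEuclideanLin W c := by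
  rw [proj_apply]
  congr 1
  simp [Matrix.toEuclideanLin_apply, Matrix.mulVec_mulVec, hW]

lemma proj_idem {m s : ℕ} (W : Matrix (Fin m) (Fin s) ℂ) (hW : Wᴴ * W = 1) (v : EuclideanSpace ℂ (Fin m)) :
    proj W (proj W v) = proj W v := by
  rw [proj_apply W v, proj_fix W hW]

lemma landscape_eq {m s : ℕ} (W : Matrix (Fin m) (Fin s) ℂ) (t : ℝ) :
    landscape W t = 1 - (inner ℂ (proj W (phiP m 0 t)) (phiP m 0 t)).re := by
  unfold landscape
  congr 1
  have h : inner ℂ (proj W (phiP m 0 t)) (phiP m 0 t)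
     = inner ℂ (Matrix.toEuclideanLin Wᴴ (phiP m 0 t)) (Matrix.toEuclideanLin Wᴴ (phiP m 0 t)) := by
    rw [proj_apply, inner_toEL]
  rw [h, re_inner_self, phiP_zero, Matrix.toEuclideanLin_toLp, EuclideanSpace.norm_sq_eq]
  rfl

lemma proj_diff_norm {m s : ℕ} (U Ut : Matrix (Fin m) (Fin s) ℂ) (v : EuclideanSpace ℂ (Fin m)) :
    ‖proj U v - proj Ut v‖ ≤ specNorm (U * Uᴴ - Ut * Utᴴ) * ‖v‖ := by
  have h : proj U v - proj Ut v =
      LinearMap.toContinuousLinearMap (Matrix.toEuclideanLin (U * Uᴴ - Ut * Utᴴ)) v := by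
    simp [proj]
  rw [h]
  exact ContinuousLinearMap.le_opNorm _ _

lemma proj_norm_le {m s : ℕ} (W : Matrix (Fin m) (Fin s) ℂ) (hW : Wᴴ * W = 1) (v : EuclideanSpace ℂ (Fin m)) :
    ‖proj W v‖ ≤ ‖v‖ := by
  have h1 : inner ℂ (proj W v) (proj W v) = inner ℂ v (proj W v) := by
    rw [proj_symm, proj_idem W hW]
  have h2 : ‖proj W v‖ ^ 2 ≤ ‖v‖ * ‖proj W v‖ := by
    have e : (‖proj W v‖ ^ 2 : ℝ) = (inner ℂ v (proj W v)).re := by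
      rw [← h1, inner_self_eq_norm_sq_to_K]; norm_cast
    rw [e]
    exact (Complex.re_le_norm _).trans (norm_inner_le_norm _ _)
  have h3 := norm_nonneg (proj W v)
  rcases h3.eq_or_lt with h | h
  · rw [← h]; exact norm_nonneg _
  · rw [sq] at h2; exact le_of_mul_le_mul_right h2 h

/-! ### The Fourier subspace -/

lemma fourier_col (m s : ℕ) (hm : 0 < m) (x : Fin s → ℝ) (c : EuclideanSpace ℂ (Fin s)) :
    Matrix.toEuclideanLin (fourierMatrix m x) c = ∑ j, ((Real.sqrt m : ℂ) * c j) • phiP m 0 (x j) := by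
  have hs : (Real.sqrt m : ℂ) ≠ 0 := by
    have : (0 : ℝ) < m := by exact_mod_cast hm
    have := Real.sqrt_pos.2 this
    exact_mod_cast this.ne'
  ext k
  rw [Matrix.ofLp_toEuclideanLin_apply]
  simp only [Matrix.mulVec, dotProduct, WithLp.ofLp_sum, Finset.sum_apply, WithLp.ofLp_smul,
    Pi.smul_apply, smul_eq_mul, phiP, fourierMatrix, kap]
  apply Finset.sum_congr rfl
  intro j _
  field_simp

lemma proj_range (m s : ℕ) (hm : 0 < m) (x : Fin s → ℝ) (U : Matrix (Fin m) (Fin s) ℂ)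
    (hU : IsONBasisOf U (colSpan (fourierMatrix m x))) (v : EuclideanSpace ℂ (Fin m)) :
    ∃ c : Fin s → ℂ, proj U v = ∑ j, c j • phiP m 0 (x j) := by
  have h : proj U v ∈ colSpan U := by
    rw [proj_apply]; exact LinearMap.mem_range_self _ _
  rw [hU.2] at h
  obtain ⟨c, hc⟩ := h
  exact ⟨_, hc.symm.trans (fourier_col m s hm x c)⟩

lemma proj_phi (m s : ℕ) (hm : 0 < m) (x : Fin s → ℝ) (U : Matrix (Fin m) (Fin s) ℂ)
    (hU : IsONBasisOf U (colSpan (fourierMatrix m x))) (j : Fin s) :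
    proj U (phiP m 0 (x j)) = phiP m 0 (x j) := by
  have hs : (Real.sqrt m : ℂ) ≠ 0 := by
    have : (0 : ℝ) < m := by exact_mod_cast hm
    have := Real.sqrt_pos.2 this
    exact_mod_cast this.ne'
  have h : phiP m 0 (x j) ∈ colSpan (fourierMatrix m x) := by
    refine ⟨WithLp.toLp 2 (Pi.single j (Real.sqrt m : ℂ)⁻¹), ?_⟩
    rw [fourier_col m s hm x, Finset.sum_eq_single j]
    · simp [hs]
    · intro k _ hk
      simp [Pi.single_apply, hk]
    · simp
  rw [← hU.2] at h
  obtain ⟨c, hc⟩ := h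
  rw [← hc]
  exact proj_fix U hU.1 c


/-! ### Lower bound for the Gram matrix -/

lemma gram_dominance (s : ℕ) (G : Fin s → Fin s → ℝ) (hsym : ∀ j l, G j l = G l j) (D R : ℝ)
    (hD : ∀ j, G j j = D) (hR : ∀ j, ∑ l ∈ Finset.univ.erase j, |G j l| ≤ R) (c : Fin s → ℂ) :
    (D - R) * ∑ j, ‖c j‖ ^ 2 ≤ (∑ j, ∑ l, (starRingEnd ℂ) (c j) * c l * (G j l : ℂ)).re := by
  classical
  set B : Fin s → Fin s → ℝ := fun j l => if j = l then 0 else |G j l| with hB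
  have hBsym : ∀ j l, B j l = B l j := by
    intro j l; simp only [hB, hsym j l, eq_comm]
  have hBR : ∀ j, ∑ l, B j l ≤ R := by
    intro j
    refine le_trans (le_of_eq ?_) (hR j)
    rw [← Finset.add_sum_erase _ _ (Finset.mem_univ j)]
    have : B j j = 0 := by simp [hB]
    rw [this, zero_add]
    apply Finset.sum_congr rfl
    intro l hl
    simp [hB, (Finset.ne_of_mem_erase hl).symm]
  have hT : ∀ j l, (if j = l then D * ‖c j‖ ^ 2 else 0) - B j l * ‖c j‖ ^ 2 / 2 - B j l * ‖c l‖ ^ 2 / 2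
      ≤ ((starRingEnd ℂ) (c j) * c l * (G j l : ℂ)).re := by
    intro j l
    by_cases h : j = l
    · subst h
      simp only [hB, if_true, hD]
      rw [mul_comm ((starRingEnd ℂ) (c j)), Complex.mul_conj, Complex.normSq_eq_norm_sq, ← Complex.ofReal_mul,
        Complex.ofReal_re]
      linarith
    · simp only [hB, h, if_false]
      have h1 := (abs_le.1 (Complex.abs_re_le_norm ((starRingEnd ℂ) (c j) * c l * (G j l : ℂ)))).1
      rw [norm_mul, norm_mul, RCLike.norm_conj, Complex.norm_real, Real.norm_eq_abs] at h1
      have h2 : ‖c j‖ * ‖c l‖ * |G j l| ≤ |G j l| * ‖c j‖ ^ 2 / 2 + |G j l| * ‖c l‖ ^ 2 / 2 := by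
        nlinarith [mul_nonneg (abs_nonneg (G j l)) (sq_nonneg (‖c j‖ - ‖c l‖))]
      linarith
  rw [Complex.re_sum]
  simp only [Complex.re_sum]
  refine le_trans ?_ (Finset.sum_le_sum (fun j _ => Finset.sum_le_sum (fun l _ => hT j l)))
  simp only [Finset.sum_sub_distrib, Finset.sum_ite_eq, Finset.mem_univ, if_true]
  have e1 : ∑ j, ∑ l, B j l * ‖c j‖ ^ 2 / 2 ≤ R / 2 * ∑ j, ‖c j‖ ^ 2 := by
    rw [Finset.mul_sum]
    apply Finset.sum_le_sum
    intro j _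
    rw [← Finset.sum_div, ← Finset.sum_mul]
    nlinarith [hBR j, sq_nonneg ‖c j‖, mul_le_mul_of_nonneg_right (hBR j) (sq_nonneg ‖c j‖)]
  have e2 : ∑ j, ∑ l, B j l * ‖c l‖ ^ 2 / 2 ≤ R / 2 * ∑ j, ‖c j‖ ^ 2 := by
    rw [Finset.sum_comm]
    refine le_trans (le_of_eq ?_) e1
    apply Finset.sum_congr rfl
    intro j _
    apply Finset.sum_congr rfl
    intro l _
    rw [hBsym]
  rw [← Finset.mul_sum]
  linarith

lemma sum_exp_Dir (L : ℕ) (d : ℝ) :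
    ∑ a : Fin L, Complex.exp (Complex.I * ((kap L a * d : ℝ) : ℂ)) = (Dir L d : ℂ) := by
  have h := sum_odd_zero L (fun y => Real.sin (y * d)) (by intro y; simp)
  simp only [exp_I]
  rw [Finset.sum_add_distrib, ← Finset.mul_sum, ← Complex.ofReal_sum, ← Complex.ofReal_sum, h, Dir]
  simp

lemma sum_shift_le (L1 L2 m : ℕ) (hL : L1 + L2 = m + 1) (h : ℕ → ℝ) (hh : ∀ k, 0 ≤ h k) :
    ∑ b : Fin L2, ∑ a : Fin L1, h ((a : ℕ) + (b : ℕ)) ≤ L2 * ∑ k : Fin m, h k := by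
  have : ∀ b : Fin L2, ∑ a : Fin L1, h ((a : ℕ) + (b : ℕ)) ≤ ∑ k : Fin m, h k := by
    intro b
    rw [Fin.sum_univ_eq_sum_range (fun a => h (a + (b : ℕ))), Fin.sum_univ_eq_sum_range h]
    have e : ∑ a ∈ Finset.range L1, h (a + (b : ℕ)) = ∑ k ∈ Finset.Ico (b : ℕ) (b + L1), h k := by
      rw [Finset.sum_Ico_eq_sum_range]
      simp [add_comm]
    rw [e]
    apply Finset.sum_le_sum_of_subset_of_nonneg
    · intro k hk
      rw [Finset.mem_Ico] at hk
      rw [Finset.mem_range]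
      have := b.2
      omega
    · intro k _ _; exact hh k
  refine (Finset.sum_le_sum (fun b _ => this b)).trans ?_
  simp

lemma gram_lower (m s : ℕ) (hm : 100 ≤ m) (x : Fin s → ℝ)
    (hsep : ∀ j k : Fin s, j ≠ k → ∀ n : ℤ, 8 * π / m ≤ |x j - x k + 2 * π * n|)
    (c : Fin s → ℂ) :
    0.7 * ∑ j, ‖c j‖ ^ 2 ≤ ‖∑ j, c j • phiP m 0 (x j)‖ ^ 2 := by
  have hM : (100 : ℝ) ≤ m := by exact_mod_cast hm
  obtain ⟨L2, hL2⟩ : ∃ L2, L2 = m / 6 := ⟨_, rfl⟩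
  obtain ⟨L1, hL1⟩ : ∃ L1, L1 = m + 1 - L2 := ⟨_, rfl⟩
  have hL : L1 + L2 = m + 1 := by omega
  have hLr : (L1 : ℝ) + L2 = m + 1 := by exact_mod_cast hL
  have hb1 : (L2 : ℝ) ≤ m / 6 := by
    have : 6 * L2 ≤ m := by omega
    have : (6 : ℝ) * L2 ≤ m := by exact_mod_cast this
    linarith
  have hb2 : ((m : ℝ) - 5) / 6 ≤ L2 := by
    have : m ≤ 6 * L2 + 5 := by omega
    have : (m : ℝ) ≤ 6 * L2 + 5 := by exact_mod_cast this
    linarith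
  set g : ℝ → ℂ := fun θ => ∑ j, c j * Complex.exp (Complex.I * ((θ * x j : ℝ) : ℂ)) with hg
  set h : ℕ → ℝ := fun k => ‖g ((k : ℝ) - ((m : ℝ) - 1) / 2)‖ ^ 2 with hh
  have hnorm : ‖∑ j, c j • phiP m 0 (x j)‖ ^ 2 = (∑ k : Fin m, h k) / m := by
    rw [EuclideanSpace.norm_sq_eq, Finset.sum_div]
    apply Finset.sum_congr rfl
    intro k _
    have : (∑ j, c j • phiP m 0 (x j)).ofLp k = (Real.sqrt m : ℂ)⁻¹ * g (kap m k) := by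
      simp only [WithLp.ofLp_sum, Finset.sum_apply, WithLp.ofLp_smul, Pi.smul_apply, smul_eq_mul, phiP, hg]
      rw [Finset.mul_sum]
      apply Finset.sum_congr rfl
      intro j _
      ring
    rw [this, norm_mul, mul_pow, norm_inv, Complex.norm_real, Real.norm_eq_abs, inv_pow, sq_abs,
      Real.sq_sqrt (Nat.cast_nonneg m)]
    simp only [hh, kap]
    ring
  have hshift := sum_shift_le L1 L2 m hL h (fun k => sq_nonneg _)
  set G : Fin s → Fin s → ℝ := fun j l => Dir L1 (x l - x j) * Dir L2 (x l - x j) with hG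
  have hexp : ∑ b : Fin L2, ∑ a : Fin L1, h ((a : ℕ) + (b : ℕ))
      = (∑ j, ∑ l, (starRingEnd ℂ) (c j) * c l * (G j l : ℂ)).re := by
    have e1 : ∀ (b : Fin L2) (a : Fin L1), ((h ((a : ℕ) + (b : ℕ)) : ℝ) : ℂ) =
        ∑ j, ∑ l, (starRingEnd ℂ) (c j) * c l *
          (Complex.exp (Complex.I * ((kap L1 a * (x l - x j) : ℝ) : ℂ))
          * Complex.exp (Complex.I * ((kap L2 b * (x l - x j) : ℝ) : ℂ))) := by
      intro b a
      have e : (((a : ℕ) + (b : ℕ) : ℕ) : ℝ) - ((m : ℝ) - 1) / 2 = kap L1 a + kap L2 b := by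
        unfold kap; push_cast; linarith
      simp only [hh]
      rw [e]
      set θ := kap L1 a + kap L2 b with hθ
      have : ((‖g θ‖ ^ 2 : ℝ) : ℂ) = (starRingEnd ℂ) (g θ) * g θ := by
        rw [mul_comm, Complex.mul_conj, Complex.normSq_eq_norm_sq]
      rw [this]
      simp only [hg]
      rw [map_sum, Finset.sum_mul_sum]
      apply Finset.sum_congr rfl
      intro j _
      apply Finset.sum_congr rfl
      intro l _
      rw [map_mul, ← Complex.exp_conj, map_mul, Complex.conj_I, Complex.conj_ofReal]
      have e3 : Complex.exp (Complex.I * ((kap L1 a * (x l - x j) : ℝ) : ℂ))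
          * Complex.exp (Complex.I * ((kap L2 b * (x l - x j) : ℝ) : ℂ))
          = Complex.exp (-Complex.I * ((θ * x j : ℝ) : ℂ)) * Complex.exp (Complex.I * ((θ * x l : ℝ) : ℂ)) := by
        rw [← Complex.exp_add, ← Complex.exp_add]
        congr 1
        rw [hθ]; push_cast; ring
      rw [e3]; ring
    have e2 : ((∑ b : Fin L2, ∑ a : Fin L1, h ((a : ℕ) + (b : ℕ)) : ℝ) : ℂ)
        = ∑ j, ∑ l, (starRingEnd ℂ) (c j) * c l * (G j l : ℂ) := by
      push_cast
      simp only [e1]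
      calc _ = ∑ b : Fin L2, ∑ j, ∑ a : Fin L1, ∑ l, _ := by
            apply Finset.sum_congr rfl; intro b _; rw [Finset.sum_comm]
        _ = ∑ j, ∑ b : Fin L2, ∑ a : Fin L1, ∑ l, _ := by rw [Finset.sum_comm]
        _ = ∑ j, ∑ b : Fin L2, ∑ l, ∑ a : Fin L1, _ := by
            apply Finset.sum_congr rfl; intro j _
            apply Finset.sum_congr rfl; intro b _; rw [Finset.sum_comm]
        _ = ∑ j, ∑ l, ∑ b : Fin L2, ∑ a : Fin L1, _ := by
            apply Finset.sum_congr rfl; intro j _; rw [Finset.sum_comm]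
        _ = _ := by
            apply Finset.sum_congr rfl; intro j _
            apply Finset.sum_congr rfl; intro l _
            simp only [hG]
            rw [Complex.ofReal_mul, ← sum_exp_Dir L1, ← sum_exp_Dir L2, Finset.sum_mul_sum, Finset.mul_sum,
              Finset.sum_comm]
            apply Finset.sum_congr rfl; intro a _
            rw [Finset.mul_sum]
    rw [← e2, Complex.ofReal_re]
  have hDir0 : ∀ L : ℕ, Dir L 0 = L := by intro L; simp [Dir]
  have hDirneg : ∀ (L : ℕ) (d : ℝ), Dir L (-d) = Dir L d := by intro L d; simp [Dir]
  have hgd := gram_dominance s G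
    (fun j l => by simp only [hG]; rw [← neg_sub (x j) (x l), hDirneg, hDirneg])
    (L1 * L2) ((m : ℝ) ^ 2 / 48 + m / 4)
    (fun j => by simp only [hG, sub_self, hDir0])
    (fun j => by
      obtain ⟨c1, c2⟩ := csc_sum m s hm x hsep j (x j) 0 (by norm_num) (by simp)
      refine le_trans (Finset.sum_le_sum (g := fun l => csc2 (x j - x l)) ?_) (c2.trans (le_of_eq (by norm_num)))
      intro l hl
      have hs := (c1 l (Finset.ne_of_mem_erase hl)).1
      have a1 := Dir_sq_le L1 _ hs
      have a2 := Dir_sq_le L2 _ hs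
      simp only [hG]
      rw [← neg_sub (x j) (x l), hDirneg, hDirneg, abs_le]
      constructor
      · nlinarith [sq_nonneg (Dir L1 (x j - x l) + Dir L2 (x j - x l))]
      · nlinarith [sq_nonneg (Dir L1 (x j - x l) - Dir L2 (x j - x l))])
    c
  rw [← hexp] at hgd
  have hC : 0 ≤ ∑ j, ‖c j‖ ^ 2 := Finset.sum_nonneg (fun _ _ => sq_nonneg _)
  rw [hnorm, le_div_iff₀ (by linarith)]
  have hL2pos : (0 : ℝ) < L2 := by linarith
  have hkey : 0.7 * m * L2 ≤ (L1 : ℝ) * L2 - ((m : ℝ) ^ 2 / 48 + m / 4) := by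
    have : (L1 : ℝ) = m + 1 - L2 := by linarith
    rw [this]
    nlinarith [mul_nonneg (sub_nonneg.2 hb1) (sub_nonneg.2 hb2)]
  have h1 := mul_le_mul_of_nonneg_right hkey hC
  have h2 : L2 * (0.7 * (∑ j, ‖c j‖ ^ 2) * m) ≤ L2 * ∑ k : Fin m, h k := by
    calc _ = 0.7 * m * L2 * ∑ j, ‖c j‖ ^ 2 := by ring
      _ ≤ _ := h1
      _ ≤ _ := hgd
      _ ≤ _ := hshift
  exact le_of_mul_le_mul_left h2 hL2pos


/-! ### Bounds on the projected vectors -/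

lemma sum_sq_add_le {ι : Type*} (S : Finset ι) (f h : ι → ℝ) (A B : ℝ) (hA : 0 ≤ A) (hB : 0 ≤ B)
    (hf : ∑ k ∈ S, f k ^ 2 ≤ A ^ 2) (hh : ∑ k ∈ S, h k ^ 2 ≤ B ^ 2) :
    ∑ k ∈ S, (f k + h k) ^ 2 ≤ (A + B) ^ 2 := by
  have h1 := Finset.sum_mul_sq_le_sq_mul_sq S f h
  have h2 : (∑ k ∈ S, f k * h k) ^ 2 ≤ (A * B) ^ 2 := by
    refine h1.trans ?_
    rw [mul_pow]
    have : 0 ≤ ∑ k ∈ S, h k ^ 2 := Finset.sum_nonneg (fun _ _ => sq_nonneg _)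
    gcongr
  have h3 := le_of_sq_le_sq' h2 (by positivity)
  have e : ∑ k ∈ S, (f k + h k) ^ 2 = ∑ k ∈ S, f k ^ 2 + 2 * ∑ k ∈ S, f k * h k + ∑ k ∈ S, h k ^ 2 := by
    rw [Finset.mul_sum, ← Finset.sum_add_distrib, ← Finset.sum_add_distrib]
    apply Finset.sum_congr rfl
    intro k _; ring
  rw [e]; nlinarith

lemma span_inner (m s : ℕ) (hm : 100 ≤ m) (x : Fin s → ℝ)
    (hsep : ∀ j k : Fin s, j ≠ k → ∀ n : ℤ, 8 * π / m ≤ |x j - x k + 2 * π * n|)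
    (c : Fin s → ℂ) (y w : EuclideanSpace ℂ (Fin m)) (hy : y = ∑ j, c j • phiP m 0 (x j)) :
    0.7 * ‖inner ℂ y w‖ ^ 2 ≤ ‖y‖ ^ 2 * ∑ k, ‖inner ℂ (phiP m 0 (x k)) w‖ ^ 2 := by
  have h0 := gram_lower m s hm x hsep c
  rw [← hy] at h0
  have h1 : ‖inner ℂ y w‖ ≤ ∑ k, ‖c k‖ * ‖inner ℂ (phiP m 0 (x k)) w‖ := by
    rw [hy, sum_inner]
    refine (norm_sum_le _ _).trans (le_of_eq ?_)
    apply Finset.sum_congr rfl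
    intro k _
    rw [inner_smul_left, norm_mul, RCLike.norm_conj]
  have h2 := Finset.sum_mul_sq_le_sq_mul_sq Finset.univ (fun k => ‖c k‖)
    (fun k => ‖inner ℂ (phiP m 0 (x k)) w‖)
  have h3 : ‖inner ℂ y w‖ ^ 2 ≤ (∑ k, ‖c k‖ ^ 2) * ∑ k, ‖inner ℂ (phiP m 0 (x k)) w‖ ^ 2 :=
    le_trans (by gcongr) h2
  have h4 : 0 ≤ ∑ k, ‖inner ℂ (phiP m 0 (x k)) w‖ ^ 2 := Finset.sum_nonneg (fun _ _ => sq_nonneg _)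
  have := mul_le_mul_of_nonneg_right h0 h4
  linarith

lemma sq_of_quartic {a S : ℝ} (h : 0.7 * (a ^ 2) ^ 2 ≤ a ^ 2 * S) (hS : 0 ≤ S) : 0.7 * a ^ 2 ≤ S := by
  rcases (sq_nonneg a).eq_or_lt with h0 | h0
  · rw [← h0]; linarith
  · by_contra hc
    push Not at hc
    nlinarith [mul_lt_mul_of_pos_left hc h0]

lemma proj_bound (m s : ℕ) (hm : 100 ≤ m) (x : Fin s → ℝ)
    (hsep : ∀ j k : Fin s, j ≠ k → ∀ n : ℤ, 8 * π / m ≤ |x j - x k + 2 * π * n|)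
    (U : Matrix (Fin m) (Fin s) ℂ) (hU : IsONBasisOf U (colSpan (fourierMatrix m x)))
    (v : EuclideanSpace ℂ (Fin m)) :
    0.7 * ‖proj U v‖ ^ 2 ≤ ∑ k, ‖inner ℂ (phiP m 0 (x k)) v‖ ^ 2 := by
  obtain ⟨c, hc⟩ := proj_range m s (by omega) x U hU v
  have h := span_inner m s hm x hsep c (proj U v) v hc
  have e : inner ℂ (proj U v) v = inner ℂ (proj U v) (proj U v) := by
    rw [← proj_symm, proj_idem U hU.1]
  rw [e, inner_self_eq_norm_sq_to_K, norm_pow] at h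
  simp only [RCLike.norm_ofReal, abs_norm] at h
  exact sq_of_quartic h (Finset.sum_nonneg (fun _ _ => sq_nonneg _))

/-- The projection onto the complement of `φ(a)` in the Fourier subspace. -/
def Qop {m s : ℕ} (U : Matrix (Fin m) (Fin s) ℂ) (a : ℝ) :
    EuclideanSpace ℂ (Fin m) →L[ℂ] EuclideanSpace ℂ (Fin m) :=
  proj U - (innerSL ℂ (phiP m 0 a)).smulRight (phiP m 0 a)

lemma Qop_apply {m s : ℕ} (U : Matrix (Fin m) (Fin s) ℂ) (a : ℝ) (v : EuclideanSpace ℂ (Fin m)) :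
    Qop U a v = proj U v - inner ℂ (phiP m 0 a) v • phiP m 0 a := by
  simp [Qop]

lemma inner_phi_self (m : ℕ) (hm : 0 < m) (a : ℝ) : inner ℂ (phiP m 0 a) (phiP m 0 a) = 1 := by
  rw [inner_self_eq_norm_sq_to_K, norm_phi0 m hm]; simp

lemma Qop_orth (m s : ℕ) (hm : 0 < m) (x : Fin s → ℝ)
    (U : Matrix (Fin m) (Fin s) ℂ) (hU : IsONBasisOf U (colSpan (fourierMatrix m x)))
    (j : Fin s) (v : EuclideanSpace ℂ (Fin m)) :
    inner ℂ (phiP m 0 (x j)) (Qop U (x j) v) = 0 := by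
  rw [Qop_apply, inner_sub_right, inner_smul_right, inner_phi_self m hm, ← proj_symm,
    proj_phi m s hm x U hU]
  ring

lemma Qop_inner (m s : ℕ) (hm : 0 < m) (x : Fin s → ℝ)
    (U : Matrix (Fin m) (Fin s) ℂ) (hU : IsONBasisOf U (colSpan (fourierMatrix m x)))
    (j : Fin s) (v w : EuclideanSpace ℂ (Fin m)) :
    inner ℂ (proj U v) w = inner ℂ (Qop U (x j) v) (Qop U (x j) w)
      + (starRingEnd ℂ) (inner ℂ (phiP m 0 (x j)) v) * inner ℂ (phiP m 0 (x j)) w := by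
  have h1 : inner ℂ (proj U v) w = inner ℂ (proj U v) (proj U w) := by
    rw [← proj_symm, proj_idem U hU.1]
  have hv : proj U v = Qop U (x j) v + inner ℂ (phiP m 0 (x j)) v • phiP m 0 (x j) := by
    rw [Qop_apply]; simp
  have hw : proj U w = Qop U (x j) w + inner ℂ (phiP m 0 (x j)) w • phiP m 0 (x j) := by
    rw [Qop_apply]; simp
  have h2 : inner ℂ (Qop U (x j) v) (phiP m 0 (x j)) = 0 := by
    rw [← inner_conj_symm, Qop_orth m s hm x U hU]; simp
  rw [h1, hv, hw]
  simp only [inner_add_left, inner_add_right, inner_smul_left, inner_smul_right, h2,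
    Qop_orth m s hm x U hU, inner_phi_self m hm]
  ring

lemma Qop_bound (m s : ℕ) (hm : 100 ≤ m) (x : Fin s → ℝ)
    (hsep : ∀ j k : Fin s, j ≠ k → ∀ n : ℤ, 8 * π / m ≤ |x j - x k + 2 * π * n|)
    (U : Matrix (Fin m) (Fin s) ℂ) (hU : IsONBasisOf U (colSpan (fourierMatrix m x)))
    (j : Fin s) (v : EuclideanSpace ℂ (Fin m)) (α β ν : ℝ) (hα : 0 ≤ α) (hβ : 0 ≤ β)
    (hv : ‖v‖ ≤ ν)
    (h1 : ∑ k ∈ Finset.univ.erase j, ‖inner ℂ (phiP m 0 (x k)) v‖ ^ 2 ≤ α ^ 2)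
    (h2 : ∑ k ∈ Finset.univ.erase j, ‖inner ℂ (phiP m 0 (x k)) (phiP m 0 (x j))‖ ^ 2 ≤ β ^ 2) :
    0.7 * ‖Qop U (x j) v‖ ^ 2 ≤ (α + ν * β) ^ 2 := by
  classical
  have hm0 : 0 < m := by omega
  have hν : 0 ≤ ν := (norm_nonneg v).trans hv
  set l := inner ℂ (phiP m 0 (x j)) v with hl
  have hlν : ‖l‖ ≤ ν := by
    have := norm_inner_le_norm (𝕜 := ℂ) (phiP m 0 (x j)) v
    rw [norm_phi0 m hm0, one_mul] at this
    exact this.trans hv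
  obtain ⟨c, hc⟩ := proj_range m s hm0 x U hU v
  have hy : Qop U (x j) v = ∑ k, (c k - if k = j then l else 0) • phiP m 0 (x k) := by
    rw [Qop_apply, hc]
    simp only [sub_smul, Finset.sum_sub_distrib, ite_smul, zero_smul, Finset.sum_ite_eq',
      Finset.mem_univ, if_true]
    rfl
  set w := v - l • phiP m 0 (x j) with hw
  have h3 := span_inner m s hm x hsep _ (Qop U (x j) v) w hy
  have e : inner ℂ (Qop U (x j) v) w = inner ℂ (Qop U (x j) v) (Qop U (x j) v) := by
    have ho : inner ℂ (Qop U (x j) v) (phiP m 0 (x j)) = 0 := by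
      rw [← inner_conj_symm, Qop_orth m s hm0 x U hU]; simp
    have hp : proj U (Qop U (x j) v) = Qop U (x j) v := by
      rw [Qop_apply, map_sub, proj_idem U hU.1, map_smul, proj_phi m s hm0 x U hU]
    have : inner ℂ (Qop U (x j) v) v = inner ℂ (Qop U (x j) v) (proj U v) := by
      rw [← proj_symm, hp]
    rw [hw, inner_sub_right, inner_smul_right, ho, this]
    conv_rhs => rw [Qop_apply U (x j) v, inner_sub_right, inner_smul_right, ← Qop_apply, ho]
  rw [e, inner_self_eq_norm_sq_to_K, norm_pow] at h3
  simp only [RCLike.norm_ofReal, abs_norm] at h3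
  have h4 := sq_of_quartic h3 (Finset.sum_nonneg (fun _ _ => sq_nonneg _))
  refine h4.trans ?_
  rw [← Finset.add_sum_erase _ _ (Finset.mem_univ j)]
  have h5 : inner ℂ (phiP m 0 (x j)) w = 0 := by
    rw [hw, inner_sub_right, inner_smul_right, inner_phi_self m hm0, ← hl]; ring
  rw [h5, norm_zero, zero_pow two_ne_zero, zero_add]
  refine le_trans (Finset.sum_le_sum (g := fun k => (‖inner ℂ (phiP m 0 (x k)) v‖
    + ν * ‖inner ℂ (phiP m 0 (x k)) (phiP m 0 (x j))‖) ^ 2) ?_) (sum_sq_add_le _ _ _ _ _ hα (by positivity) h1 ?_)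
  · intro k _
    have : ‖inner ℂ (phiP m 0 (x k)) w‖ ≤ ‖inner ℂ (phiP m 0 (x k)) v‖
        + ν * ‖inner ℂ (phiP m 0 (x k)) (phiP m 0 (x j))‖ := by
      rw [hw, inner_sub_right, inner_smul_right]
      refine (norm_sub_le _ _).trans ?_
      rw [norm_mul]
      gcongr
    gcongr
  · simp only [mul_pow]
    rw [← Finset.mul_sum]
    gcongr

lemma inner_sums (m s : ℕ) (hm : 100 ≤ m) (x : Fin s → ℝ)
    (hsep : ∀ j k : Fin s, j ≠ k → ∀ n : ℤ, 8 * π / m ≤ |x j - x k + 2 * π * n|)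
    (j : Fin s) (t : ℝ) (ht : |m * (t - x j)| ≤ 4.26) :
    ∑ k ∈ Finset.univ.erase j, ‖inner ℂ (phiP m 0 (x k)) (phiP m 0 t)‖ ^ 2 ≤ 0.159 ^ 2 ∧
    ∑ k ∈ Finset.univ.erase j, ‖inner ℂ (phiP m 0 (x k)) (phiP m 1 t)‖ ^ 2 ≤ (0.0799 * m) ^ 2 ∧
    ∑ k ∈ Finset.univ.erase j, ‖inner ℂ (phiP m 0 (x k)) (phiP m 2 t)‖ ^ 2 ≤ (0.0475 * (m : ℝ) ^ 2) ^ 2 := by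
  have hM : (100 : ℝ) ≤ m := by exact_mod_cast hm
  have hm0 : 0 < m := by omega
  have hM0 : (0 : ℝ) < m := by linarith
  have hpi := Real.pi_gt_d4
  simp only [inner_phi0 m hm0, inner_phi1 m hm0, inner_phi2 m hm0, Complex.norm_real, Real.norm_eq_abs,
    sq_abs]
  obtain ⟨c1, c2⟩ := csc_sum m s hm x hsep j t 0.17 (by norm_num) (by
    rw [show (m : ℝ) * (x j - t) = -(m * (t - x j)) by ring, abs_neg]
    linarith)
  set g : ℝ := m * 0.0959 with hgdef
  have hg0 : 0 ≤ g := by positivity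
  have hg : ∀ k, k ≠ j → csc2 (t - x k) - 1 ≤ g ^ 2 := by
    intro k hk
    refine (c1 k hk).2.trans ?_
    have : m / (4 * π * (1 - 0.17)) ≤ g := by
      rw [div_le_iff₀ (by nlinarith), hgdef]
      nlinarith
    have h0 : 0 ≤ m / (4 * π * (1 - 0.17)) := by
      apply div_nonneg hM0.le; nlinarith
    gcongr
  have hS : ∑ k ∈ Finset.univ.erase j, csc2 (t - x k) ≤ (m : ℝ) ^ 2 * 0.025266 := by
    refine c2.trans ?_
    have e : ((1 : ℝ) + 0.17 ^ 2) / (1 - 0.17 ^ 2) ^ 2 ≤ 1.09106 := by norm_num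
    have : (m : ℝ) ^ 2 / 48 * ((1 + 0.17 ^ 2) / (1 - 0.17 ^ 2) ^ 2) ≤ (m : ℝ) ^ 2 / 48 * 1.09106 := by
      gcongr
    nlinarith
  have hK0 : ∑ k ∈ Finset.univ.erase j, K0 m (t - x k) ^ 2 ≤ 0.025266 := by
    have : (m : ℝ) ^ 2 * ∑ k ∈ Finset.univ.erase j, K0 m (t - x k) ^ 2 ≤ (m : ℝ) ^ 2 * 0.025266 := by
      rw [Finset.mul_sum]
      refine le_trans (Finset.sum_le_sum ?_) hS
      intro k hk
      exact K0_sq_le m hm0 _ (c1 k (Finset.ne_of_mem_erase hk)).1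
    exact le_of_mul_le_mul_left this (by positivity)
  have hK1 : ∑ k ∈ Finset.univ.erase j, K1 m (t - x k) ^ 2 ≤ (0.0799 * (m : ℝ)) ^ 2 := by
    have : (4 * (m : ℝ) ^ 2) * ∑ k ∈ Finset.univ.erase j, K1 m (t - x k) ^ 2
        ≤ (4 * (m : ℝ) ^ 2) * (0.0799 * (m : ℝ)) ^ 2 := by
      rw [Finset.mul_sum]
      refine le_trans (Finset.sum_le_sum (g := fun k => csc2 (t - x k) * ((m : ℝ) ^ 2 * 1.0092)) ?_) ?_
      · intro k hk
        have hk' := Finset.ne_of_mem_erase hk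
        have h1 := K1_sq_le m hm0 _ (c1 k hk').1
        refine h1.trans ?_
        have h2 := one_le_csc2 _ (c1 k hk').1
        have h3 := hg k hk'
        have h4 : (m : ℝ) ^ 2 + (csc2 (t - x k) - 1) ≤ (m : ℝ) ^ 2 * 1.0092 := by
          rw [hgdef] at h3
          nlinarith [sq_nonneg (m : ℝ)]
        exact mul_le_mul_of_nonneg_left h4 (by linarith)
      · rw [← Finset.sum_mul]
        refine (mul_le_mul_of_nonneg_right hS (by positivity)).trans ?_
        have : (0 : ℝ) ≤ (m : ℝ) ^ 4 := by positivity
        nlinarith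
    exact le_of_mul_le_mul_left this (by positivity)
  refine ⟨hK0.trans (by norm_num), hK1, ?_⟩
  refine le_trans (Finset.sum_le_sum (g := fun k => ((m : ℝ) ^ 2 / 4 * |K0 m (t - x k)| + g * |K1 m (t - x k)|) ^ 2) ?_) ?_
  · intro k hk
    have hk' := Finset.ne_of_mem_erase hk
    have := K2_abs_le m hm0 (t - x k) g hg0 (c1 k hk').1 (hg k hk')
    rw [← sq_abs]
    gcongr
  · refine (sum_sq_add_le _ _ _ ((m : ℝ) ^ 2 / 4 * 0.159) (g * (0.0799 * m)) (by positivity) (by positivity) ?_ ?_).trans ?_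
    · simp only [mul_pow, sq_abs]
      rw [← Finset.mul_sum]
      gcongr
      exact hK0.trans (by norm_num)
    · simp only [mul_pow, sq_abs]
      rw [← Finset.mul_sum, ← mul_pow]
      gcongr
    · rw [hgdef]
      have : (m : ℝ) ^ 2 / 4 * 0.159 + m * 0.0959 * (0.0799 * m) ≤ 0.0475 * (m : ℝ) ^ 2 := by
        nlinarith [sq_nonneg (m : ℝ)]
      gcongr

lemma Q_bounds (m s : ℕ) (hm : 100 ≤ m) (x : Fin s → ℝ)
    (hsep : ∀ j k : Fin s, j ≠ k → ∀ n : ℤ, 8 * π / m ≤ |x j - x k + 2 * π * n|)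
    (U : Matrix (Fin m) (Fin s) ℂ) (hU : IsONBasisOf U (colSpan (fourierMatrix m x)))
    (j : Fin s) (t : ℝ) (ht : |m * (t - x j)| ≤ 4.26) :
    ‖Qop U (x j) (phiP m 0 t)‖ ≤ 0.3727 ∧ ‖Qop U (x j) (phiP m 1 t)‖ ≤ 0.1483 * m ∧
    ‖Qop U (x j) (phiP m 2 t)‖ ≤ 0.0772 * (m : ℝ) ^ 2 := by
  have hM : (100 : ℝ) ≤ m := by exact_mod_cast hm
  have hm0 : 0 < m := by omega
  have hM0 : (0 : ℝ) < m := by linarith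
  obtain ⟨s0, s1, s2⟩ := inner_sums m s hm x hsep j t ht
  have hβ : ∑ k ∈ Finset.univ.erase j, ‖inner ℂ (phiP m 0 (x k)) (phiP m 0 (x j))‖ ^ 2 ≤ 0.1528 ^ 2 := by
    simp only [inner_phi0 m hm0, Complex.norm_real, Real.norm_eq_abs, sq_abs]
    obtain ⟨c1, c2⟩ := csc_sum m s hm x hsep j (x j) 0 (by norm_num) (by simp)
    have : (m : ℝ) ^ 2 * ∑ k ∈ Finset.univ.erase j, K0 m (x j - x k) ^ 2 ≤ (m : ℝ) ^ 2 * 0.1528 ^ 2 := by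
      rw [Finset.mul_sum]
      refine le_trans (Finset.sum_le_sum ?_) (c2.trans ?_)
      · intro k hk
        exact K0_sq_le m hm0 _ (c1 k (Finset.ne_of_mem_erase hk)).1
      · norm_num; nlinarith
    exact le_of_mul_le_mul_left this (by positivity)
  refine ⟨?_, ?_, ?_⟩
  · have h := Qop_bound m s hm x hsep U hU j (phiP m 0 t) 0.159 0.1528 1 (by norm_num) (by norm_num)
      (norm_phi0 m hm0 t).le s0 hβ
    refine le_of_sq_le_sq' ?_ (by norm_num)
    linarith
  · have h := Qop_bound m s hm x hsep U hU j (phiP m 1 t) (0.0799 * m) 0.1528 (0.28868 * m) (by positivity) (by norm_num)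
      (norm_phi1 m hm t) s1 hβ
    refine le_of_sq_le_sq' ?_ (by positivity)
    nlinarith [sq_nonneg (m : ℝ)]
  · have h := Qop_bound m s hm x hsep U hU j (phiP m 2 t) (0.0475 * (m : ℝ) ^ 2) 0.1528 (0.11181 * (m : ℝ) ^ 2) (by positivity) (by norm_num)
      (norm_phi2 m hm t) s2 hβ
    refine le_of_sq_le_sq' ?_ (by positivity)
    nlinarith [sq_nonneg ((m : ℝ) ^ 2)]

lemma hasDerivAt_clm_phi {m : ℕ} (T : EuclideanSpace ℂ (Fin m) →L[ℂ] EuclideanSpace ℂ (Fin m)) (p : ℕ) (t : ℝ) :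
    HasDerivAt (fun t => T (phiP m p t)) (T (phiP m (p + 1) t)) t :=
  (T.restrictScalars ℝ).hasFDerivAt.comp_hasDerivAt t (hasDerivAt_phiP m p t)

lemma Q_small (m s : ℕ) (hm : 100 ≤ m) (x : Fin s → ℝ)
    (hsep : ∀ j k : Fin s, j ≠ k → ∀ n : ℤ, 8 * π / m ≤ |x j - x k + 2 * π * n|)
    (U : Matrix (Fin m) (Fin s) ℂ) (hU : IsONBasisOf U (colSpan (fourierMatrix m x)))
    (j : Fin s) (t : ℝ) (ht : |m * (t - x j)| ≤ 4.26) :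
    ‖Qop U (x j) (phiP m 0 t)‖ ≤ 0.1483 * |m * (t - x j)| := by
  have hm0 : 0 < m := by omega
  have hM0 : (0 : ℝ) < m := by exact_mod_cast hm0
  have h0 : Qop U (x j) (phiP m 0 (x j)) = 0 := by
    rw [Qop_apply, proj_phi m s hm0 x U hU, inner_phi_self m hm0]; simp
  have h := Convex.norm_image_sub_le_of_norm_hasDerivWithin_le
    (f := fun t => Qop U (x j) (phiP m 0 t)) (f' := fun t => Qop U (x j) (phiP m 1 t))
    (s := Set.uIcc (x j) t) (C := 0.1483 * m) (x := x j) (y := t)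
    (fun y _ => (hasDerivAt_clm_phi (Qop U (x j)) 0 y).hasDerivWithinAt)
    (fun y hy => (Q_bounds m s hm x hsep U hU j y (by
      refine le_trans ?_ ht
      rw [abs_mul, abs_mul]
      gcongr 1
      exact Set.abs_sub_left_of_mem_uIcc hy)).2.1)
    (convex_uIcc _ _) Set.left_mem_uIcc Set.right_mem_uIcc
  simp only [h0, sub_zero] at h
  refine h.trans (le_of_eq ?_)
  rw [abs_mul, abs_of_pos hM0, Real.norm_eq_abs]; ring


/-! ### Derivatives of the landscape function -/

def d1 {m s : ℕ} (W : Matrix (Fin m) (Fin s) ℂ) (t : ℝ) : ℝ :=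
  -(2 * (inner ℂ (proj W (phiP m 0 t)) (phiP m 1 t)).re)

def d2 {m s : ℕ} (W : Matrix (Fin m) (Fin s) ℂ) (t : ℝ) : ℝ :=
  -(2 * ((inner ℂ (proj W (phiP m 0 t)) (phiP m 2 t)).re + (inner ℂ (proj W (phiP m 1 t)) (phiP m 1 t)).re))

lemma hasDerivAt_re_inner {m s : ℕ} (W : Matrix (Fin m) (Fin s) ℂ) (p r : ℕ) (t : ℝ) :
    HasDerivAt (fun t => (inner ℂ (proj W (phiP m p t)) (phiP m r t)).re)
      ((inner ℂ (proj W (phiP m p t)) (phiP m (r + 1) t)).re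
        + (inner ℂ (proj W (phiP m (p + 1) t)) (phiP m r t)).re) t := by
  have h := (hasDerivAt_clm_phi (proj W) p t).inner ℂ (hasDerivAt_phiP m r t)
  have h2 := Complex.reCLM.hasFDerivAt.comp_hasDerivAt t h
  refine h2.congr_deriv ?_
  simp

lemma re_proj_symm {m s : ℕ} (W : Matrix (Fin m) (Fin s) ℂ) (v w : EuclideanSpace ℂ (Fin m)) :
    (inner ℂ (proj W v) w).re = (inner ℂ (proj W w) v).re := by
  rw [proj_symm, ← inner_conj_symm, Complex.conj_re]

lemma hasDerivAt_landscape {m s : ℕ} (W : Matrix (Fin m) (Fin s) ℂ) (t : ℝ) :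
    HasDerivAt (landscape W) (d1 W t) t := by
  have h := (hasDerivAt_re_inner W 0 0 t).const_sub 1
  have e : landscape W = fun t => 1 - (inner ℂ (proj W (phiP m 0 t)) (phiP m 0 t)).re := by
    funext t; exact landscape_eq W t
  rw [e]
  refine h.congr_deriv ?_
  rw [re_proj_symm W (phiP m (0 + 1) t), d1]
  ring

lemma hasDerivAt_d1 {m s : ℕ} (W : Matrix (Fin m) (Fin s) ℂ) (t : ℝ) :
    HasDerivAt (d1 W) (d2 W t) t :=
  ((hasDerivAt_re_inner W 0 1 t).const_mul 2).neg

lemma deriv_landscape {m s : ℕ} (W : Matrix (Fin m) (Fin s) ℂ) : deriv (landscape W) = d1 W := by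
  funext t; exact (hasDerivAt_landscape W t).deriv

lemma deriv2_landscape {m s : ℕ} (W : Matrix (Fin m) (Fin s) ℂ) (t : ℝ) :
    iteratedDeriv 2 (landscape W) t = d2 W t := by
  rw [iteratedDeriv_succ, iteratedDeriv_one, deriv_landscape, (hasDerivAt_d1 W t).deriv]

lemma re_diff {m s : ℕ} (U Ut : Matrix (Fin m) (Fin s) ℂ) (v w : EuclideanSpace ℂ (Fin m)) :
    |(inner ℂ (proj U v) w).re - (inner ℂ (proj Ut v) w).re|
      ≤ specNorm (U * Uᴴ - Ut * Utᴴ) * ‖v‖ * ‖w‖ := by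
  rw [← Complex.sub_re, ← inner_sub_left]
  refine (Complex.abs_re_le_norm _).trans ((norm_inner_le_norm _ _).trans ?_)
  gcongr
  exact proj_diff_norm U Ut v

lemma re_Q (m s : ℕ) (hm : 0 < m) (x : Fin s → ℝ)
    (U : Matrix (Fin m) (Fin s) ℂ) (hU : IsONBasisOf U (colSpan (fourierMatrix m x)))
    (j : Fin s) (v w : EuclideanSpace ℂ (Fin m)) (a b : ℝ)
    (ha : inner ℂ (phiP m 0 (x j)) v = (a : ℂ)) (hb : inner ℂ (phiP m 0 (x j)) w = (b : ℂ)) :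
    |(inner ℂ (proj U v) w).re - a * b| ≤ ‖Qop U (x j) v‖ * ‖Qop U (x j) w‖ := by
  rw [Qop_inner m s hm x U hU j v w, ha, hb, Complex.conj_ofReal, ← Complex.ofReal_mul, Complex.add_re,
    Complex.ofReal_re, add_sub_cancel_right]
  exact (Complex.abs_re_le_norm _).trans (norm_inner_le_norm _ _)

lemma d1_est (m s : ℕ) (hm : 100 ≤ m) (x : Fin s → ℝ)
    (U Ut : Matrix (Fin m) (Fin s) ℂ) (hU : IsONBasisOf U (colSpan (fourierMatrix m x)))
    (j : Fin s) (t : ℝ) :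
    |d1 Ut t + 2 * K0 m (t - x j) * K1 m (t - x j)|
      ≤ 2 * (‖Qop U (x j) (phiP m 0 t)‖ * ‖Qop U (x j) (phiP m 1 t)‖)
        + 0.57736 * specNorm (U * Uᴴ - Ut * Utᴴ) * m := by
  have hm0 : 0 < m := by omega
  have h1 := re_diff U Ut (phiP m 0 t) (phiP m 1 t)
  have h2 := re_Q m s hm0 x U hU j (phiP m 0 t) (phiP m 1 t) _ _ (inner_phi0 m hm0 _ _) (inner_phi1 m hm0 _ _)
  have h3 : specNorm (U * Uᴴ - Ut * Utᴴ) * ‖phiP m 0 t‖ * ‖phiP m 1 t‖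
      ≤ specNorm (U * Uᴴ - Ut * Utᴴ) * (0.28868 * m) := by
    rw [norm_phi0 m hm0, mul_one]
    have : 0 ≤ specNorm (U * Uᴴ - Ut * Utᴴ) := norm_nonneg _
    gcongr
    exact norm_phi1 m hm t
  rw [abs_le] at h1 h2 ⊢
  unfold d1
  constructor <;> linarith

lemma d2_est (m s : ℕ) (hm : 100 ≤ m) (x : Fin s → ℝ)
    (U Ut : Matrix (Fin m) (Fin s) ℂ) (hU : IsONBasisOf U (colSpan (fourierMatrix m x)))
    (j : Fin s) (t : ℝ) :
    |d2 Ut t + 2 * K0 m (t - x j) * K2 m (t - x j) + 2 * K1 m (t - x j) ^ 2|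
      ≤ 2 * (‖Qop U (x j) (phiP m 0 t)‖ * ‖Qop U (x j) (phiP m 2 t)‖)
        + 2 * (‖Qop U (x j) (phiP m 1 t)‖ * ‖Qop U (x j) (phiP m 1 t)‖)
        + 0.3904 * specNorm (U * Uᴴ - Ut * Utᴴ) * (m : ℝ) ^ 2 := by
  have hm0 : 0 < m := by omega
  have hθ : 0 ≤ specNorm (U * Uᴴ - Ut * Utᴴ) := norm_nonneg _
  have h1 := re_diff U Ut (phiP m 0 t) (phiP m 2 t)
  have h2 := re_Q m s hm0 x U hU j (phiP m 0 t) (phiP m 2 t) _ _ (inner_phi0 m hm0 _ _) (inner_phi2 m hm0 _ _)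
  have h1' := re_diff U Ut (phiP m 1 t) (phiP m 1 t)
  have h2' := re_Q m s hm0 x U hU j (phiP m 1 t) (phiP m 1 t) _ _ (inner_phi1 m hm0 _ _) (inner_phi1 m hm0 _ _)
  have h3 : specNorm (U * Uᴴ - Ut * Utᴴ) * ‖phiP m 0 t‖ * ‖phiP m 2 t‖
      ≤ specNorm (U * Uᴴ - Ut * Utᴴ) * (0.11181 * (m : ℝ) ^ 2) := by
    rw [norm_phi0 m hm0, mul_one]
    gcongr
    exact norm_phi2 m hm t
  have h3' : specNorm (U * Uᴴ - Ut * Utᴴ) * ‖phiP m 1 t‖ * ‖phiP m 1 t‖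
      ≤ specNorm (U * Uᴴ - Ut * Utᴴ) * (0.08334 * (m : ℝ) ^ 2) := by
    rw [mul_assoc]
    refine mul_le_mul_of_nonneg_left ?_ hθ
    have a := norm_phi1 m hm t
    have b := norm_nonneg (phiP m 1 t)
    have c := mul_le_mul a a b (b.trans a)
    nlinarith [sq_nonneg (m : ℝ)]
  have h4 : 0 ≤ specNorm (U * Uᴴ - Ut * Utᴴ) * (m : ℝ) ^ 2 := by positivity
  rw [abs_le] at h1 h2 h1' h2' ⊢
  unfold d2
  constructor <;> nlinarith

lemma near_a (m : ℕ) (hm : 100 ≤ m) (t : ℝ) (ht : |m * t| ≤ 0.07) :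
    0.165 * (m : ℝ) ^ 2 ≤ -(2 * K0 m t * K2 m t) - 2 * K1 m t ^ 2 := by
  have hM : (100 : ℝ) ≤ m := by exact_mod_cast hm
  have hu : (m * t) ^ 2 ≤ 0.0049 := by
    rw [← sq_abs]; nlinarith [abs_nonneg (m * t)]
  have h0 := K0_ge m hm t
  have h1 := K1_abs_le m hm t
  have h2 := K2_ge m hm t
  have h1' : K1 m t ^ 2 ≤ (m : ℝ) ^ 2 * 0.00004 := by
    have e : (m : ℝ) ^ 2 * |t| / 12 = m * |m * t| / 12 := by
      rw [abs_mul, abs_of_nonneg (a := (m : ℝ)) (by linarith)]; ring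
    rw [e] at h1
    have : |K1 m t| ≤ m * 0.006 := by nlinarith
    rw [← sq_abs]; nlinarith [abs_nonneg (K1 m t)]
  have h0' : 0.9997 ≤ K0 m t := by nlinarith
  have h2' : (m : ℝ) ^ 2 * 0.08329 ≤ - K2 m t := by
    refine le_trans ?_ h2
    gcongr
    nlinarith
  have : 0.9997 * ((m : ℝ) ^ 2 * 0.08329) ≤ K0 m t * - K2 m t := by gcongr
  nlinarith

lemma min_of_d2 (f f' f'' : ℝ → ℝ) (a b : ℝ) (hf : ∀ t, HasDerivAt f (f' t) t)
    (hf' : ∀ t, HasDerivAt f' (f'' t) t) (ha : f' a = 0)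
    (h2 : ∀ t, |t - a| ≤ |b - a| → 0 ≤ f'' t) : f a ≤ f b := by
  have cf : ∀ S : Set ℝ, ContinuousOn f S := fun S t _ => (hf t).continuousAt.continuousWithinAt
  have cf' : ∀ S : Set ℝ, ContinuousOn f' S := fun S t _ => (hf' t).continuousAt.continuousWithinAt
  rcases lt_trichotomy a b with h | h | h
  · obtain ⟨ξ, hξ, e1⟩ := exists_hasDerivAt_eq_slope f f' h (cf _) (fun t _ => hf t)
    obtain ⟨η, hη, e2⟩ := exists_hasDerivAt_eq_slope f' f'' hξ.1 (cf' _) (fun t _ => hf' t)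
    have p := h2 η (by rw [abs_of_pos (by linarith [hη.1]), abs_of_pos (by linarith)]; linarith [hη.2, hξ.2])
    rw [ha, sub_zero, eq_div_iff (by linarith [hξ.1])] at e2
    rw [eq_div_iff (by linarith)] at e1
    have : 0 ≤ f' ξ := by rw [← e2]; exact mul_nonneg p (by linarith [hξ.1])
    have := mul_nonneg this (show 0 ≤ b - a by linarith)
    linarith
  · rw [h]
  · obtain ⟨ξ, hξ, e1⟩ := exists_hasDerivAt_eq_slope f f' h (cf _) (fun t _ => hf t)
    obtain ⟨η, hη, e2⟩ := exists_hasDerivAt_eq_slope f' f'' hξ.2 (cf' _) (fun t _ => hf' t)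
    have p := h2 η (by rw [abs_of_neg (by linarith [hη.2]), abs_of_neg (by linarith)]; linarith [hη.1, hξ.1])
    rw [ha, zero_sub, eq_div_iff (by linarith [hξ.2])] at e2
    rw [eq_div_iff (by linarith)] at e1
    have : f' ξ ≤ 0 := by
      have := mul_nonneg p (show 0 ≤ a - ξ by linarith [hξ.2])
      linarith
    have := mul_nonneg (neg_nonneg.2 this) (show 0 ≤ a - b by linarith)
    linarith

lemma landscape_at (m s : ℕ) (hm : 0 < m) (x : Fin s → ℝ)
    (U Ut : Matrix (Fin m) (Fin s) ℂ) (hU : IsONBasisOf U (colSpan (fourierMatrix m x)))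
    (hUt : Utᴴ * Ut = 1) (j : Fin s) :
    landscape Ut (x j) ≤ specNorm (U * Uᴴ - Ut * Utᴴ) ^ 2 := by
  have h := proj_diff_norm U Ut (phiP m 0 (x j))
  rw [proj_phi m s hm x U hU, norm_phi0 m hm, mul_one] at h
  have e : landscape Ut (x j) = ‖phiP m 0 (x j) - proj Ut (phiP m 0 (x j))‖ ^ 2 := by
    rw [landscape_eq, ← re_inner_self]
    set v := phiP m 0 (x j) with hv
    have h1 : inner ℂ (proj Ut v) (proj Ut v) = inner ℂ (proj Ut v) v := by
      rw [← proj_symm, proj_idem Ut hUt]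
    rw [inner_sub_left, inner_sub_right, inner_sub_right, h1, proj_symm, inner_phi_self m hm]
    simp
  rw [e]
  gcongr

lemma landscape_far (m s : ℕ) (hm : 100 ≤ m) (x : Fin s → ℝ)
    (hsep : ∀ j k : Fin s, j ≠ k → ∀ n : ℤ, 8 * π / m ≤ |x j - x k + 2 * π * n|)
    (U Ut : Matrix (Fin m) (Fin s) ℂ) (hU : IsONBasisOf U (colSpan (fourierMatrix m x)))
    (hθ : specNorm (U * Uᴴ - Ut * Utᴴ) ≤ 0.01)
    (t : ℝ) (ht : ∀ (j : Fin s) (n : ℤ), 4.118 / m ≤ |x j - t + 2 * π * n|) :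
    0.529 ≤ landscape Ut t := by
  have hm0 : 0 < m := by omega
  have hM0 : (0 : ℝ) < m := by exact_mod_cast hm0
  obtain ⟨c1, c2⟩ := csc_sum_far m s hm x hsep t ht
  have h1 := proj_bound m s hm x hsep U hU (phiP m 0 t)
  simp only [inner_phi0 m hm0, Complex.norm_real, Real.norm_eq_abs, sq_abs] at h1
  have h2 : ∑ k, K0 m (t - x k) ^ 2 ≤ 0.3025 := by
    have : (m : ℝ) ^ 2 * ∑ k, K0 m (t - x k) ^ 2 ≤ (m : ℝ) ^ 2 * 0.3025 := by
      rw [Finset.mul_sum]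
      exact le_trans (Finset.sum_le_sum (fun k _ => K0_sq_le m hm0 _ (c1 k))) c2
    exact le_of_mul_le_mul_left this (by positivity)
  have h3 := (abs_le.1 (re_diff U Ut (phiP m 0 t) (phiP m 0 t))).1
  rw [norm_phi0 m hm0, mul_one, mul_one] at h3
  have h4 : (inner ℂ (proj U (phiP m 0 t)) (phiP m 0 t)).re = ‖proj U (phiP m 0 t)‖ ^ 2 := by
    rw [← re_inner_self, ← proj_symm, proj_idem U hU.1]
  rw [landscape_eq]
  rw [h4] at h3
  linarith


lemma d1_big (m s : ℕ) (hm : 100 ≤ m) (x : Fin s → ℝ)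
    (hsep : ∀ j k : Fin s, j ≠ k → ∀ n : ℤ, 8 * π / m ≤ |x j - x k + 2 * π * n|)
    (U Ut : Matrix (Fin m) (Fin s) ℂ) (hU : IsONBasisOf U (colSpan (fourierMatrix m x)))
    (hθ : specNorm (U * Uᴴ - Ut * Utᴴ) ≤ 0.01)
    (j : Fin s) (t : ℝ) (ht : |m * (t - x j)| ≤ 4.26) :
    |d1 Ut t + 2 * K0 m (t - x j) * K1 m (t - x j)| ≤ 0.1164 * m := by
  have hM : (100 : ℝ) ≤ m := by exact_mod_cast hm
  have h := d1_est m s hm x U Ut hU j t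
  obtain ⟨q0, q1, q2⟩ := Q_bounds m s hm x hsep U hU j t ht
  have h1 := mul_le_mul q0 q1 (norm_nonneg _) (by norm_num)
  have h2 : specNorm (U * Uᴴ - Ut * Utᴴ) * m ≤ 0.01 * m := by gcongr
  refine h.trans ?_
  nlinarith

lemma d1_mid (m s : ℕ) (hm : 100 ≤ m) (x : Fin s → ℝ)
    (hsep : ∀ j k : Fin s, j ≠ k → ∀ n : ℤ, 8 * π / m ≤ |x j - x k + 2 * π * n|)
    (U Ut : Matrix (Fin m) (Fin s) ℂ) (hU : IsONBasisOf U (colSpan (fourierMatrix m x)))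
    (hθ : specNorm (U * Uᴴ - Ut * Utᴴ) ≤ 0.01)
    (j : Fin s) (t : ℝ) (ht : |m * (t - x j)| ≤ 2) :
    |d1 Ut t + 2 * K0 m (t - x j) * K1 m (t - x j)| ≤ 0.0938 * m := by
  have hM : (100 : ℝ) ≤ m := by exact_mod_cast hm
  have h := d1_est m s hm x U Ut hU j t
  have ht' : |m * (t - x j)| ≤ 4.26 := ht.trans (by norm_num)
  obtain ⟨q0, q1, q2⟩ := Q_bounds m s hm x hsep U hU j t ht'
  have q0' : ‖Qop U (x j) (phiP m 0 t)‖ ≤ 0.2966 :=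
    (Q_small m s hm x hsep U hU j t ht').trans (by linarith)
  have h1 := mul_le_mul q0' q1 (norm_nonneg _) (by norm_num)
  have h2 : specNorm (U * Uᴴ - Ut * Utᴴ) * m ≤ 0.01 * m := by gcongr
  refine h.trans ?_
  nlinarith

lemma d1_zero (m s : ℕ) (hm : 100 ≤ m) (x : Fin s → ℝ)
    (hsep : ∀ j k : Fin s, j ≠ k → ∀ n : ℤ, 8 * π / m ≤ |x j - x k + 2 * π * n|)
    (U Ut : Matrix (Fin m) (Fin s) ℂ) (hU : IsONBasisOf U (colSpan (fourierMatrix m x)))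
    (j : Fin s) :
    |d1 Ut (x j)| ≤ 0.57736 * specNorm (U * Uᴴ - Ut * Utᴴ) * m := by
  have h := d1_est m s hm x U Ut hU j (x j)
  have q := Q_small m s hm x hsep U hU j (x j) (by norm_num)
  have f := near_f m hm 0
  simp only [sub_self, mul_zero, abs_zero] at h q f
  have f0 : 2 * K0 m 0 * K1 m 0 = 0 := by
    apply abs_eq_zero.mp
    exact le_antisymm (by simpa using f) (abs_nonneg _)
  have q0 := le_antisymm q (norm_nonneg _)
  rw [f0, q0] at h
  simpa using h

lemma d2_mid (m s : ℕ) (hm : 100 ≤ m) (x : Fin s → ℝ)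
    (hsep : ∀ j k : Fin s, j ≠ k → ∀ n : ℤ, 8 * π / m ≤ |x j - x k + 2 * π * n|)
    (U Ut : Matrix (Fin m) (Fin s) ℂ) (hU : IsONBasisOf U (colSpan (fourierMatrix m x)))
    (hθ : specNorm (U * Uᴴ - Ut * Utᴴ) ≤ 0.01)
    (j : Fin s) (t : ℝ) (ht : |m * (t - x j)| ≤ 1.12) :
    |d2 Ut t + 2 * K0 m (t - x j) * K2 m (t - x j) + 2 * K1 m (t - x j) ^ 2|
      ≤ 0.0736 * (m : ℝ) ^ 2 := by
  have hM : (100 : ℝ) ≤ m := by exact_mod_cast hm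
  have h := d2_est m s hm x U Ut hU j t
  have ht' : |m * (t - x j)| ≤ 4.26 := ht.trans (by norm_num)
  obtain ⟨q0, q1, q2⟩ := Q_bounds m s hm x hsep U hU j t ht'
  have q0' : ‖Qop U (x j) (phiP m 0 t)‖ ≤ 0.1661 :=
    (Q_small m s hm x hsep U hU j t ht').trans (by linarith)
  have h1 := mul_le_mul q0' q2 (norm_nonneg _) (by norm_num)
  have h3 := mul_le_mul q1 q1 (norm_nonneg _) (by positivity)
  have h2 : specNorm (U * Uᴴ - Ut * Utᴴ) * (m : ℝ) ^ 2 ≤ 0.01 * (m : ℝ) ^ 2 := by gcongr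
  refine h.trans ?_
  nlinarith [sq_nonneg (m : ℝ)]

lemma exists_crit (m s : ℕ) (hm : 100 ≤ m) (x : Fin s → ℝ)
    (hsep : ∀ j k : Fin s, j ≠ k → ∀ n : ℤ, 8 * π / m ≤ |x j - x k + 2 * π * n|)
    (U Ut : Matrix (Fin m) (Fin s) ℂ) (hU : IsONBasisOf U (colSpan (fourierMatrix m x)))
    (hθ : specNorm (U * Uᴴ - Ut * Utᴴ) ≤ 0.01) (j : Fin s) :
    ∃ y, |m * (y - x j)| ≤ 7 * specNorm (U * Uᴴ - Ut * Utᴴ) ∧ d1 Ut y = 0 := by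
  have hM : (100 : ℝ) ≤ m := by exact_mod_cast hm
  have hM0 : (0 : ℝ) < m := by linarith
  have h0 : 0 ≤ specNorm (U * Uᴴ - Ut * Utᴴ) := norm_nonneg _
  have hz := d1_zero m s hm x hsep U Ut hU j
  set θ := specNorm (U * Uᴴ - Ut * Utᴴ) with hθd
  set r := 7 * θ / m with hr
  have hr0 : 0 ≤ r := by positivity
  have hmr : m * r = 7 * θ := by rw [hr]; field_simp
  have hd2 : ∀ t, |t - x j| ≤ r → 0.0914 * (m : ℝ) ^ 2 ≤ d2 Ut t := by
    intro t ht
    have hu : |m * (t - x j)| ≤ 0.07 := by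
      rw [abs_mul, abs_of_pos hM0]
      nlinarith
    have a := near_a m hm (t - x j) hu
    have b := d2_mid m s hm x hsep U Ut hU hθ j t (hu.trans (by norm_num))
    rw [abs_le] at b
    linarith [b.1]
  have mono : ∀ a b, a ≤ b → |a - x j| ≤ r → |b - x j| ≤ r →
      0.0914 * (m : ℝ) ^ 2 * (b - a) ≤ d1 Ut b - d1 Ut a := by
    intro a b hab ha hb
    rw [abs_le] at ha hb
    refine Convex.mul_sub_le_image_sub_of_le_deriv (D := Set.Icc a b) (convex_Icc a b)
      (fun t _ => (hasDerivAt_d1 Ut t).continuousAt.continuousWithinAt)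
      (fun t _ => (hasDerivAt_d1 Ut t).differentiableAt.differentiableWithinAt) ?_ a
      (Set.left_mem_Icc.2 hab) b (Set.right_mem_Icc.2 hab) hab
    intro t ht
    rw [interior_Icc] at ht
    rw [(hasDerivAt_d1 Ut t).deriv]
    refine hd2 t ?_
    rw [abs_le]
    constructor <;> linarith [ht.1, ht.2, ha.1, ha.2, hb.1, hb.2]
  have e1 : |x j - r - x j| ≤ r := by rw [abs_le]; constructor <;> linarith
  have e2 : |x j + r - x j| ≤ r := by rw [abs_le]; constructor <;> linarith
  have e3 : |x j - x j| ≤ r := by simpa using hr0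
  have m1 := mono _ _ (by linarith) e1 e3
  have m2 := mono _ _ (by linarith) e3 e2
  have k : 0.0914 * (m : ℝ) ^ 2 * r = 0.6398 * θ * m := by
    rw [hr]; field_simp; ring
  have k2 : 0 ≤ θ * m := by positivity
  rw [abs_le] at hz
  have c1 : d1 Ut (x j - r) ≤ 0 := by nlinarith [hz.2]
  have c2 : 0 ≤ d1 Ut (x j + r) := by nlinarith [hz.1]
  obtain ⟨y, hy, hy0⟩ := intermediate_value_Icc (a := x j - r) (b := x j + r) (by linarith)
    (f := d1 Ut) (fun t _ => (hasDerivAt_d1 Ut t).continuousAt.continuousWithinAt)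
    (show (0 : ℝ) ∈ Set.Icc _ _ from ⟨c1, c2⟩)
  refine ⟨y, ?_, hy0⟩
  rw [abs_mul, abs_of_pos hM0, ← hmr]
  gcongr
  rw [abs_le]
  constructor <;> linarith [hy.1, hy.2]

lemma torusDist_le (u v : ℝ) (n : ℤ) : torusDist u v ≤ |u - v + 2 * π * n| :=
  ciInf_le ⟨0, by rintro _ ⟨n, rfl⟩; exact abs_nonneg _⟩ n

lemma d1_pos_side (m s : ℕ) (hm : 100 ≤ m) (x : Fin s → ℝ)
    (hsep : ∀ j k : Fin s, j ≠ k → ∀ n : ℤ, 8 * π / m ≤ |x j - x k + 2 * π * n|)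
    (U Ut : Matrix (Fin m) (Fin s) ℂ) (hU : IsONBasisOf U (colSpan (fourierMatrix m x)))
    (hθ : specNorm (U * Uᴴ - Ut * Utᴴ) ≤ 0.01) (j : Fin s) (t : ℝ)
    (h1 : 0.977 ≤ m * (t - x j)) (h2 : m * (t - x j) ≤ 4.26) : 0.0306 * (m : ℝ) ≤ d1 Ut t := by
  have hM : (100 : ℝ) ≤ m := by exact_mod_cast hm
  rcases le_total (m * (t - x j)) 2 with h | h
  · have a := near_d1 m hm _ h1 h
    have b := d1_mid m s hm x hsep U Ut hU hθ j t (by rw [abs_of_nonneg (by linarith)]; exact h)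
    rw [abs_le] at b
    linarith [b.1]
  · have a := near_d2 m hm _ h h2
    have b := d1_big m s hm x hsep U Ut hU hθ j t (by rw [abs_of_nonneg (by linarith)]; exact h2)
    rw [abs_le] at b
    linarith [b.1]

lemma d1_neg_side (m s : ℕ) (hm : 100 ≤ m) (x : Fin s → ℝ)
    (hsep : ∀ j k : Fin s, j ≠ k → ∀ n : ℤ, 8 * π / m ≤ |x j - x k + 2 * π * n|)
    (U Ut : Matrix (Fin m) (Fin s) ℂ) (hU : IsONBasisOf U (colSpan (fourierMatrix m x)))
    (hθ : specNorm (U * Uᴴ - Ut * Utᴴ) ≤ 0.01) (j : Fin s) (t : ℝ)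
    (h1 : 0.977 ≤ m * (x j - t)) (h2 : m * (x j - t) ≤ 4.26) : d1 Ut t ≤ -(0.0306 * (m : ℝ)) := by
  have hM : (100 : ℝ) ≤ m := by exact_mod_cast hm
  have e : |m * (t - x j)| = m * (x j - t) := by
    rw [abs_of_nonpos (by nlinarith)]; ring
  have k0 : K0 m (x j - t) = K0 m (t - x j) := by rw [← K0_neg]; congr 1; ring
  have k1 : K1 m (x j - t) = - K1 m (t - x j) := by rw [← K1_neg]; congr 1; ring
  rcases le_total (m * (x j - t)) 2 with h | h
  · have a := near_d1 m hm _ h1 h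
    have b := d1_mid m s hm x hsep U Ut hU hθ j t (by rw [e]; exact h)
    rw [k0, k1] at a
    rw [abs_le] at b
    linarith [b.2]
  · have a := near_d2 m hm _ h h2
    have b := d1_big m s hm x hsep U Ut hU hθ j t (by rw [e]; exact h2)
    rw [k0, k1] at a
    rw [abs_le] at b
    linarith [b.2]

lemma d1_abs (m s : ℕ) (hm : 100 ≤ m) (x : Fin s → ℝ)
    (hsep : ∀ j k : Fin s, j ≠ k → ∀ n : ℤ, 8 * π / m ≤ |x j - x k + 2 * π * n|)
    (U Ut : Matrix (Fin m) (Fin s) ℂ) (hU : IsONBasisOf U (colSpan (fourierMatrix m x)))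
    (hθ : specNorm (U * Uᴴ - Ut * Utᴴ) ≤ 0.01) (j : Fin s) (t y : ℝ)
    (hy : |m * (y - x j)| ≤ 0.07) (h1 : 1.047 ≤ m * |t - y|) (h2 : |m * (t - x j)| ≤ 4.26) :
    |d1 Ut t| ≤ 0.292 * (m : ℝ) ^ 2 * |t - y| := by
  have hM : (100 : ℝ) ≤ m := by exact_mod_cast hm
  have hM0 : (0 : ℝ) < m := by linarith
  have a := near_f m hm (t - x j)
  have b := d1_big m s hm x hsep U Ut hU hθ j t h2
  have c : |d1 Ut t| ≤ |d1 Ut t + 2 * K0 m (t - x j) * K1 m (t - x j)|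
      + |2 * K0 m (t - x j) * K1 m (t - x j)| := by
    have := abs_sub (d1 Ut t + 2 * K0 m (t - x j) * K1 m (t - x j)) (2 * K0 m (t - x j) * K1 m (t - x j))
    simpa using this
  have d : |t - x j| ≤ |t - y| + |y - x j| := abs_sub_le _ _ _
  rw [abs_mul, abs_of_pos hM0] at hy
  have e : (m : ℝ) ^ 2 * |t - x j| ≤ m * (m * |t - y| + 0.07) := by
    have : (m : ℝ) * |t - x j| ≤ m * |t - y| + 0.07 := by nlinarith
    nlinarith
  have f : m * 1.047 ≤ m * (m * |t - y|) := by gcongr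
  nlinarith


/-- **Landscape analysis** (Theorem `thm:landscape`). Let `m ≥ 100`, let `x ⊂ 𝕋` with
`Δ(x) ≥ 8π/m`, let `U` be an orthonormal basis of the Fourier subspace `range Φ(m,x)`,
and let `Ũ` have orthonormal columns with `ϑ := ‖UU^* − ŨŨ^*‖₂ ≤ 0.01`. Then the landscape
function `q̃ := q_Ũ` has at least `s` critical points `x̃_1,…,x̃_s` satisfying (a)–(f). -/
theorem landscape_analysis
    (m s : ℕ) (hm : 100 ≤ m)
    (x : Fin s → ℝ)
    (hsep : ∀ j k : Fin s, j ≠ k → 8 * Real.pi / m ≤ torusDist (x j) (x k))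
    (U Ut : Matrix (Fin m) (Fin s) ℂ)
    (hU : IsONBasisOf U (colSpan (fourierMatrix m x)))
    (hUt : Utᴴ * Ut = 1)
    (θ : ℝ) (hθdef : θ = specNorm (U * Uᴴ - Ut * Utᴴ)) (hθ : θ ≤ 0.01) :
    ∃ xt : Fin s → ℝ,
      -- the `x̃_j` are `s` (pairwise distinct) critical points of `q̃`
      (∀ j k : Fin s, j ≠ k → 0 < torusDist (xt j) (xt k)) ∧
      (∀ j, deriv (landscape Ut) (xt j) = 0) ∧
      (∀ j : Fin s,
        -- (a)
        torusDist (xt j) (x j) ≤ 7 * θ / m ∧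
        -- (b)
        (∀ t : ℝ, |t - xt j| ≤ Real.pi / (3 * m) →
          0.0271 * (m : ℝ) ^ 2 ≤ iteratedDeriv 2 (landscape Ut) t ∧
            iteratedDeriv 2 (landscape Ut) t ≤ 0.269 * (m : ℝ) ^ 2) ∧
        -- (c)
        IsLocalMin (landscape Ut) (xt j) ∧
        landscape Ut (xt j) ≤ landscape Ut (x j) ∧
        landscape Ut (x j) ≤ θ ^ 2 ∧ θ ^ 2 ≤ 1 / 10000 ∧
        -- (d)
        (∀ t ∈ Set.Icc (xt j + Real.pi / (3 * m)) (xt j + 4 * Real.pi / (3 * m)),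
          0.0306 * (m : ℝ) ≤ deriv (landscape Ut) t) ∧
        (∀ t ∈ Set.Icc (xt j - 4 * Real.pi / (3 * m)) (xt j - Real.pi / (3 * m)),
          deriv (landscape Ut) t ≤ -(0.0306 * (m : ℝ))) ∧
        -- (f)
        (∀ t ∈ Set.Icc (xt j + Real.pi / (3 * m)) (xt j + 4 * Real.pi / (3 * m)),
          deriv (landscape Ut) t ≤ 0.292 * (m : ℝ) ^ 2 * |t - xt j|) ∧
        (∀ t ∈ Set.Icc (xt j - 4 * Real.pi / (3 * m)) (xt j - Real.pi / (3 * m)),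
          -(0.292 * (m : ℝ) ^ 2 * |t - xt j|) ≤ deriv (landscape Ut) t)) ∧
      -- (e)
      (∀ t : ℝ, (∀ j, 4 * Real.pi / (3 * m) < torusDist t (xt j)) →
        0.529 ≤ landscape Ut t) := by
  have hM : (100 : ℝ) ≤ m := by exact_mod_cast hm
  have hM0 : (0 : ℝ) < m := by linarith
  have hm0 : 0 < m := by omega
  subst hθdef
  have h0 : 0 ≤ specNorm (U * Uᴴ - Ut * Utᴴ) := norm_nonneg _
  have p1 := Real.pi_gt_d4
  have p2 := Real.pi_lt_d4
  have hs : ∀ j k : Fin s, j ≠ k → ∀ n : ℤ, 8 * π / m ≤ |x j - x k + 2 * π * n| :=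
    fun j k hjk n => (hsep j k hjk).trans (torusDist_le _ _ n)
  choose y hy1 hy2 using exists_crit m s hm x hs U Ut hU hθ
  have hy3 : ∀ j, |m * (y j - x j)| ≤ 0.07 := fun j => (hy1 j).trans (by linarith)
  have hy4 : ∀ j, |y j - x j| ≤ 0.07 / m := by
    intro j
    have := hy3 j
    rw [abs_mul, abs_of_pos hM0] at this
    rw [le_div_iff₀ hM0]; linarith
  have q1 : m * (π / (3 * m)) = π / 3 := by field_simp
  have q4 : m * (4 * π / (3 * m)) = 4 * π / 3 := by field_simp
  have split : ∀ j t, (m : ℝ) * (t - x j) = m * (t - y j) + m * (y j - x j) := by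
    intro j t; ring
  have hb : ∀ j t, |t - y j| ≤ π / (3 * m) →
      0.0271 * (m : ℝ) ^ 2 ≤ d2 Ut t ∧ d2 Ut t ≤ 0.269 * (m : ℝ) ^ 2 := by
    intro j t ht
    have hu : |m * (t - x j)| ≤ 1.12 := by
      rw [split]
      refine (abs_add_le _ _).trans ?_
      have : |m * (t - y j)| ≤ π / 3 := by
        rw [abs_mul, abs_of_pos hM0, ← q1]; gcongr
      linarith [hy3 j]
    have a := near_b m hm _ hu
    have b := near_up m hm (t - x j)
    have c := d2_mid m s hm x hs U Ut hU hθ j t hu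
    rw [abs_le] at c
    have := sq_nonneg (m : ℝ)
    constructor <;> linarith [c.1, c.2]
  have hmin : ∀ j t, |t - y j| ≤ π / (3 * m) → landscape Ut (y j) ≤ landscape Ut t := by
    intro j t ht
    refine min_of_d2 _ _ _ _ _ (hasDerivAt_landscape Ut) (hasDerivAt_d1 Ut) (hy2 j) ?_
    intro τ hτ
    have := (hb j τ (hτ.trans ht)).1
    have := sq_nonneg (m : ℝ)
    linarith
  have r1 : 0.07 / (m : ℝ) ≤ π / (3 * m) := by
    rw [div_le_div_iff₀ hM0 (by positivity)]; nlinarith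
  have hpos : ∀ j, ∀ t ∈ Set.Icc (y j + π / (3 * m)) (y j + 4 * π / (3 * m)),
      1.047 ≤ m * (t - y j) ∧ m * (t - y j) ≤ 4 * π / 3 ∧
      0.977 ≤ m * (t - x j) ∧ m * (t - x j) ≤ 4.26 := by
    intro j t ht
    have h3 := hy3 j
    rw [abs_le] at h3
    have a1 : π / 3 ≤ m * (t - y j) := by rw [← q1]; gcongr; linarith [ht.1]
    have a2 : m * (t - y j) ≤ 4 * π / 3 := by rw [← q4]; gcongr; linarith [ht.2]
    rw [split]
    refine ⟨by linarith, a2, by linarith, by linarith⟩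
  have hneg : ∀ j, ∀ t ∈ Set.Icc (y j - 4 * π / (3 * m)) (y j - π / (3 * m)),
      1.047 ≤ m * (y j - t) ∧ m * (y j - t) ≤ 4 * π / 3 ∧
      0.977 ≤ m * (x j - t) ∧ m * (x j - t) ≤ 4.26 := by
    intro j t ht
    have h3 := hy3 j
    rw [abs_le] at h3
    have a1 : π / 3 ≤ m * (y j - t) := by rw [← q1]; gcongr; linarith [ht.2]
    have a2 : m * (y j - t) ≤ 4 * π / 3 := by rw [← q4]; gcongr; linarith [ht.1]
    have e : (m : ℝ) * (x j - t) = m * (y j - t) - m * (y j - x j) := by ring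
    rw [e]
    refine ⟨by linarith, a2, by linarith, by linarith⟩
  have hfp : ∀ j, ∀ t ∈ Set.Icc (y j + π / (3 * m)) (y j + 4 * π / (3 * m)),
      |d1 Ut t| ≤ 0.292 * (m : ℝ) ^ 2 * |t - y j| := by
    intro j t ht
    obtain ⟨a, b, c, d⟩ := hpos j t ht
    refine d1_abs m s hm x hs U Ut hU hθ j t (y j) (hy3 j) ?_ ?_
    · exact a.trans (by gcongr; exact le_abs_self _)
    · rw [abs_of_nonneg (by linarith)]; exact d
  have hfn : ∀ j, ∀ t ∈ Set.Icc (y j - 4 * π / (3 * m)) (y j - π / (3 * m)),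
      |d1 Ut t| ≤ 0.292 * (m : ℝ) ^ 2 * |t - y j| := by
    intro j t ht
    obtain ⟨a, b, c, d⟩ := hneg j t ht
    refine d1_abs m s hm x hs U Ut hU hθ j t (y j) (hy3 j) ?_ ?_
    · rw [abs_sub_comm]; exact a.trans (by gcongr; exact le_abs_self _)
    · have e : |m * (t - x j)| = |m * (x j - t)| := by
        rw [abs_mul, abs_mul, abs_sub_comm]
      rw [e, abs_of_nonneg (by linarith)]; exact d
  refine ⟨y, ?_, ?_, ?_, ?_⟩
  · intro j k hjk
    refine lt_of_lt_of_le (show 0 < (8 * π - 0.14) / m from div_pos (by linarith) hM0) ?_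
    refine le_ciInf fun n => ?_
    have a := hs j k hjk n
    have b : |x j - x k + 2 * π * n| ≤ |y j - y k + 2 * π * n| + |y j - x j| + |y k - x k| := by
      have e : x j - x k + 2 * π * n = (y j - y k + 2 * π * n) - (y j - x j) + (y k - x k) := by ring
      rw [e]
      refine (abs_add_le _ _).trans ?_
      gcongr
      exact abs_sub _ _
    have e : (8 * π - 0.14) / (m : ℝ) = 8 * π / m - 0.07 / m - 0.07 / m := by ring
    rw [e]
    linarith [hy4 j, hy4 k]
  · intro j; rw [deriv_landscape]; exact hy2 j
  · intro j
    refine ⟨?_, ?_, ?_, ?_, ?_, ?_, ?_, ?_, ?_, ?_⟩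
    · have a := torusDist_le (y j) (x j) 0
      have b := hy1 j
      rw [abs_mul, abs_of_pos hM0] at b
      rw [Int.cast_zero, mul_zero, add_zero] at a
      refine a.trans ?_
      rw [le_div_iff₀ hM0]; linarith
    · intro t ht
      rw [deriv2_landscape]; exact hb j t ht
    · have hr : 0 < π / (3 * (m : ℝ)) := by positivity
      filter_upwards [Metric.closedBall_mem_nhds (y j) hr] with t ht
      exact hmin j t (by simpa [Real.dist_eq] using ht)
    · refine hmin j (x j) ?_
      rw [abs_sub_comm]; exact (hy4 j).trans r1
    · exact landscape_at m s hm0 x U Ut hU hUt j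
    · nlinarith
    · intro t ht
      obtain ⟨a, b, c, d⟩ := hpos j t ht
      rw [deriv_landscape]
      exact d1_pos_side m s hm x hs U Ut hU hθ j t c d
    · intro t ht
      obtain ⟨a, b, c, d⟩ := hneg j t ht
      rw [deriv_landscape]
      exact d1_neg_side m s hm x hs U Ut hU hθ j t c d
    · intro t ht
      rw [deriv_landscape]
      exact (abs_le.1 (hfp j t ht)).2
    · intro t ht
      rw [deriv_landscape]
      exact (abs_le.1 (hfn j t ht)).1
  · intro t ht
    refine landscape_far m s hm x hs U Ut hU hθ t ?_
    intro j n
    have a := (ht j).le.trans (torusDist_le t (y j) (-n))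
    have b : |t - y j + 2 * π * ((-n : ℤ) : ℝ)| ≤ |x j - t + 2 * π * n| + |y j - x j| := by
      have e : t - y j + 2 * π * ((-n : ℤ) : ℝ) = -((x j - t + 2 * π * n) + (y j - x j)) := by
        push_cast; ring
      rw [e, abs_neg]
      exact abs_add_le _ _
    have e : 4.118 / (m : ℝ) ≤ 4 * π / (3 * m) - 0.07 / m := by
      have e' : 4 * π / (3 * (m : ℝ)) - 0.07 / m = (4 * π / 3 - 0.07) / m := by field_simp
      rw [e']
      gcongr
      linarith
    linarith [hy4 j]

end
end

section
/- Properties of the Toeplitz subspace error. Let m > s ≥ 1, let (x,a) with x = {x_1,…,x_s} ⊂ 𝕋 and a ∈ (ℂ∖{0})^s, let y be the clean samples, let η ∈ ℂ^{2m−1}, set T := T(y) and T̃ := T(y+η), and define ρ := 2‖T(η)‖_2/σ_s(T). If ρ ≤ 1 − 1/√2, then σ_s(T̃) > σ_{s+1}(T̃), so T̃ has a unique leading s-dimensional left singular subspace; and for any orthonormal basis Ũ of this subspace and any orthonormal basis U of range Φ(m,x), one has ‖UU^* − ŨŨ^*‖_2 ≤ ρ. -/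
open scoped Real BigOperators Matrix
open Matrix

noncomputable section

/-- The Toeplitz matrix `T(y)` of `y ∈ ℂ^{2m-1}`. -/
def toeplitz (m : ℕ) (y : Fin (2 * m - 1) → ℂ) : Matrix (Fin m) (Fin m) ℂ :=
  fun j k => y ⟨(j : ℕ) + (m - 1) - (k : ℕ), by
    have hj := j.isLt; have hk := k.isLt; omega⟩

/-- Clean samples `y_k = Σ_j a_j e^{i k x_j}` for `k ∈ {-(m-1),…,m-1}`. -/
def cleanSamples (m : ℕ) {s : ℕ} (x : Fin s → ℝ) (a : Fin s → ℂ) :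
    Fin (2 * m - 1) → ℂ :=
  fun k => ∑ j, a j *
    Complex.exp (Complex.I * (((((k : ℕ) : ℝ) - ((m : ℝ) - 1)) * x j : ℝ) : ℂ))

/-- The `k`-th largest singular value (1-indexed) of a square complex matrix. -/
def singVal {d : ℕ} (M : Matrix (Fin d) (Fin d) ℂ) (k : ℕ) : ℝ :=
  if h : 1 ≤ k ∧ k ≤ d then
    Real.sqrt (((Matrix.isHermitian_mul_conjTranspose_self M).eigenvalues ∘
      Tuple.sort ((Matrix.isHermitian_mul_conjTranspose_self M).eigenvalues))
      ⟨d - k, by omega⟩)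
  else 0

/-- The leading `s`-dimensional left singular subspace of a square matrix `M`: the span
of the eigenvectors of `M Mᴴ` whose eigenvalues exceed `σ_{s+1}(M)²` (this is the unique
leading subspace whenever `σ_s(M) > σ_{s+1}(M)`). -/
def leadingLeftSingularSpace {d : ℕ} (M : Matrix (Fin d) (Fin d) ℂ) (s : ℕ) :
    Submodule ℂ (EuclideanSpace ℂ (Fin d)) :=
  Submodule.span ℂ {v | ∃ i : Fin d,
    (singVal M (s + 1)) ^ 2 <
      (Matrix.isHermitian_mul_conjTranspose_self M).eigenvalues i ∧
    v = (Matrix.isHermitian_mul_conjTranspose_self M).eigenvectorBasis i}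

/-! ### Helper lemmas -/

/-- eigenvalues of `M Mᴴ` -/
def ev {d : ℕ} (M : Matrix (Fin d) (Fin d) ℂ) : Fin d → ℝ :=
  (Matrix.isHermitian_mul_conjTranspose_self M).eigenvalues

/-- eigenbasis of `M Mᴴ` -/
def eb {d : ℕ} (M : Matrix (Fin d) (Fin d) ℂ) :
    OrthonormalBasis (Fin d) ℂ (EuclideanSpace ℂ (Fin d)) :=
  (Matrix.isHermitian_mul_conjTranspose_self M).eigenvectorBasis

/-- span of part of the eigenbasis -/
def spanA {d : ℕ} (M : Matrix (Fin d) (Fin d) ℂ) (A : Finset (Fin d)) :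
    Submodule ℂ (EuclideanSpace ℂ (Fin d)) :=
  Submodule.span ℂ {v | ∃ i, i ∈ A ∧ v = eb M i}

lemma inner_conjT {d e : ℕ} (M : Matrix (Fin d) (Fin e) ℂ) (v : EuclideanSpace ℂ (Fin d))
    (w : EuclideanSpace ℂ (Fin e)) :
    inner ℂ (Matrix.toEuclideanLin Mᴴ v) w = inner ℂ v (Matrix.toEuclideanLin M w) := by
  rw [Matrix.toEuclideanLin_conjTranspose_eq_adjoint, LinearMap.adjoint_inner_left]

lemma toE_mul {d e f : ℕ} (M : Matrix (Fin d) (Fin e) ℂ) (N : Matrix (Fin e) (Fin f) ℂ)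
    (v : EuclideanSpace ℂ (Fin f)) :
    Matrix.toEuclideanLin (M * N) v = Matrix.toEuclideanLin M (Matrix.toEuclideanLin N v) := by
  simp [Matrix.toEuclideanLin_apply, Matrix.mulVec_mulVec]

lemma eb_apply {d : ℕ} (M : Matrix (Fin d) (Fin d) ℂ) (i : Fin d) :
    Matrix.toEuclideanLin (M * Mᴴ) (eb M i) = (ev M i : ℂ) • eb M i := by
  have h := (Matrix.isHermitian_mul_conjTranspose_self M).mulVec_eigenvectorBasis i
  rw [Matrix.toEuclideanLin_apply]
  unfold eb ev
  rw [h]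
  ext j
  simp

lemma quad {d : ℕ} (M : Matrix (Fin d) (Fin d) ℂ) (v : EuclideanSpace ℂ (Fin d)) :
    ‖Matrix.toEuclideanLin Mᴴ v‖ ^ 2 = ∑ i, ev M i * ‖inner ℂ (eb M i) v‖ ^ 2 := by
  have h1 : inner ℂ (Matrix.toEuclideanLin Mᴴ v) (Matrix.toEuclideanLin Mᴴ v)
      = ∑ i, (ev M i : ℂ) * (‖inner ℂ (eb M i) v‖ : ℂ) ^ 2 := by
    rw [inner_conjT, ← toE_mul, ← OrthonormalBasis.sum_inner_mul_inner (eb M)]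
    refine Finset.sum_congr rfl fun i _ => ?_
    have h2 : inner ℂ (eb M i) (Matrix.toEuclideanLin (M * Mᴴ) v)
        = (ev M i : ℂ) * inner ℂ (eb M i) v := by
      rw [← inner_conjT]
      have : (M * Mᴴ)ᴴ = M * Mᴴ := Matrix.isHermitian_mul_conjTranspose_self M
      rw [this, eb_apply, inner_smul_left]
      simp
    have h3 : (starRingEnd ℂ) (inner ℂ (eb M i) v) * inner ℂ (eb M i) v
        = (‖inner ℂ (eb M i) v‖ : ℂ) ^ 2 := RCLike.conj_mul _
    rw [h2, ← inner_conj_symm v, ← h3]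
    ring
  rw [inner_self_eq_norm_sq_to_K] at h1
  have h4 : ((‖Matrix.toEuclideanLin Mᴴ v‖ ^ 2 : ℝ) : ℂ)
      = ((∑ i, ev M i * ‖inner ℂ (eb M i) v‖ ^ 2 : ℝ) : ℂ) := by
    push_cast
    exact h1
  exact Complex.ofReal_injective h4

open scoped ComplexOrder in
lemma ev_nonneg {d : ℕ} (M : Matrix (Fin d) (Fin d) ℂ) (i : Fin d) : 0 ≤ ev M i :=
  (Matrix.posSemidef_self_mul_conjTranspose M).eigenvalues_nonneg i

lemma lower {d : ℕ} (M : Matrix (Fin d) (Fin d) ℂ) (v : EuclideanSpace ℂ (Fin d)) (c : ℝ)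
    (h : ∀ i, inner ℂ (eb M i) v = 0 ∨ c ^ 2 ≤ ev M i) :
    c * ‖v‖ ≤ ‖Matrix.toEuclideanLin Mᴴ v‖ := by
  apply le_of_sq_le_sq _ (norm_nonneg _)
  rw [quad, mul_pow, ← (eb M).sum_sq_norm_inner_right v, Finset.mul_sum]
  refine Finset.sum_le_sum fun i _ => ?_
  rcases h i with h | h
  · simp [h]
  · gcongr

lemma upper {d : ℕ} (M : Matrix (Fin d) (Fin d) ℂ) (v : EuclideanSpace ℂ (Fin d)) (c : ℝ)
    (hc : 0 ≤ c) (h : ∀ i, inner ℂ (eb M i) v = 0 ∨ ev M i ≤ c ^ 2) :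
    ‖Matrix.toEuclideanLin Mᴴ v‖ ≤ c * ‖v‖ := by
  apply le_of_sq_le_sq _ (by positivity)
  rw [quad, mul_pow, ← (eb M).sum_sq_norm_inner_right v, Finset.mul_sum]
  refine Finset.sum_le_sum fun i _ => ?_
  rcases h i with h | h
  · simp [h]
  · gcongr

lemma inner_of_mem {d : ℕ} {M : Matrix (Fin d) (Fin d) ℂ} {A : Finset (Fin d)}
    {v : EuclideanSpace ℂ (Fin d)} (hv : v ∈ spanA M A) {i : Fin d} (hi : i ∉ A) :
    inner ℂ (eb M i) v = 0 := by
  unfold spanA at hv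
  induction hv using Submodule.span_induction with
  | mem x hx =>
    obtain ⟨j, hj, rfl⟩ := hx
    exact (eb M).orthonormal.2 (fun h => hi (h ▸ hj))
  | zero => simp
  | add x y _ _ hx hy => rw [inner_add_right, hx, hy, add_zero]
  | smul a x _ hx => rw [inner_smul_right, hx, mul_zero]

lemma eb_mem {d : ℕ} {M : Matrix (Fin d) (Fin d) ℂ} {A : Finset (Fin d)} {i : Fin d}
    (hi : i ∈ A) : eb M i ∈ spanA M A := Submodule.subset_span ⟨i, hi, rfl⟩

lemma finrank_spanA {d : ℕ} (M : Matrix (Fin d) (Fin d) ℂ) (A : Finset (Fin d)) :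
    Module.finrank ℂ (spanA M A) = A.card := by
  have h : spanA M A = Submodule.span ℂ (Set.range fun i : A => eb M i) := by
    unfold spanA
    congr 1
    ext v
    simp only [Set.mem_setOf_eq, Set.mem_range, Subtype.exists]
    constructor
    · rintro ⟨i, hi, rfl⟩; exact ⟨i, hi, rfl⟩
    · rintro ⟨i, hi, rfl⟩; exact ⟨i, hi, rfl⟩
  rw [h, finrank_span_eq_card]
  · simp
  · exact (eb M).orthonormal.linearIndependent.comp _ Subtype.val_injective

/-- indices of the `k` largest eigenvalues -/
def topI {d : ℕ} (M : Matrix (Fin d) (Fin d) ℂ) (k : ℕ) : Finset (Fin d) :=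
  Finset.univ.filter fun i => d - k ≤ ((Tuple.sort (ev M)).symm i : ℕ)

/-- indices of the `d-k+1` smallest eigenvalues -/
def botI {d : ℕ} (M : Matrix (Fin d) (Fin d) ℂ) (k : ℕ) : Finset (Fin d) :=
  Finset.univ.filter fun i => ((Tuple.sort (ev M)).symm i : ℕ) ≤ d - k

lemma card_perm_filter {d : ℕ} (p : Equiv.Perm (Fin d)) (P : ℕ → Prop) [DecidablePred P] :
    (Finset.univ.filter fun i => P (p.symm i : ℕ)).card = ((Finset.range d).filter P).card := by
  refine Finset.card_bij (fun i _ => (p.symm i : ℕ)) ?_ ?_ ?_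
  · intro i hi; simpa using hi
  · intro i _ j _ h; exact p.symm.injective (Fin.ext h)
  · intro n hn
    simp only [Finset.mem_filter, Finset.mem_range] at hn
    exact ⟨p ⟨n, hn.1⟩, by simpa using hn.2, by simp⟩

lemma card_topI {d : ℕ} (M : Matrix (Fin d) (Fin d) ℂ) {k : ℕ} (h : k ≤ d) :
    (topI M k).card = k := by
  unfold topI
  rw [card_perm_filter _ (fun n => d - k ≤ n)]
  have : (Finset.range d).filter (fun n => d - k ≤ n) = Finset.Ico (d - k) d := by
    ext n; simp; omega
  rw [this]; simp; omega

lemma card_botI {d : ℕ} (M : Matrix (Fin d) (Fin d) ℂ) {k : ℕ} (h1 : 1 ≤ k) (h : k ≤ d) :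
    (botI M k).card = d - k + 1 := by
  unfold botI
  rw [card_perm_filter _ (fun n => n ≤ d - k)]
  have : (Finset.range d).filter (fun n => n ≤ d - k) = Finset.range (d - k + 1) := by
    ext n; simp; omega
  rw [this]; simp

lemma singVal_nonneg {d : ℕ} (M : Matrix (Fin d) (Fin d) ℂ) (k : ℕ) : 0 ≤ singVal M k := by
  unfold singVal; split_ifs
  · exact Real.sqrt_nonneg _
  · exact le_rfl

lemma singVal_sq {d : ℕ} (M : Matrix (Fin d) (Fin d) ℂ) {k : ℕ} (h1 : 1 ≤ k) (h : k ≤ d) :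
    singVal M k ^ 2 = ev M (Tuple.sort (ev M) ⟨d - k, by omega⟩) := by
  unfold singVal
  rw [dif_pos ⟨h1, h⟩, Real.sq_sqrt]
  · rfl
  · exact ev_nonneg M _

lemma topI_le {d : ℕ} (M : Matrix (Fin d) (Fin d) ℂ) {k : ℕ} (h1 : 1 ≤ k) (h : k ≤ d)
    {i : Fin d} (hi : i ∈ topI M k) : singVal M k ^ 2 ≤ ev M i := by
  rw [singVal_sq M h1 h]
  have := Tuple.monotone_sort (ev M) (a := ⟨d - k, by omega⟩) (b := (Tuple.sort (ev M)).symm i)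
    ((Finset.mem_filter.1 hi).2)
  simpa using this

lemma botI_le {d : ℕ} (M : Matrix (Fin d) (Fin d) ℂ) {k : ℕ} (h1 : 1 ≤ k) (h : k ≤ d)
    {i : Fin d} (hi : i ∈ botI M k) : ev M i ≤ singVal M k ^ 2 := by
  rw [singVal_sq M h1 h]
  have := Tuple.monotone_sort (ev M) (b := ⟨d - k, by omega⟩) (a := (Tuple.sort (ev M)).symm i)
    ((Finset.mem_filter.1 hi).2)
  simpa using this

lemma not_topI {d : ℕ} (M : Matrix (Fin d) (Fin d) ℂ) {k : ℕ} (h : k + 1 ≤ d)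
    {i : Fin d} (hi : i ∉ topI M k) : i ∈ botI M (k + 1) := by
  simp only [topI, botI, Finset.mem_filter, Finset.mem_univ, true_and] at *
  omega

lemma exists_inter {d : ℕ} (W S : Submodule ℂ (EuclideanSpace ℂ (Fin d)))
    (h : d < Module.finrank ℂ W + Module.finrank ℂ S) : ∃ v ∈ W, v ∈ S ∧ v ≠ 0 := by
  by_contra hc
  push Not at hc
  have h0 : W ⊓ S = ⊥ := by
    rw [Submodule.eq_bot_iff]
    intro v hv
    exact hc v hv.1 hv.2
  have h1 := Submodule.finrank_sup_add_finrank_inf_eq W S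
  have h2 := Submodule.finrank_le (W ⊔ S)
  rw [h0] at h1
  simp at h1 h2
  omega

lemma cf_lower {d : ℕ} (M : Matrix (Fin d) (Fin d) ℂ) {k : ℕ} (h1 : 1 ≤ k) (h : k ≤ d)
    (W : Submodule ℂ (EuclideanSpace ℂ (Fin d))) (hW : Module.finrank ℂ W = k) (c : ℝ)
    (hc : ∀ v ∈ W, c * ‖v‖ ≤ ‖Matrix.toEuclideanLin Mᴴ v‖) : c ≤ singVal M k := by
  obtain ⟨v, hv, hv2, hv0⟩ := exists_inter W (spanA M (botI M k)) (by
    rw [hW, finrank_spanA, card_botI M h1 h]; omega)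
  have h3 := upper M v (singVal M k) (singVal_nonneg _ _) (fun i => by
    by_cases hi : i ∈ botI M k
    · exact Or.inr (botI_le M h1 h hi)
    · exact Or.inl (inner_of_mem hv2 hi))
  exact le_of_mul_le_mul_right ((hc v hv).trans h3) (norm_pos_iff.2 hv0)

lemma cf_upper {d : ℕ} (M : Matrix (Fin d) (Fin d) ℂ) {k : ℕ} (h1 : 1 ≤ k) (h : k ≤ d)
    (W : Submodule ℂ (EuclideanSpace ℂ (Fin d))) (hW : Module.finrank ℂ W = d - k + 1) (c : ℝ)
    (hc : ∀ v ∈ W, ‖Matrix.toEuclideanLin Mᴴ v‖ ≤ c * ‖v‖) : singVal M k ≤ c := by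
  obtain ⟨v, hv, hv2, hv0⟩ := exists_inter W (spanA M (topI M k)) (by
    rw [hW, finrank_spanA, card_topI M h]; omega)
  have h3 := lower M v (singVal M k) (fun i => by
    by_cases hi : i ∈ topI M k
    · exact Or.inr (topI_le M h1 h hi)
    · exact Or.inl (inner_of_mem hv2 hi))
  exact le_of_mul_le_mul_right (h3.trans (hc v hv)) (norm_pos_iff.2 hv0)

lemma leading_eq {d : ℕ} (M : Matrix (Fin d) (Fin d) ℂ) {k : ℕ} (h1 : 1 ≤ k) (h : k + 1 ≤ d)
    (hgap : singVal M (k + 1) < singVal M k) :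
    leadingLeftSingularSpace M k = spanA M (topI M k) := by
  unfold leadingLeftSingularSpace spanA
  congr 1
  ext v
  simp only [Set.mem_setOf_eq]
  refine exists_congr fun i => and_congr ?_ Iff.rfl
  constructor
  · intro hi
    by_contra hn
    exact absurd (botI_le M (by omega) h (not_topI M h hn)) (not_le.2 hi)
  · intro hi
    refine lt_of_lt_of_le ?_ (topI_le M h1 (by omega) hi)
    exact pow_lt_pow_left₀ hgap (singVal_nonneg _ _) (by norm_num)

lemma specNorm_conjT {d : ℕ} (E : Matrix (Fin d) (Fin d) ℂ) (v : EuclideanSpace ℂ (Fin d)) :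
    ‖Matrix.toEuclideanLin Eᴴ v‖ ≤ specNorm E * ‖v‖ := by
  set w := Matrix.toEuclideanLin Eᴴ v with hw
  have h1 : ‖w‖ ^ 2 ≤ ‖v‖ * (specNorm E * ‖w‖) := by
    have h2 : inner ℂ w w = inner ℂ v (Matrix.toEuclideanLin E w) := by
      conv_lhs => rw [hw]
      rw [inner_conjT]
    have h3 : ‖(inner ℂ w w : ℂ)‖ = ‖w‖ ^ 2 := by
      rw [inner_self_eq_norm_sq_to_K]; simp
    rw [← h3, h2]
    refine (norm_inner_le_norm _ _).trans ?_
    gcongr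
    exact (LinearMap.toContinuousLinearMap (Matrix.toEuclideanLin E)).le_opNorm w
  by_cases h0 : ‖w‖ = 0
  · rw [h0]; exact mul_nonneg (norm_nonneg _) (norm_nonneg _)
  · have : 0 < ‖w‖ := lt_of_le_of_ne (norm_nonneg _) (Ne.symm h0)
    nlinarith

lemma proj_bound_s9 {d : ℕ} (K L : Submodule ℂ (EuclideanSpace ℂ (Fin d))) (ρ : ℝ) (hρ : 0 ≤ ρ)
    (h1 : ∀ z ∈ Lᗮ, ‖K.starProjection z‖ ≤ ρ * ‖z‖)
    (h2 : ∀ z ∈ Kᗮ, ‖L.starProjection z‖ ≤ ρ * ‖z‖) (z : EuclideanSpace ℂ (Fin d)) :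
    ‖K.starProjection z - L.starProjection z‖ ≤ ρ * ‖z‖ := by
  set p := L.starProjection z with hp
  have hpL : p ∈ L := Submodule.starProjection_apply_mem _ _
  have hr : z - p ∈ Lᗮ := Submodule.sub_starProjection_mem_orthogonal _
  set q := p - K.starProjection p with hq
  have hqK : q ∈ Kᗮ := Submodule.sub_starProjection_mem_orthogonal _
  have hq1 : ‖q‖ ≤ ρ * ‖p‖ := by
    have e1 : inner ℂ q q = (inner ℂ (L.starProjection q) p : ℂ) := by
      have e2 : inner ℂ q (K.starProjection p) = (0 : ℂ) :=
        Submodule.inner_left_of_mem_orthogonal (Submodule.starProjection_apply_mem _ _) hqK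
      have e3 : inner ℂ (q - L.starProjection q) p = (0 : ℂ) :=
        Submodule.inner_left_of_mem_orthogonal hpL
          (Submodule.sub_starProjection_mem_orthogonal _)
      rw [inner_sub_left, sub_eq_zero] at e3
      rw [← e3]
      conv_lhs => rw [hq, inner_sub_right, ← hq, e2, sub_zero]
    have h3 : ‖(inner ℂ q q : ℂ)‖ = ‖q‖ ^ 2 := by
      rw [inner_self_eq_norm_sq_to_K]; simp
    have h4 : ‖q‖ ^ 2 ≤ ρ * ‖q‖ * ‖p‖ := by
      rw [← h3, e1]
      refine (norm_inner_le_norm _ _).trans ?_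
      gcongr
      exact h2 q hqK
    by_cases h0 : ‖q‖ = 0
    · rw [h0]; positivity
    · have : 0 < ‖q‖ := lt_of_le_of_ne (norm_nonneg _) (Ne.symm h0)
      nlinarith
  have hk := h1 _ hr
  have hdec : K.starProjection z - p = K.starProjection (z - p) + (-q) := by
    rw [hq, map_sub]; abel
  apply le_of_sq_le_sq _ (by positivity)
  have o1 : ‖K.starProjection z - p‖ ^ 2 = ‖K.starProjection (z - p)‖ ^ 2 + ‖q‖ ^ 2 := by
    rw [hdec, sq, sq, sq, norm_add_sq_eq_norm_sq_add_norm_sq_of_inner_eq_zero (𝕜 := ℂ), norm_neg]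
    rw [inner_neg_right, neg_eq_zero]
    exact Submodule.inner_right_of_mem_orthogonal (Submodule.starProjection_apply_mem _ _) hqK
  have o2 : ‖z‖ ^ 2 = ‖p‖ ^ 2 + ‖z - p‖ ^ 2 := by
    conv_lhs => rw [show z = p + (z - p) by abel]
    rw [sq, sq, sq, norm_add_sq_eq_norm_sq_add_norm_sq_of_inner_eq_zero (𝕜 := ℂ)]
    exact Submodule.inner_right_of_mem_orthogonal hpL hr
  rw [o1, mul_pow, o2]
  have a1 := pow_le_pow_left₀ (norm_nonneg _) hk 2
  have a2 := pow_le_pow_left₀ (norm_nonneg _) hq1 2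
  rw [mul_pow] at a1 a2
  linarith

lemma onb_proj {d e : ℕ} {U : Matrix (Fin d) (Fin e) ℂ}
    {V : Submodule ℂ (EuclideanSpace ℂ (Fin d))} (h : IsONBasisOf U V)
    (z : EuclideanSpace ℂ (Fin d)) :
    Matrix.toEuclideanLin (U * Uᴴ) z = V.starProjection z := by
  obtain ⟨h1, rfl⟩ := h
  refine (Submodule.eq_starProjection_of_mem_of_inner_eq_zero (K := colSpan U) ?_ ?_).symm
  · rw [toE_mul]; exact ⟨_, rfl⟩
  · rintro _ ⟨w, rfl⟩
    rw [← inner_conjT, map_sub, ← toE_mul, ← Matrix.mul_assoc, h1, Matrix.one_mul, sub_self,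
      inner_zero_left]

lemma core {m s : ℕ} (hs : 1 ≤ s) (hm : s < m) (T E : Matrix (Fin m) (Fin m) ℂ)
    (K : Submodule ℂ (EuclideanSpace ℂ (Fin m))) (hK : Module.finrank ℂ K = s)
    (hran : ∀ w, Matrix.toEuclideanLin T w ∈ K)
    (hinj : ∀ v ∈ K, Matrix.toEuclideanLin Tᴴ v = 0 → v = 0)
    (ρ : ℝ) (hρdef : ρ = 2 * specNorm E / singVal T s) (hρ : ρ ≤ 1 - 1 / Real.sqrt 2) :
    singVal (T + E) (s + 1) < singVal (T + E) s ∧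
    Module.finrank ℂ (leadingLeftSingularSpace (T + E) s) = s ∧
    ∀ U Ut : Matrix (Fin m) (Fin s) ℂ,
      IsONBasisOf U K → IsONBasisOf Ut (leadingLeftSingularSpace (T + E) s) →
      specNorm (U * Uᴴ - Ut * Utᴴ) ≤ ρ := by
  set ε := specNorm E with hε
  have hε0 : 0 ≤ ε := norm_nonneg _
  have hE := specNorm_conjT E
  rw [← hε] at hE
  have hadd : ∀ v, Matrix.toEuclideanLin (T + E)ᴴ v
      = Matrix.toEuclideanLin Tᴴ v + Matrix.toEuclideanLin Eᴴ v := by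
    intro v; rw [Matrix.conjTranspose_add, map_add]; rfl
  have hker : ∀ z ∈ Kᗮ, Matrix.toEuclideanLin Tᴴ z = 0 := by
    intro z hz
    apply ext_inner_right ℂ
    intro w
    rw [inner_conjT, inner_zero_left]
    exact Submodule.inner_left_of_mem_orthogonal (hran w) hz
  -- positivity of `σ_s`
  have hσ : 0 < singVal T s := by
    rcases (singVal_nonneg T s).lt_or_eq with h | h
    · exact h
    exfalso
    obtain ⟨v, hv, hv2, hv0⟩ := exists_inter K (spanA T (botI T s)) (by
      rw [hK, finrank_spanA, card_botI T hs hm.le]; omega)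
    have h3 := upper T v (singVal T s) (singVal_nonneg _ _) (fun i => by
      by_cases hi : i ∈ botI T s
      · exact Or.inr (botI_le T hs hm.le hi)
      · exact Or.inl (inner_of_mem hv2 hi))
    rw [← h, zero_mul] at h3
    exact hv0 (hinj v hv (norm_le_zero_iff.1 h3))
  set σ := singVal T s with hσdef
  -- `K` is the leading subspace of `T`
  have hKeq : spanA T (topI T s) = K := by
    apply Submodule.eq_of_le_of_finrank_eq
    · refine Submodule.span_le.2 ?_
      rintro _ ⟨i, hi, rfl⟩
      have hev : 0 < ev T i := lt_of_lt_of_le (by positivity) (topI_le T hs hm.le hi)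
      have h2 : eb T i = ((ev T i : ℂ)⁻¹) •
          Matrix.toEuclideanLin T (Matrix.toEuclideanLin Tᴴ (eb T i)) := by
        rw [← toE_mul, eb_apply, smul_smul, inv_mul_cancel₀, one_smul]
        exact_mod_cast hev.ne'
      rw [h2]
      exact K.smul_mem _ (hran _)
    · rw [finrank_spanA, card_topI T hm.le, hK]
  have hTlow : ∀ v ∈ K, σ * ‖v‖ ≤ ‖Matrix.toEuclideanLin Tᴴ v‖ := by
    intro v hv
    rw [← hKeq] at hv
    exact lower T v σ (fun i => by
      by_cases hi : i ∈ topI T s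
      · exact Or.inr (topI_le T hs hm.le hi)
      · exact Or.inl (inner_of_mem hv hi))
  -- Weyl
  have hW1 : σ - ε ≤ singVal (T + E) s := by
    refine cf_lower (T + E) hs hm.le K hK _ fun v hv => ?_
    have h1 := hTlow v hv
    have h2 := hE v
    have h3 : ‖Matrix.toEuclideanLin Tᴴ v‖ ≤
        ‖Matrix.toEuclideanLin (T + E)ᴴ v‖ + ‖Matrix.toEuclideanLin Eᴴ v‖ := by
      rw [hadd]
      have := norm_sub_le (Matrix.toEuclideanLin Tᴴ v + Matrix.toEuclideanLin Eᴴ v)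
        (Matrix.toEuclideanLin Eᴴ v)
      rwa [add_sub_cancel_right] at this
    linarith [sub_mul σ ε ‖v‖]
  have hW2 : singVal (T + E) (s + 1) ≤ ε := by
    refine cf_upper (T + E) (by omega) hm Kᗮ ?_ _ fun v hv => ?_
    · have := K.finrank_add_finrank_orthogonal
      rw [hK, finrank_euclideanSpace_fin] at this
      omega
    · rw [hadd, hker v hv, zero_add]; exact hE v
  have hρσ : ρ * σ = 2 * ε := by rw [hρdef]; field_simp
  have hρ0 : 0 ≤ ρ := by rw [hρdef]; positivity
  have hρ1 : ρ < 1 := by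
    have : 0 < 1 / Real.sqrt 2 := by positivity
    linarith
  have hεσ : 2 * ε < σ := by nlinarith
  have hgap : singVal (T + E) (s + 1) < singVal (T + E) s := by linarith
  have hlead := leading_eq (T + E) hs hm hgap
  refine ⟨hgap, by rw [hlead, finrank_spanA, card_topI _ hm.le], ?_⟩
  intro U Ut hU hUt
  refine ContinuousLinearMap.opNorm_le_bound _ hρ0 fun z => ?_
  change ‖Matrix.toEuclideanLin (U * Uᴴ - Ut * Utᴴ) z‖ ≤ _
  rw [map_sub, LinearMap.sub_apply, onb_proj hU, onb_proj hUt]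
  refine proj_bound_s9 _ _ ρ hρ0 ?_ ?_ z
  · intro z hz
    rw [hlead] at hz
    have h1 := upper (T + E) z (singVal (T + E) (s + 1)) (singVal_nonneg _ _) (fun i => by
      by_cases hi : i ∈ topI (T + E) s
      · exact Or.inl (Submodule.inner_right_of_mem_orthogonal (eb_mem hi) hz)
      · exact Or.inr (botI_le _ (by omega) hm (not_topI _ hm hi)))
    have h2 := hE z
    have h3 : ‖Matrix.toEuclideanLin Tᴴ z‖ ≤
        ‖Matrix.toEuclideanLin (T + E)ᴴ z‖ + ‖Matrix.toEuclideanLin Eᴴ z‖ := by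
      rw [hadd]
      have := norm_sub_le (Matrix.toEuclideanLin Tᴴ z + Matrix.toEuclideanLin Eᴴ z)
        (Matrix.toEuclideanLin Eᴴ z)
      rwa [add_sub_cancel_right] at this
    have h4 : Matrix.toEuclideanLin Tᴴ z = Matrix.toEuclideanLin Tᴴ (K.starProjection z) := by
      have := hker _ (K.sub_starProjection_mem_orthogonal z)
      rwa [map_sub, sub_eq_zero] at this
    have h5 := hTlow _ (K.starProjection_apply_mem z)
    rw [← h4] at h5
    have h6 : singVal (T + E) (s + 1) * ‖z‖ ≤ ε * ‖z‖ := by gcongr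
    have h7 : σ * ‖K.starProjection z‖ ≤ σ * (ρ * ‖z‖) := by
      calc _ ≤ 2 * ε * ‖z‖ := by linarith
        _ = _ := by rw [← hρσ]; ring
    exact le_of_mul_le_mul_left h7 hσ
  · intro z hz
    rw [hlead]
    set p := (spanA (T + E) (topI (T + E) s)).starProjection z with hp
    have hpm : p ∈ spanA (T + E) (topI (T + E) s) := Submodule.starProjection_apply_mem _ _
    have hzp : z - p ∈ (spanA (T + E) (topI (T + E) s))ᗮ :=
      Submodule.sub_starProjection_mem_orthogonal _
    have h1 : singVal (T + E) s * ‖p‖ ≤ ‖Matrix.toEuclideanLin (T + E)ᴴ p‖ :=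
      lower (T + E) p _ (fun i => by
        by_cases hi : i ∈ topI (T + E) s
        · exact Or.inr (topI_le _ hs hm.le hi)
        · exact Or.inl (inner_of_mem hpm hi))
    have h2 : ‖Matrix.toEuclideanLin (T + E)ᴴ p‖ ≤ ‖Matrix.toEuclideanLin (T + E)ᴴ z‖ := by
      apply le_of_sq_le_sq _ (norm_nonneg _)
      rw [quad, quad]
      refine Finset.sum_le_sum fun i _ => ?_
      refine mul_le_mul_of_nonneg_left ?_ (ev_nonneg _ _)
      by_cases hi : i ∈ topI (T + E) s
      · have := Submodule.inner_right_of_mem_orthogonal (eb_mem hi) hzp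
        rw [inner_sub_right, sub_eq_zero] at this
        rw [this]
      · rw [inner_of_mem hpm hi]; simp
    have h3 : ‖Matrix.toEuclideanLin (T + E)ᴴ z‖ ≤ ε * ‖z‖ := by
      rw [hadd, hker z hz, zero_add]; exact hE z
    have h4 : σ / 2 * ‖p‖ ≤ singVal (T + E) s * ‖p‖ := by
      gcongr; linarith
    have h7 : σ / 2 * ‖p‖ ≤ σ / 2 * (ρ * ‖z‖) := by
      calc _ ≤ ε * ‖z‖ := by linarith
        _ = _ := by rw [show ε = ρ * σ / 2 by linarith]; ring
    exact le_of_mul_le_mul_left h7 (by positivity)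

lemma exp_inj {u v : ℝ} (h : 0 < torusDist u v) :
    Complex.exp (Complex.I * (u : ℂ)) ≠ Complex.exp (Complex.I * (v : ℂ)) := by
  intro he
  rw [Complex.exp_eq_exp_iff_exists_int] at he
  obtain ⟨n, hn⟩ := he
  have h1 : (u : ℂ) = v + n * (2 * Real.pi) := by
    apply mul_left_cancel₀ Complex.I_ne_zero
    rw [hn]; ring
  have h2 : u = v + n * (2 * Real.pi) := by exact_mod_cast h1
  have h3 : torusDist u v ≤ |u - v + 2 * Real.pi * ((-n : ℤ) : ℝ)| :=
    ciInf_le ⟨0, by rintro _ ⟨k, rfl⟩; positivity⟩ (-n)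
  rw [h2] at h3
  have h4 : v + n * (2 * Real.pi) - v + 2 * Real.pi * ((-n : ℤ) : ℝ) = 0 := by
    push_cast; ring
  rw [h4, abs_zero, ← h2] at h3
  linarith

lemma fourier_inj {m s : ℕ} (hm : s < m) (x : Fin s → ℝ)
    (hx : ∀ j k : Fin s, j ≠ k → 0 < torusDist (x j) (x k))
    (w : EuclideanSpace ℂ (Fin s))
    (hw : Matrix.toEuclideanLin (fourierMatrix m x) w = 0) : w = 0 := by
  let c : Fin s → ℂ := fun j => Complex.exp (Complex.I * ((-(((m : ℝ) - 1) / 2) * x j : ℝ) : ℂ))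
  have hent : ∀ k j, fourierMatrix m x k j
      = c j * Complex.exp (Complex.I * (x j : ℂ)) ^ (k : ℕ) := by
    intro k j
    simp only [c, fourierMatrix]
    rw [← Complex.exp_nat_mul, ← Complex.exp_add]
    congr 1
    push_cast; ring
  have hz : (fun j => w j * c j) = 0 := by
    apply Matrix.eq_zero_of_forall_pow_sum_mul_pow_eq_zero
      (f := fun j => Complex.exp (Complex.I * (x j : ℂ)))
    · intro j k hjk
      by_contra hne
      exact exp_inj (hx j k hne) hjk
    · intro i
      have h1 := congrArg (fun v : EuclideanSpace ℂ (Fin m) => v ⟨i, by omega⟩) hw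
      simp only [Matrix.toEuclideanLin_apply, Matrix.mulVec, dotProduct, hent] at h1
      have h2 : (0 : EuclideanSpace ℂ (Fin m)) ⟨i, by omega⟩ = 0 := rfl
      refine Eq.trans ?_ (h1.trans h2)
      refine Finset.sum_congr rfl fun j _ => ?_
      simp only; ring
  ext j
  have := congrFun hz j
  simp only [Pi.zero_apply, mul_eq_zero] at this
  rcases this with h | h
  · simpa using h
  · exact absurd h (Complex.exp_ne_zero _)

lemma toeplitz_factor (m : ℕ) {s : ℕ} (x : Fin s → ℝ) (a : Fin s → ℂ) :
    toeplitz m (cleanSamples m x a)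
      = fourierMatrix m x * (Matrix.diagonal a * (fourierMatrix m x)ᴴ) := by
  ext j k
  rw [Matrix.mul_apply]
  simp only [toeplitz, cleanSamples, Matrix.diagonal_mul, Matrix.conjTranspose_apply,
    fourierMatrix]
  refine Finset.sum_congr rfl fun i _ => ?_
  rw [Complex.star_def, ← Complex.exp_conj, mul_left_comm, ← Complex.exp_add]
  congr 2
  have hk := k.isLt
  rw [Nat.cast_sub (by omega), Nat.cast_add, Nat.cast_sub (by omega)]
  simp only [map_mul, Complex.conj_I, Complex.conj_ofReal]
  push_cast; ring

/-- **Properties of the Toeplitz subspace error** (Lemma `lem:rho`).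
If `ρ := 2‖T(η)‖₂/σ_s(T(y)) ≤ 1 − 1/√2`, then `σ_s(T̃) > σ_{s+1}(T̃)`, so `T̃` has a unique
leading `s`-dimensional left singular subspace; and for any orthonormal basis `Ũ` of this
subspace and any orthonormal basis `U` of `range Φ(m,x)`, `‖UU^* − ŨŨ^*‖₂ ≤ ρ`. -/
theorem toeplitz_estimator_error (m s : ℕ) (hs : 1 ≤ s) (hm : s < m)
    (x : Fin s → ℝ)
    (hx : ∀ j k : Fin s, j ≠ k → 0 < torusDist (x j) (x k))
    (a : Fin s → ℂ) (ha : ∀ j, a j ≠ 0)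
    (η : Fin (2 * m - 1) → ℂ)
    (Tt : Matrix (Fin m) (Fin m) ℂ)
    (hTt : Tt = toeplitz m (cleanSamples m x a + η))
    (ρ : ℝ)
    (hρdef : ρ = 2 * specNorm (toeplitz m η) / singVal (toeplitz m (cleanSamples m x a)) s)
    (hρ : ρ ≤ 1 - 1 / Real.sqrt 2) :
    singVal Tt (s + 1) < singVal Tt s ∧
    Module.finrank ℂ (leadingLeftSingularSpace Tt s) = s ∧
    ∀ U Ut : Matrix (Fin m) (Fin s) ℂ,
      IsONBasisOf U (colSpan (fourierMatrix m x)) →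
      IsONBasisOf Ut (leadingLeftSingularSpace Tt s) →
      specNorm (U * Uᴴ - Ut * Utᴴ) ≤ ρ := by
  have hadd : Tt = toeplitz m (cleanSamples m x a) + toeplitz m η := by
    rw [hTt]; rfl
  rw [hadd]
  have hinjΦ := fourier_inj hm x hx
  have hfac := toeplitz_factor m x a
  refine core hs hm _ _ (colSpan (fourierMatrix m x)) ?_ ?_ ?_ ρ hρdef hρ
  · unfold colSpan
    rw [LinearMap.finrank_range_of_inj, finrank_euclideanSpace_fin]
    rw [← LinearMap.ker_eq_bot, LinearMap.ker_eq_bot']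
    exact hinjΦ
  · intro w
    rw [hfac, toE_mul]
    exact ⟨_, rfl⟩
  · rintro _ ⟨w, rfl⟩ h0
    rw [hfac, Matrix.conjTranspose_mul, Matrix.conjTranspose_mul, Matrix.conjTranspose_conjTranspose,
      Matrix.diagonal_conjTranspose, Matrix.mul_assoc, toE_mul] at h0
    have h1 := hinjΦ _ h0
    rw [toE_mul] at h1
    set u := Matrix.toEuclideanLin (fourierMatrix m x)ᴴ
      (Matrix.toEuclideanLin (fourierMatrix m x) w) with hu
    have hu0 : u = 0 := by
      ext j
      have h2 := congrArg (fun v : EuclideanSpace ℂ (Fin s) => v j) h1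
      simp only [Matrix.toEuclideanLin_apply, Matrix.mulVec_diagonal] at h2
      have h3 : star (a j) ≠ 0 := star_ne_zero.2 (ha j)
      have h4 : star (a j) * u j = 0 := by simpa using h2
      rcases mul_eq_zero.1 h4 with h | h
      · exact absurd h h3
      · simpa using h
    have h5 := inner_conjT (fourierMatrix m x) (Matrix.toEuclideanLin (fourierMatrix m x) w) w
    rw [← hu, hu0, inner_zero_left] at h5
    exact inner_self_eq_zero.1 h5.symm

end
end
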